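/- arXiv:2206.14959 — 5 statements merged into one kernel-verified Lean document; each statement's English description precedes it below -/
import Mathlib

section
/- Let G be a closed subgroup of GL₂(ℤ_ℓ) for a prime ℓ ≥ 5 such that det(G) = ℤ_ℓ^× and the reduction of G modulo ℓ equals GL₂(ℤ/ℓℤ). Then G = GL₂(ℤ_ℓ). -/
open Matrix

theorem aux_binom {R : Type*} [Ring R] (p : ℕ) (hp : p.Prime) (A : R) :
    ∃ q : R, (1 + A) ^ p = 1 + (p : R) * A + (p : R) * (A ^ 2 * q) + A ^ p := by
  obtain ⟨m, rfl⟩ : ∃ m, p = m + 2 := ⟨p - 2, by have := hp.two_le; omega⟩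
  have h1 : (1 + A) ^ (m + 2) = ∑ i ∈ Finset.range (m + 2 + 1), A ^ i * ((m + 2).choose i : R) := by
    rw [add_comm 1 A, (Commute.one_right A).add_pow]
    simp
  refine ⟨∑ i ∈ Finset.range m, A ^ i * (((m + 2).choose (i + 2) / (m + 2) : ℕ) : R), ?_⟩
  rw [h1, Finset.sum_range_succ, Finset.sum_range_succ', Finset.sum_range_succ']
  have h2 : ∀ i ∈ Finset.range m, A ^ (i + 1 + 1) * ((m + 2).choose (i + 1 + 1) : R)
      = ((m + 2 : ℕ) : R) * (A ^ 2 * (A ^ i * (((m + 2).choose (i + 2) / (m + 2) : ℕ) : R))) := by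
    intro i hi
    have hi := Finset.mem_range.mp hi
    have hd : (m + 2) ∣ (m + 2).choose (i + 2) :=
      hp.dvd_choose_self (by omega) (by omega)
    have h3 : ((m + 2).choose (i + 1 + 1) : R)
        = ((m + 2 : ℕ) : R) * (((m + 2).choose (i + 2) / (m + 2) : ℕ) : R) := by
      rw [← Nat.cast_mul, Nat.mul_div_cancel' hd]
    rw [h3, ← mul_assoc, ← mul_assoc (A ^ 2), ← pow_add, ← mul_assoc,
      (Nat.cast_commute (m + 2) (A ^ (2 + i))).eq, add_comm 2 i]
  rw [Finset.sum_congr rfl h2, ← Finset.mul_sum, ← Finset.mul_sum]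
  have : A * ((m + 2 : ℕ) : R) = ((m + 2 : ℕ) : R) * A := (Nat.cast_commute (m + 2) A).eq.symm
  simp
  push_cast at this
  rw [this]
  abel

theorem aux_pow (ℓ : ℕ) [hp : Fact ℓ.Prime] (hℓ : 5 ≤ ℓ) (k : ℕ) (hk : 1 ≤ k)
    (A B : Matrix (Fin 2) (Fin 2) ℤ_[ℓ]) (hA : A ^ 2 = (ℓ : ℤ_[ℓ]) ^ k • B) :
    ∃ C, (1 + A) ^ ℓ = 1 + (ℓ : ℤ_[ℓ]) • A + (ℓ : ℤ_[ℓ]) ^ (k + 1) • C := by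
  obtain ⟨q, hq⟩ := aux_binom ℓ hp.out A
  obtain ⟨k, rfl⟩ : ∃ j, k = j + 1 := ⟨k - 1, by omega⟩
  have h4 : A ^ ℓ = (ℓ : ℤ_[ℓ]) ^ (k + 1 + 1) • ((ℓ : ℤ_[ℓ]) ^ k • (B * B * A ^ (ℓ - 4))) := by
    have : A ^ ℓ = A ^ 2 * A ^ 2 * A ^ (ℓ - 4) := by
      rw [← pow_add, ← pow_add]; congr 1; omega
    rw [this, hA]
    simp only [smul_mul_assoc, mul_smul_comm, smul_smul]
    congr 1; ring
  refine ⟨B * q + (ℓ : ℤ_[ℓ]) ^ k • (B * B * A ^ (ℓ - 4)), ?_⟩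
  have hs : ∀ M : Matrix (Fin 2) (Fin 2) ℤ_[ℓ],
      (ℓ : Matrix (Fin 2) (Fin 2) ℤ_[ℓ]) * M = (ℓ : ℤ_[ℓ]) • M := by
    intro M; rw [← nsmul_eq_mul, Nat.cast_smul_eq_nsmul]
  rw [hq, h4, hA, hs, hs, smul_add, smul_mul_assoc, smul_smul, pow_succ' _ (k + 1)]
  abel

def Lift (ℓ : ℕ) [Fact ℓ.Prime] (H : Subgroup (GL (Fin 2) ℤ_[ℓ])) (n : ℕ)
    (X : Matrix (Fin 2) (Fin 2) ℤ_[ℓ]) : Prop :=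
  ∃ h ∈ H, ∃ C : Matrix (Fin 2) (Fin 2) ℤ_[ℓ],
    (h : Matrix (Fin 2) (Fin 2) ℤ_[ℓ]) = 1 + (ℓ : ℤ_[ℓ]) ^ n • X + (ℓ : ℤ_[ℓ]) ^ (n + 1) • C

theorem Lift.add {ℓ : ℕ} [Fact ℓ.Prime] {H : Subgroup (GL (Fin 2) ℤ_[ℓ])} {n : ℕ} (hn : 1 ≤ n)
    {X Y : Matrix (Fin 2) (Fin 2) ℤ_[ℓ]} (hX : Lift ℓ H n X) (hY : Lift ℓ H n Y) :
    Lift ℓ H n (X + Y) := by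
  obtain ⟨h, hh, C, hC⟩ := hX
  obtain ⟨g, hg, D, hD⟩ := hY
  obtain ⟨n, rfl⟩ : ∃ j, n = j + 1 := ⟨n - 1, by omega⟩
  refine ⟨h * g, H.mul_mem hh hg, C + D + (ℓ : ℤ_[ℓ]) ^ n • ((X + (ℓ : ℤ_[ℓ]) • C) * (Y + (ℓ : ℤ_[ℓ]) • D)), ?_⟩
  rw [Units.val_mul, hC, hD]
  simp only [mul_add, add_mul, smul_add, smul_mul_assoc, mul_smul_comm, smul_smul, mul_one, one_mul]
  module

theorem Lift.step {ℓ : ℕ} [Fact ℓ.Prime] (hℓ : 5 ≤ ℓ) {H : Subgroup (GL (Fin 2) ℤ_[ℓ])} {n : ℕ}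
    (hn : 1 ≤ n) {X : Matrix (Fin 2) (Fin 2) ℤ_[ℓ]} (hX : Lift ℓ H n X) : Lift ℓ H (n + 1) X := by
  obtain ⟨h, hh, C, hC⟩ := hX
  obtain ⟨n, rfl⟩ : ∃ j, n = j + 1 := ⟨n - 1, by omega⟩
  obtain ⟨D, hD⟩ := aux_pow ℓ hℓ (n + 1 + 1) (by omega)
    ((ℓ : ℤ_[ℓ]) ^ (n + 1) • (X + (ℓ : ℤ_[ℓ]) • C))
    ((ℓ : ℤ_[ℓ]) ^ n • (X + (ℓ : ℤ_[ℓ]) • C) ^ 2) (by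
      rw [smul_pow, smul_smul]; congr 1; ring)
  refine ⟨h ^ ℓ, H.pow_mem hh _, C + D, ?_⟩
  have : 1 + (ℓ : ℤ_[ℓ]) ^ (n + 1) • X + (ℓ : ℤ_[ℓ]) ^ (n + 1 + 1) • C =
    1 + (ℓ : ℤ_[ℓ]) ^ (n + 1) • (X + (ℓ : ℤ_[ℓ]) • C) := by module
  rw [Units.val_pow_eq_pow_val, hC, this, hD]
  module

theorem Lift.base {ℓ : ℕ} [Fact ℓ.Prime] (hℓ : 5 ≤ ℓ) {H : Subgroup (GL (Fin 2) ℤ_[ℓ])}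
    {u : Matrix (Fin 2) (Fin 2) ℤ_[ℓ]} (hu : u ^ 2 = 0)
    (h : Lift ℓ H 0 u) : Lift ℓ H 1 u := by
  obtain ⟨h, hh, C, hC⟩ := h
  obtain ⟨D, hD⟩ := aux_pow ℓ hℓ 1 le_rfl (u + (ℓ : ℤ_[ℓ]) • C)
    (u * C + C * u + (ℓ : ℤ_[ℓ]) • C ^ 2) (by
      rw [pow_two, mul_add, add_mul, ← pow_two, hu]
      simp only [mul_add, add_mul, smul_add, smul_mul_assoc, mul_smul_comm, smul_smul, pow_two]
      module)
  refine ⟨h ^ ℓ, H.pow_mem hh _, C + D, ?_⟩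
  have : 1 + (ℓ : ℤ_[ℓ]) ^ 0 • u + (ℓ : ℤ_[ℓ]) ^ (0 + 1) • C = 1 + (u + (ℓ : ℤ_[ℓ]) • C) := by module
  rw [Units.val_pow_eq_pow_val, hC, this, hD]
  module

/-- A subgroup of GL₂ over a field containing transvections contains det 1. -/
theorem aux_sl {F : Type*} [Field F] (K : Subgroup (GL (Fin 2) F))
    (hU : ∀ t : F, ∀ g : GL (Fin 2) F, g.val = !![1, t; 0, 1] → g ∈ K)
    (hL : ∀ t : F, ∀ g : GL (Fin 2) F, g.val = !![1, 0; t, 1] → g ∈ K)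
    (g : GL (Fin 2) F) (hg : g.val.det = 1) : g ∈ K := by
  have eU : ∀ t : F, ∃ k ∈ K, k.val = !![1, t; 0, 1] := fun t => by
    have hd : (!![1, t; 0, 1] : Matrix (Fin 2) (Fin 2) F).det ≠ 0 := by simp
    exact ⟨GeneralLinearGroup.mkOfDetNeZero _ hd, hU t _ rfl, rfl⟩
  have eL : ∀ t : F, ∃ k ∈ K, k.val = !![1, 0; t, 1] := fun t => by
    have hd : (!![1, 0; t, 1] : Matrix (Fin 2) (Fin 2) F).det ≠ 0 := by simp
    exact ⟨GeneralLinearGroup.mkOfDetNeZero _ hd, hL t _ rfl, rfl⟩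
  have main : ∀ g : GL (Fin 2) F, g.val.det = 1 → g.val 1 0 ≠ 0 → g ∈ K := by
    intro g hg hc
    obtain ⟨x, hx, ex⟩ := eU ((g.val 0 0 - 1) / g.val 1 0)
    obtain ⟨y, hy, ey⟩ := eL (g.val 1 0)
    obtain ⟨z, hz, ez⟩ := eU ((g.val 1 1 - 1) / g.val 1 0)
    have : g = x * y * z := by
      ext i j
      rw [Units.val_mul, Units.val_mul, ex, ey, ez]
      rw [det_fin_two] at hg
      fin_cases i <;> fin_cases j <;> simp [Matrix.mul_apply, Fin.sum_univ_two] <;> field_simp <;>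
        first | ring1 | linear_combination hg | linear_combination -hg
    rw [this]; exact K.mul_mem (K.mul_mem hx hy) hz
  by_cases hc : g.val 1 0 = 0
  · obtain ⟨y, hy, ey⟩ := eL 1
    rw [← K.mul_mem_cancel_left hy]
    apply main
    · rw [Units.val_mul, det_mul, hg, ey]; simp
    · rw [Units.val_mul, ey]
      rw [det_fin_two, hc] at hg
      simp [Matrix.mul_apply, Fin.sum_univ_two, hc]
      rintro h; simp [h] at hg
  · exact main g hg hc

theorem aux_comm (ℓ : ℕ) [Fact ℓ.Prime] (hℓ : 5 ≤ ℓ)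
    (G : Subgroup (GL (Fin 2) ℤ_[ℓ]))
    (hmod : G.map (Matrix.GeneralLinearGroup.map (PadicInt.toZMod : ℤ_[ℓ] →+* ZMod ℓ)) = ⊤)
    (g : GL (Fin 2) (ZMod ℓ)) (hg : g.val.det = 1) :
    g ∈ (G ⊓ (GeneralLinearGroup.det (n := Fin 2) (R := ℤ_[ℓ])).ker).map
      (Matrix.GeneralLinearGroup.map (PadicInt.toZMod : ℤ_[ℓ] →+* ZMod ℓ)) := by
  have h2 : (2 : ZMod ℓ) ≠ 0 := by
    intro h
    have : ((2 : ℕ) : ZMod ℓ) = 0 := by exact_mod_cast h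
    rw [ZMod.natCast_eq_zero_iff] at this
    have := Nat.le_of_dvd (by norm_num) this
    omega
  have hc : ∀ x y : GL (Fin 2) (ZMod ℓ), x * y = y * y * x →
      y ∈ (G ⊓ (GeneralLinearGroup.det (n := Fin 2) (R := ℤ_[ℓ])).ker).map
      (Matrix.GeneralLinearGroup.map (PadicInt.toZMod : ℤ_[ℓ] →+* ZMod ℓ)) := by
    intro x y hxy
    have hx : x ∈ G.map (Matrix.GeneralLinearGroup.map (PadicInt.toZMod : ℤ_[ℓ] →+* ZMod ℓ)) := by
      rw [hmod]; trivial
    have hy : y ∈ G.map (Matrix.GeneralLinearGroup.map (PadicInt.toZMod : ℤ_[ℓ] →+* ZMod ℓ)) := by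
      rw [hmod]; trivial
    obtain ⟨a, ha, rfl⟩ := hx
    obtain ⟨b, hb, rfl⟩ := hy
    refine ⟨a * b * a⁻¹ * b⁻¹, ⟨?_, ?_⟩, ?_⟩
    · exact G.mul_mem (G.mul_mem (G.mul_mem ha hb) (G.inv_mem ha)) (G.inv_mem hb)
    · show _ = _
      simp only [map_mul, map_inv]
      rw [mul_right_comm (GeneralLinearGroup.det a), mul_inv_cancel, one_mul, mul_inv_cancel]
    · rw [map_mul, map_mul, map_mul, map_inv, map_inv, hxy]
      group
  refine aux_sl _ ?_ ?_ g hg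
  · intro t g hg
    have hd : (!![2, 0; 0, 1] : Matrix (Fin 2) (Fin 2) (ZMod ℓ)).det ≠ 0 := by simpa using h2
    apply hc (GeneralLinearGroup.mkOfDetNeZero _ hd)
    apply Units.ext
    rw [Units.val_mul, Units.val_mul, Units.val_mul, hg]
    show !![2, 0; 0, 1] * _ = _ * !![2, 0; 0, 1]
    ext i j
    fin_cases i <;> fin_cases j <;> simp [Matrix.mul_apply, Fin.sum_univ_two]
    ring
  · intro t g hg
    have hd : (!![1, 0; 0, 2] : Matrix (Fin 2) (Fin 2) (ZMod ℓ)).det ≠ 0 := by simpa using h2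
    apply hc (GeneralLinearGroup.mkOfDetNeZero _ hd)
    apply Units.ext
    rw [Units.val_mul, Units.val_mul, Units.val_mul, hg]
    show !![1, 0; 0, 2] * _ = _ * !![1, 0; 0, 2]
    ext i j
    fin_cases i <;> fin_cases j <;> simp [Matrix.mul_apply, Fin.sum_univ_two]
    ring

theorem aux_mod (ℓ : ℕ) [Fact ℓ.Prime] (g h : GL (Fin 2) ℤ_[ℓ])
    (e : Matrix.GeneralLinearGroup.map (PadicInt.toZMod : ℤ_[ℓ] →+* ZMod ℓ) g =
      Matrix.GeneralLinearGroup.map (PadicInt.toZMod : ℤ_[ℓ] →+* ZMod ℓ) h) :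
    ∃ C : Matrix (Fin 2) (Fin 2) ℤ_[ℓ], g.val = h.val + (ℓ : ℤ_[ℓ]) • C := by
  have : ∀ i j, ∃ c : ℤ_[ℓ], g.val i j = h.val i j + (ℓ : ℤ_[ℓ]) * c := by
    intro i j
    have h1 : PadicInt.toZMod (g.val i j) = PadicInt.toZMod (h.val i j) :=
      congrArg (fun M : GL (Fin 2) (ZMod ℓ) => M.val i j) e
    have h2 : g.val i j - h.val i j ∈ RingHom.ker (PadicInt.toZMod : ℤ_[ℓ] →+* ZMod ℓ) := by
      rw [RingHom.mem_ker, map_sub, h1, sub_self]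
    rw [PadicInt.ker_toZMod, PadicInt.maximalIdeal_eq_span_p, Ideal.mem_span_singleton] at h2
    obtain ⟨c, hc⟩ := h2
    exact ⟨c, by rw [← hc]; ring⟩
  choose C hC using this
  exact ⟨Matrix.of C, by ext i j; simp [hC]⟩

section
variable {ℓ : ℕ} [Fact ℓ.Prime] {H : Subgroup (GL (Fin 2) ℤ_[ℓ])}

theorem aux_lift0
    (hH : ∀ g : GL (Fin 2) ℤ_[ℓ], g.val.det = 1 → ∃ h ∈ H, ∃ C : Matrix (Fin 2) (Fin 2) ℤ_[ℓ],
      h.val = g.val + (ℓ : ℤ_[ℓ]) • C)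
    (u : Matrix (Fin 2) (Fin 2) ℤ_[ℓ]) (hu : (1 + u).det = 1) : Lift ℓ H 0 u := by
  obtain ⟨h, hh, C, hC⟩ := hH (GeneralLinearGroup.mk'' (1 + u) (by rw [hu]; exact isUnit_one)) hu
  refine ⟨h, hh, C, ?_⟩
  rw [hC]
  show 1 + u + _ = _
  simp

theorem aux_lift (hℓ : 5 ≤ ℓ)
    (hH : ∀ g : GL (Fin 2) ℤ_[ℓ], g.val.det = 1 → ∃ h ∈ H, ∃ C : Matrix (Fin 2) (Fin 2) ℤ_[ℓ],
      h.val = g.val + (ℓ : ℤ_[ℓ]) • C)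
    (n : ℕ) (a b c : ℤ_[ℓ]) : Lift ℓ H (n + 1) !![a, b; c, -a] := by
  induction n with
  | succ n ih => exact ih.step hℓ (by omega)
  | zero =>
    have e : (!![a, b; c, -a] : Matrix (Fin 2) (Fin 2) ℤ_[ℓ]) =
        !![a, -a; a, -a] + !![0, b + a; 0, 0] + !![0, 0; c - a, 0] := by
      ext i j; fin_cases i <;> fin_cases j <;> simp
    rw [e]
    refine Lift.add le_rfl (Lift.add le_rfl ?_ ?_) ?_
    all_goals
      refine Lift.base hℓ ?_ (aux_lift0 hH _ ?_)
      · rw [pow_two]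
        ext i j
        fin_cases i <;> fin_cases j <;> simp [Matrix.mul_apply, Fin.sum_univ_two]
      · simp [det_fin_two]
        try ring

theorem aux_approx (hℓ : 5 ≤ ℓ)
    (hH : ∀ g : GL (Fin 2) ℤ_[ℓ], g.val.det = 1 → ∃ h ∈ H, ∃ C : Matrix (Fin 2) (Fin 2) ℤ_[ℓ],
      h.val = g.val + (ℓ : ℤ_[ℓ]) • C)
    (hH1 : ∀ h ∈ H, h.val.det = 1)
    (g : GL (Fin 2) ℤ_[ℓ]) (hg : g.val.det = 1) (n : ℕ) :
    ∃ h ∈ H, ∃ C : Matrix (Fin 2) (Fin 2) ℤ_[ℓ],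
      g.val = h.val * (1 + (ℓ : ℤ_[ℓ]) ^ (n + 1) • C) := by
  induction n with
  | zero =>
    obtain ⟨h, hh, C, hC⟩ := hH g hg
    refine ⟨h, hh, -(h⁻¹.val * C), ?_⟩
    rw [mul_add, mul_smul_comm, mul_neg, Units.mul_inv_cancel_left, hC]
    simp
  | succ n ih =>
    obtain ⟨h, hh, C, hC⟩ := ih
    have hd : (1 + (ℓ : ℤ_[ℓ]) ^ (n + 1) • C).det = 1 := by
      have := congrArg Matrix.det hC
      rw [det_mul, hH1 h hh, hg, one_mul] at this
      exact this.symm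
    have ht : C 1 1 = - C 0 0 + (ℓ : ℤ_[ℓ]) * (- (ℓ : ℤ_[ℓ]) ^ n * C.det) := by
      have hl : (ℓ : ℤ_[ℓ]) ^ (n + 1) ≠ 0 :=
        pow_ne_zero _ (by exact_mod_cast (Fact.out : ℓ.Prime).ne_zero)
      apply mul_left_cancel₀ hl
      rw [det_fin_two] at hd ⊢
      simp at hd
      linear_combination hd
    obtain ⟨k, hk, D, hD⟩ := aux_lift hℓ hH n (C 0 0) (C 0 1) (C 1 0)
    set E : Matrix (Fin 2) (Fin 2) ℤ_[ℓ] := !![0, 0; 0, - (ℓ : ℤ_[ℓ]) ^ n * C.det]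
    have hE : C = !![C 0 0, C 0 1; C 1 0, - C 0 0] + (ℓ : ℤ_[ℓ]) • E := by
      ext i j
      fin_cases i <;> fin_cases j <;> simp [E]
      rw [ht]; ring
    refine ⟨h * k, H.mul_mem hh hk, k⁻¹.val * (E - D), ?_⟩
    rw [Units.val_mul, mul_assoc, mul_add, mul_smul_comm, Units.mul_inv_cancel_left, mul_one, hD, hC]
    congr 1
    refine (congrArg (fun M => 1 + (ℓ : ℤ_[ℓ]) ^ (n + 1) • M) hE).trans ?_
    module

end

/-- Let `G` be a closed subgroup of `GL₂(ℤ_ℓ)` for a prime `ℓ ≥ 5` such that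
`det(G) = ℤ_ℓ^×` and the reduction of `G` modulo `ℓ` equals `GL₂(ℤ/ℓℤ)`. Then `G = GL₂(ℤ_ℓ)`. -/
theorem closed_subgroup_full_det_full_mod_eq_top
    (ℓ : ℕ) [Fact ℓ.Prime] (hℓ : 5 ≤ ℓ)
    (G : Subgroup (GL (Fin 2) ℤ_[ℓ]))
    (hclosed : IsClosed (G : Set (GL (Fin 2) ℤ_[ℓ])))
    (hdet : G.map (Matrix.GeneralLinearGroup.det) = ⊤)
    (hmod : G.map (Matrix.GeneralLinearGroup.map (PadicInt.toZMod : ℤ_[ℓ] →+* ZMod ℓ)) = ⊤) :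
    G = ⊤ := by
  have key : ∀ g : GL (Fin 2) ℤ_[ℓ], g.val.det = 1 → g ∈ G := by
    intro g hg
    have hH : ∀ g : GL (Fin 2) ℤ_[ℓ], g.val.det = 1 →
        ∃ h ∈ (G ⊓ (GeneralLinearGroup.det (n := Fin 2) (R := ℤ_[ℓ])).ker),
        ∃ C : Matrix (Fin 2) (Fin 2) ℤ_[ℓ], h.val = g.val + (ℓ : ℤ_[ℓ]) • C := by
      intro g hg
      obtain ⟨h, hh, e⟩ := aux_comm ℓ hℓ G hmod
        (Matrix.GeneralLinearGroup.map (PadicInt.toZMod : ℤ_[ℓ] →+* ZMod ℓ) g) (by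
          have := congrArg Units.val (GeneralLinearGroup.map_det
            (PadicInt.toZMod : ℤ_[ℓ] →+* ZMod ℓ) g)
          refine this.trans ?_
          show PadicInt.toZMod g.val.det = 1
          rw [hg, map_one])
      exact ⟨h, hh, aux_mod ℓ h g e⟩
    have hH1 : ∀ h ∈ (G ⊓ (GeneralLinearGroup.det (n := Fin 2) (R := ℤ_[ℓ])).ker),
        h.val.det = 1 := fun h hh => congrArg Units.val hh.2
    choose s hs C hC using aux_approx hℓ hH hH1 g hg
    have hinv : ∀ x : GL (Fin 2) ℤ_[ℓ], x.val.det = 1 → x⁻¹.val = x.val.adjugate := by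
      intro x hx
      rw [Units.inv_eq_of_mul_eq_one_right]
      rw [mul_adjugate, hx, one_smul]
    have hsg : ∀ n, (s n).val = g.val - (ℓ : ℤ_[ℓ]) ^ (n + 1) • ((s n).val * C n) := by
      intro n
      rw [hC n, mul_add, mul_smul_comm, mul_one, add_sub_cancel_right]
    have hlim : Filter.Tendsto (fun n => (s n).val) Filter.atTop (nhds g.val) := by
      refine tendsto_pi_nhds.mpr fun i => tendsto_pi_nhds.mpr fun j => ?_
      rw [tendsto_iff_norm_sub_tendsto_zero]
      have hp : Filter.Tendsto (fun n : ℕ => (‖(ℓ : ℤ_[ℓ])‖) ^ (n + 1)) Filter.atTop (nhds 0) :=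
        (Filter.tendsto_add_atTop_iff_nat 1).mpr
          (tendsto_pow_atTop_nhds_zero_of_lt_one (norm_nonneg _) (by rw [PadicInt.norm_p]; exact inv_lt_one_of_one_lt₀ (by exact_mod_cast (Fact.out : ℓ.Prime).one_lt)))
      refine squeeze_zero (fun _ => norm_nonneg _) (fun n => ?_) hp
      have : (s n).val i j - g.val i j = - ((ℓ : ℤ_[ℓ]) ^ (n + 1) * ((s n).val * C n) i j) := by
        conv_lhs => rw [hsg n]
        simp
      rw [this, norm_neg, norm_mul, norm_pow]
      exact mul_le_of_le_one_right (by positivity) (PadicInt.norm_le_one _)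
    have hlim' : Filter.Tendsto s Filter.atTop (nhds g) := by
      rw [Units.isInducing_embedProduct.tendsto_nhds_iff]
      refine Filter.Tendsto.prodMk_nhds hlim ?_
      refine (MulOpposite.continuous_op.tendsto _).comp ?_
      rw [hinv g hg]
      have : (fun n => (s n)⁻¹.val) = fun n => (s n).val.adjugate := by
        funext n; exact hinv _ (hH1 _ (hs n))
      show Filter.Tendsto (fun n => (s n)⁻¹.val) _ _
      rw [this]
      exact ((continuous_id.matrix_adjugate).tendsto g.val).comp hlim
    exact hclosed.mem_of_tendsto hlim' (Filter.Eventually.of_forall fun n => (hs n).1)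
  rw [eq_top_iff]
  intro g _
  have : GeneralLinearGroup.det g ∈ G.map (Matrix.GeneralLinearGroup.det) := by rw [hdet]; trivial
  obtain ⟨h, hh, e⟩ := this
  rw [← G.mul_mem_cancel_left (G.inv_mem hh)]
  apply key
  have : GeneralLinearGroup.det (h⁻¹ * g) = 1 := by rw [map_mul, map_inv, e, inv_mul_cancel]
  exact congrArg Units.val this
end

section
/- Fix a prime ℓ. Let G be a closed subgroup of SL₂(ℤ_ℓ) whose image modulo ℓ^e equals SL₂(ℤ/ℓ^eℤ), where e = 3 if ℓ = 2, e = 2 if ℓ = 3, and e = 1 if ℓ ≥ 5. Then G = SL₂(ℤ_ℓ). -/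
open Matrix

/-- Second order truncation of the binomial formula. -/
lemma aux_pow_two {R : Type*} [Ring R] (Y : R) (m : ℕ) :
    ∃ S : R, (1 + Y) ^ m = 1 + (m : R) * Y + S * Y ^ 2 := by
  induction m with
  | zero => exact ⟨0, by simp⟩
  | succ m ih =>
    obtain ⟨S, hS⟩ := ih
    refine ⟨S * (1 + Y) + m, ?_⟩
    rw [pow_succ, hS]
    push_cast
    noncomm_ring

/-- Fourth order truncation of the binomial formula. -/
lemma aux_pow_four {R : Type*} [Ring R] (Y : R) (m : ℕ) :
    ∃ S : R, (1 + Y) ^ m = 1 + (m : R) * Y + (m.choose 2 : R) * Y ^ 2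
      + (m.choose 3 : R) * Y ^ 3 + S * Y ^ 4 := by
  induction m with
  | zero => exact ⟨0, by simp⟩
  | succ m ih =>
    obtain ⟨S, hS⟩ := ih
    refine ⟨S * (1 + Y) + m.choose 3, ?_⟩
    have h2 : (m + 1).choose 2 = m + m.choose 2 := by
      rw [Nat.choose_succ_succ' m 1, Nat.choose_one_right]
    have h3 : (m + 1).choose 3 = m.choose 2 + m.choose 3 := Nat.choose_succ_succ' m 2
    rw [pow_succ, hS, h2, h3]
    push_cast
    noncomm_ring

/-- The `ℓ`-th power of an element close to `1 + ℓ^k X`, `X` of square zero. -/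
lemma aux_power {R : Type*} [CommRing R] (ℓ : ℕ) (hp : ℓ.Prime) (k : ℕ)
    (hk : 1 ≤ k ∨ 5 ≤ ℓ) (X C : Matrix (Fin 2) (Fin 2) R) (hX : X * X = 0) :
    ∃ D : Matrix (Fin 2) (Fin 2) R,
      (1 + (ℓ : R) ^ k • X + (ℓ : R) ^ (k + 1) • C) ^ ℓ
        = 1 + (ℓ : R) ^ (k + 1) • X + (ℓ : R) ^ (k + 2) • D := by
  set Y := (ℓ : R) ^ k • X + (ℓ : R) ^ (k + 1) • C with hY
  have hsq : Y ^ 2 = (ℓ : R) ^ (2 * k + 1) • (X * C + C * X + (ℓ : R) • (C * C)) := by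
    rw [hY, pow_two]
    simp only [add_mul, mul_add, smul_mul_assoc, mul_smul_comm, hX, smul_add, smul_smul, smul_zero]
    module
  set Q := X * C + C * X + (ℓ : R) • (C * C) with hQ
  have hlY : (ℓ : Matrix (Fin 2) (Fin 2) R) * Y
      = (ℓ : R) ^ (k + 1) • X + (ℓ : R) ^ (k + 2) • C := by
    rw [← nsmul_eq_mul, ← Nat.cast_smul_eq_nsmul R, hY]
    module
  rw [add_assoc, ← hY]
  by_cases hk1 : 1 ≤ k
  · obtain ⟨S, hS⟩ := aux_pow_two Y ℓ
    obtain ⟨j, rfl⟩ := Nat.exists_eq_add_of_le hk1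
    refine ⟨C + (ℓ : R) ^ j • (S * Q), ?_⟩
    rw [hS, hlY, hsq, mul_smul_comm]
    module
  · have h5 : 5 ≤ ℓ := by omega
    obtain rfl : k = 0 := by omega
    obtain ⟨S, hS⟩ := aux_pow_four Y ℓ
    obtain ⟨a, ha⟩ := hp.dvd_choose_self (k := 2) (by omega) (by omega)
    obtain ⟨b, hb⟩ := hp.dvd_choose_self (k := 3) (by omega) (by omega)
    refine ⟨C + (a : R) • Q + (b : R) • (Q * Y) + S * (Q * Q), ?_⟩
    have h3 : Y ^ 3 = Y ^ 2 * Y := by noncomm_ring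
    have h4 : Y ^ 4 = Y ^ 2 * Y ^ 2 := by noncomm_ring
    rw [hS, hlY, h3, h4, hsq, ha, hb, ← nsmul_eq_mul, ← nsmul_eq_mul, ← Nat.cast_smul_eq_nsmul R,
      ← Nat.cast_smul_eq_nsmul R]
    simp only [smul_mul_assoc, mul_smul_comm, Nat.cast_mul]
    module

/-- `G` is full modulo `ℓ^n`. -/
def FullMod (ℓ : ℕ) [Fact ℓ.Prime] (G : Subgroup (GL (Fin 2) ℤ_[ℓ])) (n : ℕ) : Prop :=
  ∀ A : Matrix (Fin 2) (Fin 2) ℤ_[ℓ], A.det = 1 →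
    ∃ g ∈ G, ∃ C : Matrix (Fin 2) (Fin 2) ℤ_[ℓ], (g : Matrix (Fin 2) (Fin 2) ℤ_[ℓ])
      = A + (ℓ : ℤ_[ℓ]) ^ n • C

lemma aux_nilp (ℓ : ℕ) [Fact ℓ.Prime] (G : Subgroup (GL (Fin 2) ℤ_[ℓ])) (k : ℕ)
    (hk : 1 ≤ k ∨ 5 ≤ ℓ) (h : FullMod ℓ G (k + 1)) (x y z : ℤ_[ℓ]) (hxyz : x * x + y * z = 0) :
    ∃ g ∈ G, ∃ C : Matrix (Fin 2) (Fin 2) ℤ_[ℓ], (g : Matrix (Fin 2) (Fin 2) ℤ_[ℓ])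
      = 1 + (ℓ : ℤ_[ℓ]) ^ (k + 1) • !![x, y; z, -x] + (ℓ : ℤ_[ℓ]) ^ (k + 2) • C := by
  obtain ⟨g, hg, C, hC⟩ := h (1 + (ℓ : ℤ_[ℓ]) ^ k • !![x, y; z, -x]) (by
    rw [Matrix.det_fin_two]
    simp
    linear_combination (-(ℓ : ℤ_[ℓ]) ^ k * (ℓ : ℤ_[ℓ]) ^ k) * hxyz)
  obtain ⟨D, hD⟩ := aux_power ℓ Fact.out k hk !![x, y; z, -x] C (by
    ext i j
    fin_cases i <;> fin_cases j <;> simp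
    · linear_combination hxyz
    · ring
    · ring
    · linear_combination hxyz)
  refine ⟨g ^ ℓ, G.pow_mem hg ℓ, D, ?_⟩
  rw [Units.val_pow_eq_pow_val, hC, hD]

lemma aux_mul {R : Type*} [CommRing R] (p : R) (k : ℕ) (X Y C D : Matrix (Fin 2) (Fin 2) R) :
    ∃ E : Matrix (Fin 2) (Fin 2) R,
    (1 + p ^ (k + 1) • X + p ^ (k + 2) • C) * (1 + p ^ (k + 1) • Y + p ^ (k + 2) • D)
      = 1 + p ^ (k + 1) • (X + Y) + p ^ (k + 2) • E := by
  refine ⟨C + D + p ^ k • ((X + p • C) * (Y + p • D)), ?_⟩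
  simp only [add_mul, mul_add, smul_mul_assoc, mul_smul_comm, one_mul, mul_one, smul_add, smul_smul]
  module

lemma aux_step (ℓ : ℕ) [Fact ℓ.Prime] (G : Subgroup (GL (Fin 2) ℤ_[ℓ])) (k : ℕ)
    (hSL : ∀ g ∈ G, (g : Matrix (Fin 2) (Fin 2) ℤ_[ℓ]).det = 1)
    (hk : 1 ≤ k ∨ 5 ≤ ℓ) (h : FullMod ℓ G (k + 1)) : FullMod ℓ G (k + 2) := by
  intro A hA
  obtain ⟨g, hg, C, hC⟩ := h A hA
  have hp0 : (ℓ : ℤ_[ℓ]) ≠ 0 := by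
    exact_mod_cast (Fact.out : ℓ.Prime).ne_zero
  set gi : Matrix (Fin 2) (Fin 2) ℤ_[ℓ] := ((g⁻¹ : GL (Fin 2) ℤ_[ℓ]) : Matrix (Fin 2) (Fin 2) ℤ_[ℓ]) with hgi
  have hgig : gi * (g : Matrix (Fin 2) (Fin 2) ℤ_[ℓ]) = 1 := by
    rw [hgi, ← Units.val_mul, inv_mul_cancel, Units.val_one]
  have hggi : (g : Matrix (Fin 2) (Fin 2) ℤ_[ℓ]) * gi = 1 := by
    rw [hgi, ← Units.val_mul, mul_inv_cancel, Units.val_one]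
  obtain ⟨W, hW⟩ : ∃ W, W = -(gi * C) := ⟨_, rfl⟩
  have hgA : gi * A = 1 + (ℓ : ℤ_[ℓ]) ^ (k + 1) • W := by
    have : A = g - (ℓ : ℤ_[ℓ]) ^ (k + 1) • C := by rw [hC]; abel
    rw [this, mul_sub, hgig, hW, mul_smul_comm, smul_neg, sub_eq_add_neg]
  have hdet : (1 + (ℓ : ℤ_[ℓ]) ^ (k + 1) • W).det = 1 := by
    rw [← hgA, Matrix.det_mul, hA, hSL _ (G.inv_mem hg), one_mul]
  rw [Matrix.det_fin_two] at hdet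
  simp at hdet
  have htr : W 1 1 = - W 0 0 + (ℓ : ℤ_[ℓ]) * (-(ℓ : ℤ_[ℓ]) ^ k * (W 0 0 * W 1 1 - W 0 1 * W 1 0)) := by
    apply mul_left_cancel₀ (pow_ne_zero (k + 1) hp0)
    linear_combination hdet
  obtain ⟨t, ht⟩ : ∃ t, W 1 1 = - W 0 0 + (ℓ : ℤ_[ℓ]) * t := ⟨_, htr⟩
  obtain ⟨g1, hg1, C1, hC1⟩ := aux_nilp ℓ G k hk h (W 0 0) (- W 0 0) (W 0 0) (by ring)
  obtain ⟨g2, hg2, C2, hC2⟩ := aux_nilp ℓ G k hk h 0 (W 0 1 + W 0 0) 0 (by ring)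
  obtain ⟨g3, hg3, C3, hC3⟩ := aux_nilp ℓ G k hk h 0 0 (W 1 0 - W 0 0) (by ring)
  obtain ⟨E, hE⟩ := aux_mul (ℓ : ℤ_[ℓ]) k _ _ C1 C2
  rw [← hC1, ← hC2] at hE
  obtain ⟨F, hF⟩ := aux_mul (ℓ : ℤ_[ℓ]) k _ _ E C3
  rw [← hC3, ← hE] at hF
  refine ⟨g * (g1 * g2 * g3), G.mul_mem hg (G.mul_mem (G.mul_mem hg1 hg2) hg3),
    (g : Matrix (Fin 2) (Fin 2) ℤ_[ℓ]) * (F - !![0, 0; 0, t]), ?_⟩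
  have hWe : !![W 0 0, -W 0 0; W 0 0, -W 0 0] + !![0, W 0 1 + W 0 0; 0, -0]
      + !![0, 0; W 1 0 - W 0 0, -0] = W - (ℓ : ℤ_[ℓ]) • !![0, 0; 0, t] := by
    ext i j
    fin_cases i <;> fin_cases j <;> simp [ht]
  have hA2 : A = (g : Matrix (Fin 2) (Fin 2) ℤ_[ℓ]) * (1 + (ℓ : ℤ_[ℓ]) ^ (k + 1) • W) := by
    rw [← hgA, ← mul_assoc, hggi, one_mul]
  rw [Units.val_mul, Units.val_mul, Units.val_mul, hF, hWe, hA2, ← mul_smul_comm, ← mul_add]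
  congr 1
  module

lemma aux_base (ℓ : ℕ) [Fact ℓ.Prime] (e : ℕ)
    (G : Subgroup (GL (Fin 2) ℤ_[ℓ]))
    (hred : G.map (Matrix.GeneralLinearGroup.map (PadicInt.toZModPow e : ℤ_[ℓ] →+* ZMod (ℓ ^ e)))
      = (Matrix.GeneralLinearGroup.det : GL (Fin 2) (ZMod (ℓ ^ e)) →* (ZMod (ℓ ^ e))ˣ).ker) :
    FullMod ℓ G e := by
  intro A hA
  let a : GL (Fin 2) ℤ_[ℓ] := Matrix.SpecialLinearGroup.toGL ⟨A, hA⟩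
  have haA : (a : Matrix (Fin 2) (Fin 2) ℤ_[ℓ]) = A := rfl
  have hmem : Matrix.GeneralLinearGroup.map (PadicInt.toZModPow e : ℤ_[ℓ] →+* ZMod (ℓ ^ e)) a ∈
      (Matrix.GeneralLinearGroup.det : GL (Fin 2) (ZMod (ℓ ^ e)) →* (ZMod (ℓ ^ e))ˣ).ker := by
    rw [MonoidHom.mem_ker, Matrix.GeneralLinearGroup.map_det]
    have : Matrix.GeneralLinearGroup.det a = 1 := by
      ext1
      simpa [haA] using hA
    rw [this, map_one]
  rw [← hred] at hmem
  obtain ⟨g, hg, hga⟩ := hmem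
  have key : ∀ i j, ∃ c, g i j = A i j + (ℓ : ℤ_[ℓ]) ^ e * c := by
    intro i j
    have h1 := congrArg (fun u : GL (Fin 2) (ZMod (ℓ ^ e)) => u i j) hga
    simp only [Matrix.GeneralLinearGroup.map_apply] at h1
    have h2 : g i j - a i j ∈ RingHom.ker (PadicInt.toZModPow e : ℤ_[ℓ] →+* ZMod (ℓ ^ e)) := by
      rw [RingHom.mem_ker, map_sub, h1, sub_self]
    rw [PadicInt.ker_toZModPow, Ideal.mem_span_singleton] at h2
    obtain ⟨c, hc⟩ := h2
    exact ⟨c, by rw [← hc, haA]; ring⟩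
  choose c hc using key
  refine ⟨g, hg, Matrix.of c, ?_⟩
  ext i j
  simp [hc]

theorem closed_subgroup_SL2_full_mod_pow_eq_SL2
    (ℓ : ℕ) [Fact ℓ.Prime] (e : ℕ)
    (he : e = if ℓ = 2 then 3 else if ℓ = 3 then 2 else 1)
    (G : Subgroup (GL (Fin 2) ℤ_[ℓ]))
    (hSL : G ≤ (Matrix.GeneralLinearGroup.det : GL (Fin 2) ℤ_[ℓ] →* ℤ_[ℓ]ˣ).ker)
    (hclosed : IsClosed (G : Set (GL (Fin 2) ℤ_[ℓ])))
    (hred : G.map (Matrix.GeneralLinearGroup.map (PadicInt.toZModPow e : ℤ_[ℓ] →+* ZMod (ℓ ^ e)))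
      = (Matrix.GeneralLinearGroup.det : GL (Fin 2) (ZMod (ℓ ^ e)) →* (ZMod (ℓ ^ e))ˣ).ker) :
    G = (Matrix.GeneralLinearGroup.det : GL (Fin 2) ℤ_[ℓ] →* ℤ_[ℓ]ˣ).ker := by
  have hdet : ∀ g ∈ (Matrix.GeneralLinearGroup.det : GL (Fin 2) ℤ_[ℓ] →* ℤ_[ℓ]ˣ).ker,
      (g : Matrix (Fin 2) (Fin 2) ℤ_[ℓ]).det = 1 := by
    intro g hg
    have := congrArg Units.val (MonoidHom.mem_ker.mp hg)
    simpa using this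
  have hinv : ∀ g ∈ (Matrix.GeneralLinearGroup.det : GL (Fin 2) ℤ_[ℓ] →* ℤ_[ℓ]ˣ).ker,
      ((g⁻¹ : GL (Fin 2) ℤ_[ℓ]) : Matrix (Fin 2) (Fin 2) ℤ_[ℓ])
        = (g : Matrix (Fin 2) (Fin 2) ℤ_[ℓ]).adjugate := by
    intro g hg
    rw [Matrix.coe_units_inv, Matrix.inv_def, hdet g hg]
    simp
  have hpr : ℓ.Prime := Fact.out
  have he1 : 1 ≤ e := by rw [he]; split_ifs <;> norm_num
  have he2 : 2 ≤ e ∨ 5 ≤ ℓ := by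
    rw [he]
    split_ifs with h2 h3
    · left; norm_num
    · left; norm_num
    · right
      have h4 : ℓ ≠ 4 := by rintro rfl; exact absurd hpr (by norm_num)
      have := hpr.two_le
      omega
  have hfull : ∀ m, FullMod ℓ G (e + m) := by
    intro m
    induction m with
    | zero => exact aux_base ℓ e G hred
    | succ m ih =>
      obtain ⟨k, hk⟩ := Nat.exists_eq_add_of_le he1
      have := aux_step ℓ G (k + m) (fun g hg => hdet g (hSL hg)) (by omega)
        (by convert ih using 1; omega)
      convert this using 1
      omega
  refine le_antisymm hSL fun a ha => ?_
  choose g hg C hC using fun m => hfull m a (hdet a ha)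
  have hlim : Filter.Tendsto (fun m => (g m : Matrix (Fin 2) (Fin 2) ℤ_[ℓ])) Filter.atTop
      (nhds (a : Matrix (Fin 2) (Fin 2) ℤ_[ℓ])) := by
    refine tendsto_pi_nhds.mpr fun i => tendsto_pi_nhds.mpr fun j => ?_
    rw [tendsto_iff_norm_sub_tendsto_zero]
    have hr : Filter.Tendsto (fun m : ℕ => ((ℓ : ℝ)⁻¹) ^ m) Filter.atTop (nhds 0) := by
      apply tendsto_pow_atTop_nhds_zero_of_lt_one (by positivity)
      exact inv_lt_one_of_one_lt₀ (by exact_mod_cast hpr.one_lt)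
    refine squeeze_zero (fun _ => norm_nonneg _) (fun m => ?_) hr
    have h1 : (g m : Matrix (Fin 2) (Fin 2) ℤ_[ℓ]) i j - (a : Matrix (Fin 2) (Fin 2) ℤ_[ℓ]) i j
        = (ℓ : ℤ_[ℓ]) ^ m * ((ℓ : ℤ_[ℓ]) ^ e * C m i j) := by
      rw [hC m]
      simp
      ring
    rw [h1, norm_mul, norm_pow, PadicInt.norm_p]
    exact mul_le_of_le_one_right (by positivity) (PadicInt.norm_le_one _)
  have hlim2 : Filter.Tendsto g Filter.atTop (nhds a) := by
    rw [Units.isEmbedding_embedProduct.tendsto_nhds_iff]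
    refine Filter.Tendsto.prodMk_nhds hlim ?_
    refine (MulOpposite.continuous_op.tendsto _).comp ?_
    rw [hinv a ha]
    have hc : Continuous (fun M : Matrix (Fin 2) (Fin 2) ℤ_[ℓ] => M.adjugate) :=
      continuous_id.matrix_adjugate
    refine ((hc.tendsto _).comp hlim).congr fun m => ?_
    exact (hinv _ (hSL (hg m))).symm
  exact hclosed.mem_of_tendsto hlim2 (Filter.Eventually.of_forall hg)
end

section
/- Fix a prime ℓ and let G be a closed subgroup of GL₂(ℤ_ℓ) with det(G) = ℤ_ℓ^×. If S is a nonabelian simple group that occurs as a quotient of some closed normal subgroup of G, then ℓ ≥ 5, G = GL₂(ℤ_ℓ), and S is isomorphic to SL₂(𝔽_ℓ)/{±I}. -/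
open Matrix MatrixGroups

instance : Fact (Even (Fintype.card (Fin 2))) := ⟨by decide⟩

section AbstractGroups

theorem squarefree_six : Squarefree 6 :=
  (Nat.squarefree_mul (m := 2) (n := 3) (by norm_num)).2
    ⟨Nat.prime_two.squarefree, Nat.prime_three.squarefree⟩

theorem squarefree_thirty : Squarefree 30 :=
  (Nat.squarefree_mul (m := 6) (n := 5) (by norm_num)).2
    ⟨squarefree_six, Nat.prime_five.squarefree⟩

theorem simple_not_solvable {S : Type*} [Group S] (hsimple : IsSimpleGroup S)
    (hnonab : ∃ a b : S, a * b ≠ b * a) : ¬ Group.IsSolvable S := by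
  intro h
  obtain ⟨a, b, hab⟩ := hnonab
  exact hab (IsSimpleGroup.comm_iff_isSolvable.2 h a b)

theorem map_normal_bot_or_top {A S : Type*} [Group A] [Group S] (hsimple : IsSimpleGroup S)
    (f : A →* S) (hf : Function.Surjective f) (M : Subgroup A) [hM : M.Normal] :
    M.map f = ⊥ ∨ M.map f = ⊤ :=
  (hM.map f hf).eq_bot_or_eq_top

theorem central_to_one {A S : Type*} [Group A] [Group S] (hsimple : IsSimpleGroup S)
    (hnonab : ∃ a b : S, a * b ≠ b * a)
    (f : A →* S) (hf : Function.Surjective f) (z : A) (hz : ∀ a, z * a = a * z) : f z = 1 := by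
  rcases (inferInstance : (Subgroup.center S).Normal).eq_bot_or_eq_top with h | h
  · have : f z ∈ Subgroup.center S := by
      rw [Subgroup.mem_center_iff]
      intro s
      obtain ⟨a, rfl⟩ := hf s
      rw [← map_mul, ← map_mul, hz]
    rw [h] at this
    simpa using this
  · obtain ⟨a, b, hab⟩ := hnonab
    exfalso
    apply hab
    have : b ∈ Subgroup.center S := by rw [h]; trivial
    exact Subgroup.mem_center_iff.1 this a

theorem lift_to_range {A B S : Type*} [Group A] [Group B] [Group S]
    (f : A →* S) (hf : Function.Surjective f) (g : A →* B) (hg : g.ker ≤ f.ker) :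
    ∃ h : g.range →* S, Function.Surjective h ∧ ∀ a, h (g.rangeRestrict a) = f a := by
  have hk : g.rangeRestrict.ker ≤ f.ker := by rwa [MonoidHom.ker_rangeRestrict]
  refine ⟨g.rangeRestrict.liftOfSurjective g.rangeRestrict_surjective ⟨f, hk⟩, ?_, ?_⟩
  · intro s
    obtain ⟨a, rfl⟩ := hf s
    exact ⟨g.rangeRestrict a, MonoidHom.liftOfRightInverse_comp_apply _ _ _ ⟨f, hk⟩ a⟩
  · intro a
    exact MonoidHom.liftOfRightInverse_comp_apply _ _ _ ⟨f, hk⟩ a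

theorem squarefree_card_false {S : Type*} [Group S] [Finite S] (hsimple : IsSimpleGroup S)
    (hnonab : ∃ a b : S, a * b ≠ b * a) (h : Squarefree (Nat.card S)) : False := by
  have := IsZGroup.of_squarefree h
  exact simple_not_solvable hsimple hnonab inferInstance

theorem pgroup_false {S : Type*} [Group S] [Finite S] (hsimple : IsSimpleGroup S)
    (hnonab : ∃ a b : S, a * b ≠ b * a) (p : ℕ) [Fact p.Prime] (h : IsPGroup p S) : False := by
  have := h.isNilpotent
  exact simple_not_solvable hsimple hnonab inferInstance

theorem card_dvd_false {S : Type*} [Group S] [Finite S] (hsimple : IsSimpleGroup S)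
    (hnonab : ∃ a b : S, a * b ≠ b * a) (k : ℕ) (h : Nat.card S ∣ 3 * 2 ^ k) : False := by
  obtain ⟨P⟩ : Nonempty (Sylow 2 S) := inferInstance
  have h1 : (P : Subgroup S).index ∣ 3 := by
    have h2 : ¬ 2 ∣ (P : Subgroup S).index := P.not_dvd_index
    have h3 : (P : Subgroup S).index ∣ 3 * 2 ^ k := (Subgroup.index_dvd_card _).trans h
    exact Nat.Coprime.dvd_of_dvd_mul_right
      (Nat.Coprime.pow_right k ((Nat.Prime.coprime_iff_not_dvd Nat.prime_two).2 h2).symm) h3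
  rcases (Nat.dvd_prime Nat.prime_three).1 h1 with h2 | h2
  · have : (P : Subgroup S) = ⊤ := Subgroup.index_eq_one.1 h2
    have h3 := P.isPGroup'
    rw [this] at h3
    exact pgroup_false hsimple hnonab 2 (h3.of_equiv Subgroup.topEquiv)
  · have h3 : Nat.card (S ⧸ (P : Subgroup S)) = 3 := h2
    have hn : (P : Subgroup S).normalCore = ⊥ := by
      rcases (inferInstance : ((P : Subgroup S).normalCore).Normal).eq_bot_or_eq_top with h | h
      · exact h
      · have : (P : Subgroup S) = ⊤ := top_le_iff.1 (h ▸ (P : Subgroup S).normalCore_le)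
        rw [this] at h2
        simp at h2
    rw [Subgroup.normalCore_eq_ker, MonoidHom.ker_eq_bot_iff] at hn
    have h4 := Subgroup.card_dvd_of_injective _ hn
    rw [Nat.card_perm, h3] at h4
    exact squarefree_card_false hsimple hnonab
      (Squarefree.squarefree_of_dvd h4 squarefree_six)

theorem arith_aux (n m₁ m₂ m₃ e₁ e₂ e₃ : ℕ) (h₁ : e₁ * m₁ = n) (h₂ : e₂ * m₂ = n)
    (h₃ : e₃ * m₃ = n) (hs : m₁ + m₂ + m₃ = n + 2) (l₁ : 3 ≤ m₁) (l₂ : 3 ≤ m₂) (l₃ : 3 ≤ m₃)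
    (h12 : e₁ ≤ e₂) (h23 : e₂ ≤ e₃) : n = 12 ∨ n = 24 ∨ n = 60 := by
  have a1 : e₁ < 3 := by
    by_contra h
    push Not at h
    nlinarith
  have a2 : e₁ = 2 := by
    interval_cases e₁ <;> omega
  subst a2
  have b1 : e₂ < 4 := by
    by_contra h
    push Not at h
    nlinarith
  have b2 : e₂ = 3 := by
    interval_cases e₂
    · omega
    · rfl
  subst b2
  have c1 : e₃ < 6 := by
    by_contra h
    push Not at h
    nlinarith
  interval_cases e₃ <;> omega

theorem arith_main (n m₁ m₂ m₃ e₁ e₂ e₃ : ℕ) (h₁ : e₁ * m₁ = n) (h₂ : e₂ * m₂ = n)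
    (h₃ : e₃ * m₃ = n) (hs : m₁ + m₂ + m₃ = n + 2) (l₁ : 3 ≤ m₁) (l₂ : 3 ≤ m₂) (l₃ : 3 ≤ m₃) :
    n = 12 ∨ n = 24 ∨ n = 60 := by
  rcases le_total e₁ e₂ with a | a <;> rcases le_total e₂ e₃ with b | b <;>
    rcases le_total e₁ e₃ with c | c
  · exact arith_aux n m₁ m₂ m₃ e₁ e₂ e₃ h₁ h₂ h₃ hs l₁ l₂ l₃ a b
  · exact arith_aux n m₁ m₂ m₃ e₁ e₂ e₃ h₁ h₂ h₃ hs l₁ l₂ l₃ a b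
  · exact arith_aux n m₁ m₃ m₂ e₁ e₃ e₂ h₁ h₃ h₂ (by omega) l₁ l₃ l₂ c b
  · exact arith_aux n m₃ m₁ m₂ e₃ e₁ e₂ h₃ h₁ h₂ (by omega) l₃ l₁ l₂ c a
  · exact arith_aux n m₂ m₁ m₃ e₂ e₁ e₃ h₂ h₁ h₃ (by omega) l₂ l₁ l₃ a c
  · exact arith_aux n m₂ m₃ m₁ e₂ e₃ e₁ h₂ h₃ h₁ (by omega) l₂ l₃ l₁ b c
  · exact arith_aux n m₃ m₂ m₁ e₃ e₂ e₁ h₃ h₂ h₁ (by omega) l₃ l₂ l₁ b a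
  · exact arith_aux n m₃ m₂ m₁ e₃ e₂ e₁ h₃ h₂ h₁ (by omega) l₃ l₂ l₁ b a

/-- A group with a solvable subgroup of index at most two is solvable. -/
theorem solvable_of_index_le_two {Γ : Type*} [Group Γ] (H : Subgroup Γ) [hs : Group.IsSolvable H]
    (h0 : H.index ≠ 0) (h : H.index ≤ 2) : Group.IsSolvable Γ := by
  have hn : H.Normal := by
    have : H.index = 1 ∨ H.index = 2 := by omega
    rcases this with h | h
    · rw [Subgroup.index_eq_one.1 h]; infer_instance
    · exact Subgroup.normal_of_index_eq_two h
  have : IsMulCommutative (Γ ⧸ H) := by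
    have : H.index = 1 ∨ H.index = 2 := by omega
    rcases this with h | h
    · have : Subsingleton (Γ ⧸ H) := (Nat.card_eq_one_iff_unique.1 h).1
      exact ⟨⟨fun a b => Subsingleton.elim _ _⟩⟩
    · have : IsCyclic (Γ ⧸ H) := isCyclic_of_prime_card (p := 2) h
      infer_instance
  have : Group.IsSolvable (Γ ⧸ H) := Group.isSolvable_of_comm (fun a b => this.1.1 a b)
  exact Group.isSolvable_of_ker_le_range H.subtype (QuotientGroup.mk' H) (by simp)

/-- Klein's orbit count. -/
theorem klein_count {Γ X : Type*} [Group Γ] [Finite Γ] [Finite X] [MulAction Γ X]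
    (hfix : ∀ g : Γ, g ≠ 1 → Nat.card (MulAction.fixedBy X g) = 2)
    (hsol : ∀ x : X, Group.IsSolvable (MulAction.stabilizer Γ x)) :
    Group.IsSolvable Γ ∨ Nat.card Γ = 12 ∨ Nat.card Γ = 24 ∨ Nat.card Γ = 60 := by
  classical
  have := Fintype.ofFinite Γ
  have := Fintype.ofFinite X
  by_cases hidx : ∃ x : X, (MulAction.stabilizer Γ x).index ≤ 2
  · obtain ⟨x, hx⟩ := hidx
    have := hsol x
    exact Or.inl (solvable_of_index_le_two _ Subgroup.index_ne_zero_of_finite hx)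
  push Not at hidx
  by_cases htriv : Nat.card Γ = 1
  · left
    have : Subsingleton Γ := (Nat.card_eq_one_iff_unique.1 htriv).1
    exact Group.isSolvable_of_comm (fun a b => Subsingleton.elim _ _)
  right
  set n := Nat.card Γ with hn
  have hnpos : 0 < n := Nat.card_pos
  have hB := MulAction.sum_card_fixedBy_eq_card_orbits_mul_card_group Γ X
  have hC := MulAction.card_eq_sum_card_group_div_card_stabilizer Γ X
  set Ω := Quotient (MulAction.orbitRel Γ X) with hΩ
  -- orbit sizes and stabilizer orders
  let e : Ω → ℕ := fun ω => Nat.card (MulAction.stabilizer Γ ω.out)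
  let m : Ω → ℕ := fun ω => (MulAction.stabilizer Γ ω.out).index
  have hem : ∀ ω, e ω * m ω = n := fun ω => Subgroup.card_mul_index _
  have hepos : ∀ ω, 0 < e ω := fun ω => Nat.card_pos
  have hm3 : ∀ ω, 3 ≤ m ω := fun ω => hidx ω.out
  have hC' : Nat.card X = ∑ ω, m ω := by
    rw [Nat.card_eq_fintype_card, hC]
    refine Finset.sum_congr rfl fun ω _ => ?_
    rw [← Nat.card_eq_fintype_card, ← Nat.card_eq_fintype_card]
    exact Nat.div_eq_of_eq_mul_right (hepos ω) (hem ω).symm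
  have hB' : Nat.card X + 2 * (n - 1) = Fintype.card Ω * n := by
    rw [hn, Nat.card_eq_fintype_card (α := Γ), ← hB,
      ← Finset.add_sum_erase _ _ (Finset.mem_univ (1 : Γ))]
    congr 1
    · rw [← Nat.card_eq_fintype_card, MulAction.fixedBy_one_eq_univ]
      simp
    · rw [Finset.sum_congr rfl (g := fun _ => 2)]
      · simp [Finset.card_erase_of_mem, mul_comm]
      · intro g hg
        rw [← Nat.card_eq_fintype_card]
        exact hfix g (Finset.ne_of_mem_erase hg)
  have hkey : ∑ ω, ((n : ℤ) - m ω) = 2 * (n - 1) := by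
    rw [Finset.sum_sub_distrib, ← Nat.cast_sum Finset.univ m, ← hC']
    have : (Nat.card X : ℤ) + 2 * (n - 1) = Fintype.card Ω * n := by
      rw [← Nat.cast_mul, ← hB']
      push_cast [Nat.one_le_iff_ne_zero.2 hnpos.ne']
      ring
    rw [Finset.sum_const, Finset.card_univ, nsmul_eq_mul]
    linarith
  have hle : ∀ ω, (m ω : ℤ) ≤ n := fun ω => by
    have := Nat.le_of_dvd hnpos (Dvd.intro_left _ (hem ω)); exact_mod_cast this
  let T : Finset Ω := Finset.univ.filter fun ω => 2 ≤ e ω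
  have hT : ∑ ω ∈ T, ((n : ℤ) - m ω) = 2 * (n - 1) := by
    rw [← hkey]
    apply Finset.sum_subset (Finset.subset_univ _)
    intro ω _ hω
    have h1 : e ω = 1 := by
      have := hepos ω
      simp [T] at hω
      omega
    have := hem ω
    rw [h1, one_mul] at this
    rw [this]; ring
  have hhalf : ∀ ω ∈ T, (n : ℤ) ≤ 2 * ((n : ℤ) - m ω) := by
    intro ω hω
    simp only [T, Finset.mem_filter] at hω
    have := Nat.mul_le_mul_right (m ω) hω.2
    rw [hem ω] at this
    have : 2 * (m ω : ℤ) ≤ n := by exact_mod_cast this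
    linarith
  have hT4 : T.card < 4 := by
    by_contra h
    push Not at h
    have h1 := Finset.card_nsmul_le_sum T (fun ω => 2 * ((n : ℤ) - m ω)) n hhalf
    rw [← Finset.mul_sum, hT, nsmul_eq_mul] at h1
    have : (4 : ℤ) ≤ T.card := by exact_mod_cast h
    have : (0 : ℤ) < n := by exact_mod_cast hnpos
    nlinarith
  have hT2 : 2 < T.card := by
    by_contra h
    push Not at h
    have h1 := Finset.sum_le_card_nsmul T (fun ω => ((n : ℤ) - m ω)) (n - 3)
      (fun ω _ => by have := hm3 ω; have : (3 : ℤ) ≤ m ω := by exact_mod_cast this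
                     linarith)
    rw [hT, nsmul_eq_mul] at h1
    have h2 : (T.card : ℤ) ≤ 2 := by exact_mod_cast h
    have h4 : (0 : ℤ) ≤ T.card := by positivity
    have : (2 : ℤ) ≤ n := by
      have : 2 ≤ n := by omega
      exact_mod_cast this
    by_cases h3 : (n : ℤ) ≤ 3 <;> nlinarith
  obtain ⟨a, b, c, hab, hac, hbc, hTe⟩ := Finset.card_eq_three.1 (show T.card = 3 by omega)
  rw [hTe, Finset.sum_insert (by simp [hab, hac]), Finset.sum_insert (by simp [hbc]),
    Finset.sum_singleton] at hT
  exact arith_main n (m a) (m b) (m c) (e a) (e b) (e c) (hem a) (hem b) (hem c) (by omega)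
    (hm3 a) (hm3 b) (hm3 c)

end AbstractGroups

section FiniteMatrices

open scoped OnePoint

theorem stab_infty_solvable {K : Type*} [Field K] [DecidableEq K] :
    Group.IsSolvable (MulAction.stabilizer (GL (Fin 2) K) (∞ : OnePoint K)) := by
  let f : MulAction.stabilizer (GL (Fin 2) K) (∞ : OnePoint K) →* K × K :=
    { toFun := fun g => (g.1 0 0, g.1 1 1)
      map_one' := by simp
      map_mul' := by
        rintro ⟨g, hg⟩ ⟨h, hh⟩
        rw [MulAction.mem_stabilizer_iff, OnePoint.smul_infty_eq_self_iff] at hg hh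
        simp [Matrix.mul_apply, Fin.sum_univ_two, hg, hh] }
  have hker : Group.IsSolvable f.toHomUnits.ker := by
    apply Group.isSolvable_of_comm
    rintro ⟨⟨g, hg⟩, hg'⟩ ⟨⟨h, hh⟩, hh'⟩
    rw [MonoidHom.mem_ker, Units.ext_iff, MonoidHom.coe_toHomUnits] at hg' hh'
    rw [MulAction.mem_stabilizer_iff, OnePoint.smul_infty_eq_self_iff] at hg hh
    have h1 : g 0 0 = 1 := congrArg Prod.fst hg'
    have h2 : g 1 1 = 1 := congrArg Prod.snd hg'
    have h3 : h 0 0 = 1 := congrArg Prod.fst hh'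
    have h4 : h 1 1 = 1 := congrArg Prod.snd hh'
    apply Subtype.ext
    apply Subtype.ext
    show g * h = h * g
    ext i j
    fin_cases i <;> fin_cases j <;>
      simp [Matrix.mul_apply, Fin.sum_univ_two, hg, hh, h1, h2, h3, h4, add_comm]
  exact Group.isSolvable_of_ker_le_range f.toHomUnits.ker.subtype f.toHomUnits (by simp)

theorem exists_smul_infty {K : Type*} [Field K] [DecidableEq K] (p : OnePoint K) :
    ∃ h : GL (Fin 2) K, h • (∞ : OnePoint K) = p := by
  induction p using OnePoint.rec with
  | infty => exact ⟨1, one_smul _ _⟩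
  | coe x =>
    refine ⟨Matrix.GeneralLinearGroup.mkOfDetNeZero !![x, -1; 1, 0] (by simp), ?_⟩
    rw [OnePoint.smul_infty_eq_ite]
    simp [Matrix.GeneralLinearGroup.mkOfDetNeZero]

theorem stab_solvable {K : Type*} [Field K] [DecidableEq K] (p : OnePoint K) :
    Group.IsSolvable (MulAction.stabilizer (GL (Fin 2) K) p) := by
  obtain ⟨h, rfl⟩ := exists_smul_infty p
  have := stab_infty_solvable (K := K)
  have e := MulAction.stabilizerEquivStabilizer (G := GL (Fin 2) K) (a := (∞ : OnePoint K))
    (b := h • (∞ : OnePoint K)) (g := h) rfl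
  exact Group.isSolvable_of_surjective (f := e.toMonoidHom) e.surjective

/-- A scalar matrix. -/
def IsScal {K : Type*} [CommRing K] (g : GL (Fin 2) K) : Prop :=
  g 0 1 = 0 ∧ g 1 0 = 0 ∧ g 0 0 = g 1 1

theorem IsScal.central {K : Type*} [CommRing K] {g : GL (Fin 2) K} (hg : IsScal g)
    (h : GL (Fin 2) K) : g * h = h * g := by
  obtain ⟨h1, h2, h3⟩ := hg
  ext i j
  fin_cases i <;> fin_cases j <;>
    simp [Matrix.mul_apply, Fin.sum_univ_two, h1, h2, h3, mul_comm]

theorem IsScal.smul_eq {K : Type*} [Field K] [DecidableEq K] {g : GL (Fin 2) K} (hg : IsScal g)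
    (p : OnePoint K) : g • p = p := by
  obtain ⟨h1, h2, h3⟩ := hg
  have hd : g 1 1 ≠ 0 := by
    intro h
    apply g.det_ne_zero
    rw [Matrix.det_fin_two]
    simp [h1, h2, h3, h]
  induction p using OnePoint.rec with
  | infty => exact OnePoint.smul_infty_eq_self_iff.2 h2
  | coe x => rw [OnePoint.smul_some_eq_ite]; simp [h1, h2, h3, hd]

theorem isScal_of_smul {K : Type*} [Field K] [DecidableEq K] {g : GL (Fin 2) K}
    (hg : ∀ p : OnePoint K, g • p = p) : IsScal g := by
  have h2 : g 1 0 = 0 := OnePoint.smul_infty_eq_self_iff.1 (hg ∞)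
  have hd : g 1 1 ≠ 0 := by
    intro h
    apply g.det_ne_zero
    rw [Matrix.det_fin_two]
    simp [h2, h]
  have h0 := hg ((0 : K) : OnePoint K)
  have h1 := hg ((1 : K) : OnePoint K)
  rw [OnePoint.smul_some_eq_ite] at h0 h1
  simp only [h2, hd, zero_mul, mul_zero, zero_add, if_false, OnePoint.coe_eq_coe, mul_one] at h0 h1
  have h3 : g 0 1 = 0 := by simpa [hd] using h0
  refine ⟨h3, h2, ?_⟩
  rw [h3, add_zero, div_eq_one_iff_eq hd] at h1
  exact h1

theorem pow_scal_add_nilp {K : Type*} [Field K] (c : K) (N : Matrix (Fin 2) (Fin 2) K)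
    (hN : N * N = 0) (m : ℕ) :
    (c • (1 : Matrix (Fin 2) (Fin 2) K) + N) ^ (m + 1)
      = c ^ (m + 1) • (1 : Matrix (Fin 2) (Fin 2) K) + (((m + 1 : ℕ) : K) * c ^ m) • N := by
  induction m with
  | zero => simp
  | succ m ih =>
    rw [pow_succ, ih]
    simp only [mul_add, add_mul, mul_one, one_mul, smul_mul_assoc,
      mul_smul_comm, hN, smul_zero, add_zero]
    rw [smul_add, smul_smul, smul_smul, add_assoc, ← add_smul]
    congr 2
    · ring
    · push_cast; ring

theorem card_fixedBy {K : Type*} [Field K] [DecidableEq K] (g : GL (Fin 2) K) (l μ : K)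
    (ht : g 0 0 + g 1 1 = l + μ) (hd : g 0 0 * g 1 1 - g 0 1 * g 1 0 = l * μ)
    (hs : ¬ IsScal g) (m : ℕ) (hm : (m : K) ≠ 0) (hg : g ^ m = 1) :
    Nat.card (MulAction.fixedBy (OnePoint K) g) = 2 := by
  have hdet : l * μ ≠ 0 := by
    rw [← hd, ← Matrix.det_fin_two]; exact g.det_ne_zero
  have hne : l ≠ μ := by
    rintro rfl
    apply hs
    obtain ⟨m, rfl⟩ : ∃ k, m = k + 1 := Nat.exists_eq_succ_of_ne_zero (by rintro rfl; simp at hm)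
    set N : Matrix (Fin 2) (Fin 2) K := g.1 - l • 1 with hN
    have hNN : N * N = 0 := by
      ext i j
      fin_cases i <;> fin_cases j <;> simp [hN, Matrix.mul_apply, Fin.sum_univ_two]
      · linear_combination (g 0 0) * ht - hd
      · linear_combination (g 0 1) * ht
      · linear_combination (g 1 0) * ht
      · linear_combination (g 1 1) * ht - hd
    have h1 := pow_scal_add_nilp l N hNN m
    have h2 : l • (1 : Matrix (Fin 2) (Fin 2) K) + N = g.1 := by simp [hN]
    have h3 : g.1 ^ (m + 1) = 1 := by
      rw [← Units.val_pow_eq_pow_val, hg]; rfl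
    rw [h2, h3] at h1
    have hl : ((m + 1 : ℕ) : K) * l ^ m ≠ 0 :=
      mul_ne_zero hm (pow_ne_zero _ (left_ne_zero_of_mul hdet))
    have e01 := congrFun (congrFun h1 0) 1
    have e10 := congrFun (congrFun h1 1) 0
    have e00 := congrFun (congrFun h1 0) 0
    have e11 := congrFun (congrFun h1 1) 1
    simp only [Matrix.add_apply, Matrix.smul_apply, Matrix.one_apply, smul_eq_mul] at e01 e10 e00 e11
    have f01 : N 0 1 = 0 := by
      have : ((m + 1 : ℕ) : K) * l ^ m * N 0 1 = 0 := by simpa using e01.symm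
      exact (mul_eq_zero.1 this).resolve_left hl
    have f10 : N 1 0 = 0 := by
      have : ((m + 1 : ℕ) : K) * l ^ m * N 1 0 = 0 := by simpa using e10.symm
      exact (mul_eq_zero.1 this).resolve_left hl
    have f : N 0 0 = N 1 1 := by
      apply mul_left_cancel₀ hl
      have := e00.symm.trans (by simpa using e11)
      simpa using this
    refine ⟨by simpa [hN] using f01, by simpa [hN] using f10, by simpa [hN] using f⟩
  rw [Nat.card_coe_set_eq, Set.ncard_eq_two]
  by_cases hc : g 1 0 = 0
  · have hda : g 1 1 - g 0 0 ≠ 0 := by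
      intro h
      apply hne
      have : (l - μ) ^ 2 = 0 := by
        rw [hc] at hd
        have h' : g 1 1 = g 0 0 := by linear_combination h
        rw [h'] at ht hd
        linear_combination (-(l + μ) - 2 * g 0 0) * ht + 4 * hd
      exact sub_eq_zero.1 (pow_eq_zero_iff (two_ne_zero)|>.1 this)
    have hd0 : g 1 1 ≠ 0 := by
      intro h
      apply g.det_ne_zero
      rw [Matrix.det_fin_two]
      simp [hc, h]
    refine ⟨∞, ((g 0 1 / (g 1 1 - g 0 0) : K) : OnePoint K), OnePoint.infty_ne_coe _, ?_⟩
    ext p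
    rw [MulAction.mem_fixedBy]
    induction p using OnePoint.rec with
    | infty => simp [OnePoint.smul_infty_eq_self_iff, hc]
    | coe x =>
      rw [OnePoint.smul_some_eq_ite]
      simp only [hc, hd0, zero_mul, zero_add, if_false, OnePoint.coe_eq_coe, Set.mem_insert_iff,
        OnePoint.coe_ne_infty, false_or, Set.mem_singleton_iff]
      rw [div_eq_iff hd0, eq_div_iff hda]
      constructor <;> intro h <;> linear_combination -h
  · refine ⟨(((l - g 1 1) / g 1 0 : K) : OnePoint K), (((μ - g 1 1) / g 1 0 : K) : OnePoint K),
      ?_, ?_⟩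
    · rw [Ne, OnePoint.coe_eq_coe, div_left_inj' hc, sub_left_inj]
      exact hne
    ext p
    rw [MulAction.mem_fixedBy]
    induction p using OnePoint.rec with
    | infty => simp [OnePoint.smul_infty_eq_self_iff, hc]
    | coe x =>
      rw [← Matrix.GeneralLinearGroup.fixpointPolynomial_aeval_eq_zero_iff]
      simp only [Matrix.GeneralLinearGroup.fixpointPolynomial, Set.mem_insert_iff,
        Set.mem_singleton_iff, OnePoint.coe_eq_coe]
      rw [eq_div_iff hc, eq_div_iff hc]
      simp only [map_sub, map_mul, map_add, Polynomial.aeval_C, Polynomial.aeval_X, map_pow,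
        Algebra.algebraMap_self_apply]
      have key : g 1 0 * (g 1 0 * x ^ 2 + (g 1 1 - g 0 0) * x - g 0 1)
          = (x * g 1 0 - (l - g 1 1)) * (x * g 1 0 - (μ - g 1 1)) := by
        linear_combination (-(x * g 1 0 + g 1 1)) * ht + hd
      constructor
      · intro h
        rw [h, mul_zero, eq_comm, mul_eq_zero, sub_eq_zero, sub_eq_zero] at key
        exact key
      · intro h
        have : g 1 0 * (g 1 0 * x ^ 2 + (g 1 1 - g 0 0) * x - g 0 1) = 0 := by
          rw [key]
          rcases h with h | h <;> simp [h]
        exact (mul_eq_zero.1 this).resolve_left hc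

end FiniteMatrices

section CoprimeCase

theorem surj_on_ker {A C S : Type*} [Group A] [CommGroup C] [Group S] (hsimple : IsSimpleGroup S)
    (hnonab : ∃ a b : S, a * b ≠ b * a) (f : A →* S) (hf : Function.Surjective f) (d : A →* C) :
    ∀ s, ∃ a, d a = 1 ∧ f a = s := by
  rcases map_normal_bot_or_top hsimple f hf d.ker with h | h
  · exfalso
    have hle : d.ker ≤ f.ker := by
      rwa [Subgroup.map_eq_bot_iff] at h
    obtain ⟨h', hs, -⟩ := lift_to_range f hf d hle
    obtain ⟨a, b, hab⟩ := hnonab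
    obtain ⟨x, rfl⟩ := hs a
    obtain ⟨y, rfl⟩ := hs b
    apply hab
    rw [← map_mul, ← map_mul, mul_comm]
  · intro s
    have : s ∈ d.ker.map f := by rw [h]; trivial
    obtain ⟨a, ha, rfl⟩ := this
    exact ⟨a, ha, rfl⟩

theorem split_aux {F k : Type} [Field F] [Field k] (i : F →+* k) (P : Polynomial F) (hP : P ≠ 0)
    (h1 : (P.map i).Splits) (g : GL (Fin 2) F) (hdvd : g.1.charpoly ∣ P) :
    ∃ l μ : k, i (g 0 0) + i (g 1 1) = l + μ ∧
        i (g 0 0) * i (g 1 1) - i (g 0 1) * i (g 1 0) = l * μ := by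
  have h2 := h1.of_dvd (by simpa using hP) (Polynomial.map_dvd i hdvd)
  obtain ⟨l, hl⟩ := h2.exists_eval_eq_zero (by
    rw [Polynomial.degree_map, Matrix.charpoly_degree_eq_dim]; simp)
  rw [Matrix.charpoly_fin_two, Matrix.trace_fin_two, Matrix.det_fin_two] at hl
  simp at hl
  refine ⟨l, i (g 0 0) + i (g 1 1) - l, by ring, ?_⟩
  linear_combination hl

theorem exists_sf {F : Type} [Field F] [Finite F] (P : Polynomial F) :
    ∃ (k : Type) (_ : Field k) (_ : Finite k) (i : F →+* k), (P.map i).Splits := by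
  have h : Finite P.SplittingField := Module.finite_of_finite F
  exact ⟨P.SplittingField, inferInstance, h, algebraMap F P.SplittingField,
    Polynomial.SplittingField.splits P⟩

theorem exists_P {F : Type} [Field F] {G : Type} [Finite G] (q : G → Polynomial F) (hq : ∀ g, (q g).Monic) :
    ∃ P : Polynomial F, P ≠ 0 ∧ ∀ g, q g ∣ P := by
  have : Fintype G := Fintype.ofFinite _
  exact ⟨∏ g : G, q g, Finset.prod_ne_zero_iff.2 fun g _ => (hq g).ne_zero, fun g => Finset.dvd_prod_of_mem q (Finset.mem_univ g)⟩

theorem exists_charP {F : Type} [Field F] [Finite F]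
    (G : Subgroup (GL (Fin 2) F)) : ∃ P : Polynomial F, P ≠ 0 ∧ ∀ g ∈ G, g.1.charpoly ∣ P := by
  obtain ⟨P, h1, h2⟩ := exists_P (fun g : G => (g.1.1).charpoly) (fun g => Matrix.charpoly_monic _)
  exact ⟨P, h1, fun g hg => h2 ⟨g, hg⟩⟩

theorem exists_split_field {F : Type} [Field F] [Finite F]
    (G : Subgroup (GL (Fin 2) F)) :
    ∃ (k : Type) (_ : Field k) (_ : Finite k) (i : F →+* k),
      ∀ g ∈ G, ∃ l μ : k, i (g 0 0) + i (g 1 1) = l + μ ∧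
        i (g 0 0) * i (g 1 1) - i (g 0 1) * i (g 1 0) = l * μ := by
  obtain ⟨P, hP, hd⟩ := exists_charP G
  obtain ⟨k, ik, fk, i, hi⟩ := exists_sf P
  exact ⟨k, ik, fk, i, fun g hg => split_aux _ P hP hi g (hd g hg)⟩

theorem coprime_case (ℓ : ℕ) [Fact ℓ.Prime] (hodd : ℓ ≠ 2)
    (G N : Subgroup (GL (Fin 2) (ZMod ℓ))) (hNG : N ≤ G)
    (hdet : G.map Matrix.GeneralLinearGroup.det = ⊤) (hcop : ¬ ℓ ∣ Nat.card G)
    {S : Type*} [Group S] (hsimple : IsSimpleGroup S)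
    (hnonab : ∃ a b : S, a * b ≠ b * a)
    (f : N →* S) (hf : Function.Surjective f) : False := by
  classical
  have hSfin : Finite S := Finite.of_surjective f hf
  obtain ⟨k, _, _, i, hsplit⟩ := exists_split_field G
  have hchar : CharP k ℓ := charP_of_injective_ringHom i.injective ℓ
  let ι : GL (Fin 2) (ZMod ℓ) →* GL (Fin 2) k := Matrix.GeneralLinearGroup.map i
  let τ : GL (Fin 2) k →* Equiv.Perm (OnePoint k) := MulAction.toPermHom _ _
  let ρ : GL (Fin 2) (ZMod ℓ) →* Equiv.Perm (OnePoint k) := τ.comp ι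
  have hscal : ∀ g, IsScal (ι g) ↔ IsScal g := by
    intro g
    simp only [IsScal, ι, Matrix.GeneralLinearGroup.map_apply, map_eq_zero, i.injective.eq_iff]
  have hker : ∀ g, ρ g = 1 ↔ IsScal g := by
    intro g
    rw [← hscal]
    constructor
    · intro h
      exact isScal_of_smul fun p => Equiv.ext_iff.1 h p
    · intro h
      exact Equiv.ext fun p => h.smul_eq p
  -- the restriction of `f` to the elements of determinant one
  have hsurj := surj_on_ker hsimple hnonab f hf (Matrix.GeneralLinearGroup.det.comp N.subtype)
  -- descend `f` to the image of `H`
  let H : Subgroup (GL (Fin 2) (ZMod ℓ)) := N ⊓ Matrix.GeneralLinearGroup.det.ker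
  let fH : H →* S := f.comp (Subgroup.inclusion inf_le_left)
  have hfH : Function.Surjective fH := by
    intro s
    obtain ⟨a, ha, rfl⟩ := hsurj s
    exact ⟨⟨a.1, a.2, ha⟩, rfl⟩
  obtain ⟨q, hq, -⟩ := lift_to_range fH hfH (ρ.comp H.subtype) (by
    intro x hx
    rw [MonoidHom.mem_ker] at hx ⊢
    exact central_to_one hsimple hnonab fH hfH x
      fun a => Subtype.ext (((hker _).1 hx).central _))
  have hrange : (ρ.comp H.subtype).range = H.map ρ := by
    rw [MonoidHom.range_comp, Subgroup.range_subtype]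
  have hcardS : Nat.card S ∣ Nat.card (H.map ρ) := by
    rw [← hrange]; exact Subgroup.card_dvd_of_surjective q hq
  have hHG : H.map ρ ≤ G.map ρ := Subgroup.map_mono (inf_le_left.trans hNG)
  have hcardS' : Nat.card S ∣ Nat.card (G.map ρ) := hcardS.trans (Subgroup.card_dvd_of_le hHG)
  have hfin1 : Finite (OnePoint k) := inferInstanceAs (Finite (Option k))
  have hfin2 : Finite (G.map ρ) := Finite.of_surjective (ρ.subgroupMap G) (ρ.subgroupMap_surjective G)
  have hklein := klein_count (Γ := G.map ρ) (X := OnePoint k) (by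
    rintro ⟨_, g, hg, rfl⟩ hne
    obtain ⟨l, μ, h1, h2⟩ := hsplit g hg
    have hns : ¬ IsScal g := by
      intro h
      exact hne (Subtype.ext ((hker g).2 h))
    have := card_fixedBy (ι g) l μ h1 h2 (by rwa [hscal]) (Nat.card G)
      (by rwa [Ne, CharP.cast_eq_zero_iff k ℓ]) (by
        rw [← map_pow]
        have : g ^ Nat.card G = 1 := by
          have := pow_card_eq_one' (x := (⟨g, hg⟩ : G))
          exact congrArg Subtype.val this
        rw [this, map_one])
    exact this) (by
    intro p
    have hs := stab_solvable p
    let T := (MulAction.stabilizer (GL (Fin 2) k) p).map τ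
    have hT : Group.IsSolvable T := Group.isSolvable_of_surjective
      (f := τ.subgroupMap (MulAction.stabilizer (GL (Fin 2) k) p)) (τ.subgroupMap_surjective _)
    let e : MulAction.stabilizer (G.map ρ) p →* T :=
      ((G.map ρ).subtype.comp (MulAction.stabilizer (G.map ρ) p).subtype).codRestrict T (by
        rintro ⟨⟨_, g, hg, rfl⟩, hx⟩
        exact ⟨ι g, hx, rfl⟩)
    refine Group.isSolvable_of_isSolvable_injective (f := e) ?_
    intro x y hxy
    have h3 : (e x).1 = (e y).1 := congrArg (fun t : T => t.1) hxy
    exact Subtype.ext (Subtype.ext h3))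
  rcases hklein with h | h | h | h
  · apply simple_not_solvable hsimple hnonab
    have h1 : Group.IsSolvable (H.map ρ) :=
      Group.isSolvable_of_isSolvable_injective (Subgroup.inclusion_injective hHG)
    rw [← hrange] at h1
    exact Group.isSolvable_of_surjective hq
  · rw [h] at hcardS'
    exact card_dvd_false hsimple hnonab 2 hcardS'
  · rw [h] at hcardS'
    exact card_dvd_false hsimple hnonab 3 hcardS'
  · let Sq : Subgroup (ZMod ℓ)ˣ := (powMonoidHom 2).range
    have hSq : Sq.index = 2 := by
      rw [IsCyclic.index_powMonoidHom_range, Nat.gcd_eq_right_iff_dvd, Nat.card_eq_fintype_card,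
        ZMod.card_units]
      exact ((Fact.out : ℓ.Prime).even_sub_one hodd).two_dvd
    let Q : Subgroup G := Sq.comap (Matrix.GeneralLinearGroup.det.comp G.subtype)
    have hQ : Q.index = 2 := by
      refine (Subgroup.index_comap_of_surjective Sq ?_).trans hSq
      intro u
      have : u ∈ G.map Matrix.GeneralLinearGroup.det := by rw [hdet]; trivial
      obtain ⟨g, hg, rfl⟩ := this
      exact ⟨⟨g, hg⟩, rfl⟩
    let ρ' : G →* Equiv.Perm (OnePoint k) := ρ.comp G.subtype
    have hρ' : ρ'.range = G.map ρ := by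
      rw [MonoidHom.range_comp, Subgroup.range_subtype]
    have hkQ : ρ'.rangeRestrict.ker ≤ Q := by
      rw [MonoidHom.ker_rangeRestrict]
      intro x hx
      obtain ⟨h1, h2, h3⟩ := (hker _).1 hx
      have hne : x.1 0 0 ≠ 0 := by
        intro h0
        apply x.1.det_ne_zero
        rw [Matrix.det_fin_two]
        simp only [Subgroup.subtype_apply] at h1
        rw [h0, h1]; simp
      refine ⟨Units.mk0 _ hne, ?_⟩
      ext
      simp only [Subgroup.subtype_apply] at h1 h2 h3
      simp [Matrix.det_fin_two, h1, ← h3, sq]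
    have hidx := Subgroup.index_map_eq Q ρ'.rangeRestrict_surjective hkQ
    have hc := Subgroup.card_mul_index (Q.map ρ'.rangeRestrict)
    have hcr : Nat.card ρ'.range = 60 := by rw [hρ']; exact h
    rw [hidx, hQ, hcr] at hc
    have hc' : Nat.card (Q.map ρ') = 30 := by
      have : Q.map ρ' = (Q.map ρ'.rangeRestrict).map ρ'.range.subtype := by
        rw [Subgroup.map_map]; rfl
      rw [this, Subgroup.card_map_of_injective ρ'.range.subtype_injective]
      omega
    have hle : H.map ρ ≤ Q.map ρ' := by
      rintro _ ⟨x, hx, rfl⟩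
      refine ⟨⟨x, hNG hx.1⟩, ?_, rfl⟩
      show Matrix.GeneralLinearGroup.det x ∈ Sq
      rw [show Matrix.GeneralLinearGroup.det x = 1 from hx.2]
      exact one_mem _
    have hd := hcardS.trans (Subgroup.card_dvd_of_le hle)
    rw [hc'] at hd
    exact squarefree_card_false hsimple hnonab
      (Squarefree.squarefree_of_dvd hd squarefree_thirty)

end CoprimeCase

section UnipotentCase

open scoped OnePoint

theorem sl2_of_upper {F : Type*} [Field F] (G : Subgroup (GL (Fin 2) F))
    (hU : ∀ t x, x 0 0 = 1 → x 0 1 = t → x 1 0 = 0 → x 1 1 = 1 → x ∈ G)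
    (k : GL (Fin 2) F) (hk : k ∈ G) (hk0 : k 1 0 ≠ 0) (A : SL(2, F)) :
    (A : GL (Fin 2) F) ∈ G := by
  let E (t : F) : GL (Fin 2) F := GeneralLinearGroup.mkOfDetNeZero !![1, t; 0, 1] (by simp)
  have hEv (t : F) : (E t).1 = !![1, t; 0, 1] := rfl
  have hE (t : F) : E t ∈ G := hU t _ (by simp [hEv]) (by simp [hEv]) (by simp [hEv]) (by simp [hEv])
  obtain ⟨w, hwdef⟩ : ∃ w, w = E (-k 0 0 / k 1 0) * k * E (-k 1 1 / k 1 0) := ⟨_, rfl⟩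
  have hw : w ∈ G := by rw [hwdef]; exact mul_mem (mul_mem (hE _) hk) (hE _)
  have h00 : w 0 0 = 0 := by
    simp [hwdef, hEv, Matrix.mul_apply, Fin.sum_univ_two, Matrix.vecMul, dotProduct]; field_simp; ring
  have h11 : w 1 1 = 0 := by
    simp [hwdef, hEv, Matrix.mul_apply, Fin.sum_univ_two, Matrix.vecMul, dotProduct]; field_simp; ring
  have h10 : w 1 0 = k 1 0 := by
    simp [hwdef, hEv, Matrix.mul_apply, Fin.sum_univ_two, Matrix.vecMul, dotProduct]
  refine SL2.transvection_induction (fun A => (A : GL (Fin 2) F) ∈ G) ?_ ?_ A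
  · intro i j hij c
    fin_cases i <;> fin_cases j
    · exact absurd rfl hij
    · apply hU c <;> simp [SpecialLinearGroup.transvection_coe]
    · obtain ⟨T, hT⟩ : ∃ T : GL (Fin 2) F, T = ((SpecialLinearGroup.transvection hij c : SL(2, F)) : GL (Fin 2) F) := ⟨_, rfl⟩
      have : T * w = w * E (c * w 0 1 / k 1 0) := by
        ext i j
        fin_cases i <;> fin_cases j <;>
          simp [hT, hEv, Matrix.mul_apply, Fin.sum_univ_two, SpecialLinearGroup.transvection_coe, h00, h11, h10]
        field_simp
      have h2 : T = w * E (c * w 0 1 / k 1 0) * w⁻¹ := by rw [← this]; group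
      show _ ∈ G
      rw [← hT, h2]
      exact mul_mem (mul_mem hw (hE _)) (inv_mem hw)
    · exact absurd rfl hij
  · intro A B hA hB
    have : ((A * B : SL(2, F)) : GL (Fin 2) F) = A * B := by simp
    show _ ∈ G
    rw [this]
    exact mul_mem hA hB

theorem unipotent_aux (ℓ : ℕ) [Fact ℓ.Prime] (g : GL (Fin 2) (ZMod ℓ)) (hg : g ^ ℓ = 1) :
    g 0 0 + g 1 1 = 2 ∧ g 0 0 * g 1 1 - g 0 1 * g 1 0 = 1 := by
  have h1 : (g.1 - 1) ^ ℓ = 0 := by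
    rw [sub_pow_char_of_commute ℓ (Commute.one_right _), one_pow, ← Units.val_pow_eq_pow_val, hg]
    simp
  have h2 : IsNilpotent (g.1 - 1) := ⟨ℓ, h1⟩
  have h3 := (Matrix.isNilpotent_trace_of_isNilpotent h2).eq_zero
  have h4 : (g.1 - 1).det = 0 := by
    have := congrArg Matrix.det h1
    rw [Matrix.det_pow, Matrix.det_zero] at this
    exact pow_eq_zero_iff ((Fact.out : ℓ.Prime).ne_zero) |>.1 this
  rw [Matrix.trace_fin_two] at h3
  rw [Matrix.det_fin_two] at h4
  simp at h3 h4
  constructor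
  · linear_combination h3
  · linear_combination h4 + h3

theorem sl2_of_dvd (ℓ : ℕ) [Fact ℓ.Prime] (G : Subgroup (GL (Fin 2) (ZMod ℓ)))
    (hdvd : ℓ ∣ Nat.card G) :
    Group.IsSolvable G ∨ ∀ A : SL(2, ZMod ℓ), (A : GL (Fin 2) (ZMod ℓ)) ∈ G := by
  obtain ⟨⟨g, hgG⟩, hgo⟩ := exists_prime_orderOf_dvd_card' ℓ hdvd
  have hgne : g ≠ 1 := by
    rintro rfl
    have : orderOf (1 : G) = ℓ := hgo
    rw [orderOf_one] at this
    exact (Fact.out : ℓ.Prime).one_lt.ne this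
  have hgp : g ^ ℓ = 1 := by
    have := pow_orderOf_eq_one (⟨g, hgG⟩ : G)
    rw [hgo] at this
    exact congrArg Subtype.val this
  obtain ⟨p, hp⟩ : ∃ p : OnePoint (ZMod ℓ), g • p = p := by
    obtain ⟨ht, hd⟩ := unipotent_aux ℓ g hgp
    by_cases hc : g 1 0 = 0
    · exact ⟨∞, OnePoint.smul_infty_eq_self_iff.2 hc⟩
    · refine ⟨(((g 0 0 - 1) / g 1 0 : ZMod ℓ) : OnePoint (ZMod ℓ)), ?_⟩
      rw [← Matrix.GeneralLinearGroup.fixpointPolynomial_aeval_eq_zero_iff]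
      simp [Matrix.GeneralLinearGroup.fixpointPolynomial]
      field_simp
      linear_combination hd - ht
  obtain ⟨h, rfl⟩ := exists_smul_infty p
  let c : GL (Fin 2) (ZMod ℓ) ≃* GL (Fin 2) (ZMod ℓ) := MulAut.conj h⁻¹
  let G' := G.map c.toMonoidHom
  obtain ⟨u, hudef⟩ : ∃ u, u = c g := ⟨_, rfl⟩
  have hu' : u = h⁻¹ * g * h := by simp [hudef, c]
  have huG : u ∈ G' := ⟨g, hgG, hudef.symm⟩
  have hup : u ^ ℓ = 1 := by rw [hudef, ← map_pow, hgp, map_one]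
  have hune : u ≠ 1 := by rw [hudef]; simpa using hgne
  have hu10 : u 1 0 = 0 := by
    rw [← OnePoint.smul_infty_eq_self_iff, hu', mul_smul, mul_smul, hp, inv_smul_smul]
  obtain ⟨ht, hd⟩ := unipotent_aux ℓ u hup
  rw [hu10, mul_zero, sub_zero] at hd
  have hu00 : u 0 0 = 1 := by
    have : (u 0 0 - 1) ^ 2 = 0 := by linear_combination (u 0 0) * ht - hd
    exact sub_eq_zero.1 (pow_eq_zero_iff two_ne_zero |>.1 this)
  have hu11 : u 1 1 = 1 := by linear_combination ht - hu00
  have hu01 : u 0 1 ≠ 0 := by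
    intro h0
    apply hune
    ext i j
    fin_cases i <;> fin_cases j <;> simp [h0, hu00, hu11, hu10]
  have hpow : ∀ n : ℕ, (u ^ n).1 = !![1, n * u 0 1; 0, 1] := by
    intro n
    induction n with
    | zero => simp [Matrix.one_fin_two]
    | succ n ih =>
      rw [pow_succ, Units.val_mul, ih]
      ext i j
      fin_cases i <;> fin_cases j <;>
        simp [Matrix.mul_apply, Fin.sum_univ_two, hu00, hu11, hu10]
      ring
  have hU : ∀ t x, x 0 0 = 1 → x 0 1 = t → x 1 0 = 0 → x 1 1 = 1 → x ∈ G' := by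
    intro t x h1 h2 h3 h4
    have : x = u ^ (t / u 0 1).val := by
      ext i j
      rw [hpow]
      fin_cases i <;> fin_cases j <;> simp [h1, h2, h3, h4, hu01]
    rw [this]
    exact pow_mem huG _
  by_cases hall : ∀ k ∈ G', k 1 0 = 0
  · left
    have hs := stab_infty_solvable (K := ZMod ℓ)
    have hle : G' ≤ MulAction.stabilizer (GL (Fin 2) (ZMod ℓ)) (∞ : OnePoint (ZMod ℓ)) := by
      intro k hk
      rw [MulAction.mem_stabilizer_iff, OnePoint.smul_infty_eq_self_iff]
      exact hall k hk
    have h1 : Group.IsSolvable G' :=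
      Group.isSolvable_of_isSolvable_injective (Subgroup.inclusion_injective hle)
    refine Group.isSolvable_of_isSolvable_injective (f := c.toMonoidHom.subgroupMap G) ?_
    intro x y hxy
    exact Subtype.ext (c.injective (congrArg (fun t : G' => t.1) hxy))
  · right
    push Not at hall
    obtain ⟨k, hk, hk0⟩ := hall
    have hSL := sl2_of_upper G' hU k hk hk0
    intro A
    have hdet : (c (A : GL (Fin 2) (ZMod ℓ))).1.det = 1 := by
      simp [c, Matrix.det_mul, mul_comm, mul_inv_cancel₀ h.det_ne_zero]
    obtain ⟨y, hy, hyx⟩ := hSL ⟨_, hdet⟩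
    have : c y = c A := by
      rw [show c y = _ from hyx]
      ext i j
      rfl
    rw [← c.injective this]
    exact hy

end UnipotentCase

section FiniteTheorem

open scoped commutatorElement

theorem three_ne_zero_zmod (ℓ : ℕ) (h5 : 5 ≤ ℓ) : (2 : ZMod ℓ) ^ 2 ≠ 1 := by
  intro h
  have h3 : ((3 : ℕ) : ZMod ℓ) = 0 := by push_cast; linear_combination h
  rw [ZMod.natCast_eq_zero_iff] at h3
  have := Nat.le_of_dvd (by norm_num) h3
  omega

theorem two_ne_zero_zmod (ℓ : ℕ) (h5 : 5 ≤ ℓ) : (2 : ZMod ℓ) ≠ 0 := by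
  intro h
  have h3 : ((2 : ℕ) : ZMod ℓ) = 0 := by push_cast; linear_combination h
  rw [ZMod.natCast_eq_zero_iff] at h3
  have := Nat.le_of_dvd (by norm_num) h3
  omega

theorem sl2_perfect (ℓ : ℕ) [Fact ℓ.Prime] (h5 : 5 ≤ ℓ) : commutator SL(2, ZMod ℓ) = ⊤ :=
  SL2.commutator_eq_top (two_ne_zero_zmod ℓ h5) (three_ne_zero_zmod ℓ h5)

theorem sl2_normal (ℓ : ℕ) [Fact ℓ.Prime] (h5 : 5 ≤ ℓ) (H : Subgroup SL(2, ZMod ℓ))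
    [hH : H.Normal] : H ≤ Subgroup.center SL(2, ZMod ℓ) ∨ H = ⊤ := by
  have hs : IsSimpleGroup PSL(2, ZMod ℓ) :=
    Matrix.ProjectiveSpecialLinearGroup.rank_two_simple (by rw [Nat.card_zmod]; omega)
  rcases map_normal_bot_or_top hs (QuotientGroup.mk' (Subgroup.center SL(2, ZMod ℓ)))
    (QuotientGroup.mk'_surjective _) H with h | h
  · left
    rwa [Subgroup.map_eq_bot_iff, QuotientGroup.ker_mk'] at h
  · right
    rw [eq_top_iff, ← sl2_perfect ℓ h5, commutator_def, Subgroup.commutator_le]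
    intro a _ b _
    have ha : (QuotientGroup.mk' (Subgroup.center SL(2, ZMod ℓ))) a ∈
      H.map (QuotientGroup.mk' (Subgroup.center SL(2, ZMod ℓ))) := by rw [h]; trivial
    obtain ⟨x, hx, hxa⟩ := ha
    have hz : x⁻¹ * a ∈ Subgroup.center SL(2, ZMod ℓ) := QuotientGroup.eq.1 hxa
    obtain ⟨z, hzdef⟩ : ∃ z, z = x⁻¹ * a := ⟨_, rfl⟩
    rw [← hzdef] at hz
    have ha : a = x * z := by rw [hzdef]; group
    have hzb := Subgroup.mem_center_iff.1 hz b
    have : ⁅a, b⁆ = x * (b * x⁻¹ * b⁻¹) := by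
      rw [commutatorElement_def, ha]
      calc x * z * b * (x * z)⁻¹ * b⁻¹ = x * (z * b) * z⁻¹ * x⁻¹ * b⁻¹ := by group
        _ = _ := by rw [← hzb]; group
    rw [this]
    exact mul_mem hx (hH.conj_mem _ (inv_mem hx) b)

theorem sl2_center (ℓ : ℕ) [Fact ℓ.Prime] (x : SL(2, ZMod ℓ))
    (hx : x ∈ Subgroup.center SL(2, ZMod ℓ)) : x = 1 ∨ x = -1 := by
  rw [Matrix.SpecialLinearGroup.mem_center_iff] at hx
  obtain ⟨r, hr, hrx⟩ := hx
  rw [Fintype.card_fin, sq_eq_one_iff] at hr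
  rcases hr with rfl | rfl
  · left
    apply Subtype.ext
    rw [← hrx]; simp
  · right
    apply Subtype.ext
    rw [← hrx, map_neg, map_one]
    simp

theorem finite_case (ℓ : ℕ) [Fact ℓ.Prime]
    (G N : Subgroup (GL (Fin 2) (ZMod ℓ))) (hNG : N ≤ G)
    (hdet : G.map Matrix.GeneralLinearGroup.det = ⊤)
    (hnorm : ∀ g ∈ G, ∀ n ∈ N, g * n * g⁻¹ ∈ N)
    {S : Type*} [Group S] (hsimple : IsSimpleGroup S)
    (hnonab : ∃ a b : S, a * b ≠ b * a)
    (f : N →* S) (hf : Function.Surjective f) :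
    5 ≤ ℓ ∧ (∀ A : SL(2, ZMod ℓ), (A : GL (Fin 2) (ZMod ℓ)) ∈ G) ∧
      ∃ φ : SL(2, ZMod ℓ) →* S, Function.Surjective φ ∧
        ∀ x : SL(2, ZMod ℓ), φ x = 1 ↔ x = 1 ∨ x = -1 := by
  have hSfin : Finite S := Finite.of_surjective f hf
  have hcard : Nat.card S ∣ Nat.card (GL (Fin 2) (ZMod ℓ)) :=
    (Subgroup.card_dvd_of_surjective f hf).trans (Subgroup.card_subgroup_dvd_card N)
  rw [Matrix.card_GL_field, Fin.prod_univ_two, ZMod.card] at hcard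
  have h2 : ℓ ≠ 2 := by
    rintro rfl
    exact card_dvd_false hsimple hnonab 1 (by simpa using hcard)
  have h3 : ℓ ≠ 3 := by
    rintro rfl
    exact card_dvd_false hsimple hnonab 4 (by simpa using hcard)
  have h5 : 5 ≤ ℓ := by
    have hp : ℓ.Prime := Fact.out
    have := hp.two_le
    by_contra hlt
    have : ℓ = 4 := by omega
    subst this
    exact absurd hp (by norm_num)
  have hdvd : ℓ ∣ Nat.card G := by
    by_contra h
    exact coprime_case ℓ h2 G N hNG hdet h hsimple hnonab f hf
  have hSL : ∀ A : SL(2, ZMod ℓ), (A : GL (Fin 2) (ZMod ℓ)) ∈ G := by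
    refine (sl2_of_dvd ℓ G hdvd).resolve_left fun h => ?_
    have h1 : Group.IsSolvable N :=
      Group.isSolvable_of_isSolvable_injective (Subgroup.inclusion_injective hNG)
    exact simple_not_solvable hsimple hnonab (Group.isSolvable_of_surjective hf)
  refine ⟨h5, hSL, ?_⟩
  let j : SL(2, ZMod ℓ) →* GL (Fin 2) (ZMod ℓ) := SpecialLinearGroup.toGL
  have hsurj := surj_on_ker hsimple hnonab f hf (Matrix.GeneralLinearGroup.det.comp N.subtype)
  have hlift : ∀ a : N, (Matrix.GeneralLinearGroup.det.comp N.subtype) a = 1 →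
      ∃ A : SL(2, ZMod ℓ), j A = a.1 := by
    intro a ha
    have : a.1.1.det = 1 := congrArg Units.val ha
    exact ⟨⟨_, this⟩, by ext; rfl⟩
  let H : Subgroup SL(2, ZMod ℓ) := N.comap j
  have hH : H.Normal := ⟨fun n hn g => by
    show j (g * n * g⁻¹) ∈ N
    rw [map_mul, map_mul, map_inv]
    exact hnorm _ (hSL g) _ hn⟩
  have hHtop : H = ⊤ := by
    refine (sl2_normal ℓ h5 H).resolve_left fun hc => ?_
    obtain ⟨a, b, hab⟩ := hnonab
    apply hab
    obtain ⟨x, hx, rfl⟩ := hsurj a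
    obtain ⟨y, hy, rfl⟩ := hsurj b
    obtain ⟨A, hA⟩ := hlift x hx
    obtain ⟨B, hB⟩ := hlift y hy
    have hAc : A ∈ Subgroup.center SL(2, ZMod ℓ) := hc (show j A ∈ N by rw [hA]; exact x.2)
    rw [← map_mul, ← map_mul]
    congr 1
    apply Subtype.ext
    show x.1 * y.1 = y.1 * x.1
    rw [← hA, ← hB, ← map_mul, ← map_mul, Subgroup.mem_center_iff.1 hAc]
  have hjN : ∀ A, j A ∈ N := fun A => by
    have : A ∈ H := by rw [hHtop]; trivial
    exact this
  let φ : SL(2, ZMod ℓ) →* S := f.comp (j.codRestrict N hjN)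
  have hφ : Function.Surjective φ := by
    intro s
    obtain ⟨x, hx, rfl⟩ := hsurj s
    obtain ⟨A, hA⟩ := hlift x hx
    exact ⟨A, congrArg f (Subtype.ext hA)⟩
  refine ⟨φ, hφ, fun x => ⟨fun hx => ?_, ?_⟩⟩
  · rcases sl2_normal ℓ h5 φ.ker with h | h
    · exact sl2_center ℓ x (h hx)
    · exfalso
      obtain ⟨a, b, hab⟩ := hnonab
      apply hab
      obtain ⟨x, rfl⟩ := hφ a
      obtain ⟨y, rfl⟩ := hφ b
      have hx : x ∈ φ.ker := by rw [h]; trivial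
      have hy : y ∈ φ.ker := by rw [h]; trivial
      rw [MonoidHom.mem_ker.1 hx, MonoidHom.mem_ker.1 hy]
  · rintro (rfl | rfl)
    · exact map_one _
    · apply central_to_one hsimple hnonab φ hφ
      intro a
      simp

end FiniteTheorem

section SerreAbstract

open scoped commutatorElement

/-- Products `∏ [x, g_x]` over a list with `g_x ∈ A`. -/
def CommProd {Q : Type*} [Group Q] (A : Set Q) : List Q → Set Q
  | [] => {1}
  | x :: l => {w | ∃ g ∈ A, ∃ u ∈ CommProd A l, w = ⁅x, g⁆ * u}

theorem commProd_one {Q : Type*} [Group Q] (A : Subgroup Q) (l : List Q) :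
    (1 : Q) ∈ CommProd (A : Set Q) l := by
  induction l with
  | nil => rfl
  | cons x l ih => exact ⟨1, one_mem _, 1, ih, by simp⟩

theorem commProd_mem {Q : Type*} [Group Q] (A : Subgroup Q) (l : List Q) (x : Q) (hx : x ∈ l)
    (a : Q) (ha : a ∈ A) : ⁅x, a⁆ ∈ CommProd (A : Set Q) l := by
  induction l with
  | nil => simp at hx
  | cons y l ih =>
    rcases List.mem_cons.1 hx with rfl | hx
    · exact ⟨a, ha, 1, commProd_one A l, by simp⟩
    · exact ⟨1, one_mem _, _, ih hx, by simp⟩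

theorem comm_mul_right' {Q : Type*} [Group Q] (x g a : Q) :
    ⁅x, g * a⁆ = ⁅x, g⁆ * (g * ⁅x, a⁆ * g⁻¹) := by
  simp only [commutatorElement_def]; group

theorem comm_mul_left' {Q : Type*} [Group Q] (x y a : Q) :
    ⁅x * y, a⁆ = x * ⁅y, a⁆ * x⁻¹ * ⁅x, a⁆ := by
  simp only [commutatorElement_def]; group

theorem commProd_mul {Q P : Type*} [Group Q] [Group P] (π : Q →* P) (A B : Subgroup Q)
    (hAB : A ≤ B) (hc : ∀ q : Q, ∀ a ∈ A, ∀ p : P, π ⁅q, a⁆ * p = p * π ⁅q, a⁆) (l : List Q) :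
    ∀ w ∈ CommProd (B : Set Q) l, ∀ w' ∈ CommProd (A : Set Q) l,
      ∃ w'' ∈ CommProd (B : Set Q) l, π w'' = π w * π w' := by
  induction l with
  | nil =>
    rintro w hw w' hw'
    refine ⟨1, rfl, ?_⟩
    rw [show w = 1 from hw, show w' = 1 from hw']; simp
  | cons x l ih =>
    rintro _ ⟨g, hg, u, hu, rfl⟩ _ ⟨a, ha, u', hu', rfl⟩
    obtain ⟨u'', hu'', he⟩ := ih u hu u' hu'
    refine ⟨_, ⟨g * a, mul_mem hg (hAB ha), u'', hu'', rfl⟩, ?_⟩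
    rw [comm_mul_right', map_mul, map_mul, he, map_mul, map_mul, map_inv, ← hc x a ha,
      mul_inv_cancel_right, map_mul, map_mul]
    have := hc x a ha (π u)
    calc π ⁅x, g⁆ * π ⁅x, a⁆ * (π u * π u') = π ⁅x, g⁆ * (π ⁅x, a⁆ * π u) * π u' := by group
      _ = _ := by rw [this]; group

theorem commProd_inv {Q P : Type*} [Group Q] [Group P] (π : Q →* P) (A : Subgroup Q)
    (hc : ∀ q : Q, ∀ a ∈ A, ∀ p : P, π ⁅q, a⁆ * p = p * π ⁅q, a⁆) (l : List Q) :
    ∀ w ∈ CommProd (A : Set Q) l,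
      ∃ w'' ∈ CommProd (A : Set Q) l, π w'' = (π w)⁻¹ := by
  induction l with
  | nil =>
    rintro w hw
    refine ⟨1, rfl, ?_⟩
    rw [show w = 1 from hw]; simp
  | cons x l ih =>
    rintro _ ⟨a, ha, u, hu, rfl⟩
    obtain ⟨u'', hu'', he⟩ := ih u hu
    refine ⟨_, ⟨a⁻¹, inv_mem ha, u'', hu'', rfl⟩, ?_⟩
    have h1 : ⁅x, a⁆ * (a * ⁅x, a⁻¹⁆ * a⁻¹) = 1 := by
      rw [← comm_mul_right']; simp
    have h2 := congrArg π h1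
    rw [map_mul, map_mul, map_mul, map_inv π a, ← hc x a⁻¹ (inv_mem ha), mul_inv_cancel_right,
      map_one] at h2
    rw [map_mul, map_mul, he, hc x a⁻¹ (inv_mem ha), _root_.mul_inv_rev, eq_inv_of_mul_eq_one_right h2]

theorem commProd_surj {Q P : Type*} [Group Q] [Group P] (π : Q →* P) (A : Subgroup Q)
    (hc : ∀ q : Q, ∀ a ∈ A, ∀ p : P, π ⁅q, a⁆ * p = p * π ⁅q, a⁆) (l : List Q)
    (hl : Subgroup.closure {x | x ∈ l} = ⊤) :
    ∀ z ∈ ⁅A, (⊤ : Subgroup Q)⁆, ∃ w ∈ CommProd (A : Set Q) l, π w = π z := by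
  let T : Subgroup P :=
    { carrier := π '' CommProd (A : Set Q) l
      one_mem' := ⟨1, commProd_one A l, map_one _⟩
      mul_mem' := by
        rintro _ _ ⟨w, hw, rfl⟩ ⟨w', hw', rfl⟩
        obtain ⟨w'', h, he⟩ := commProd_mul π A A le_rfl hc l w hw w' hw'
        exact ⟨w'', h, he⟩
      inv_mem' := by
        rintro _ ⟨w, hw, rfl⟩
        obtain ⟨w'', h, he⟩ := commProd_inv π A hc l w hw
        exact ⟨w'', h, he⟩ }
  have hle : ⁅A, (⊤ : Subgroup Q)⁆ ≤ T.comap π := by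
    rw [Subgroup.commutator_comm, Subgroup.commutator_le]
    intro q _ a ha
    have hq : q ∈ Subgroup.closure {x | x ∈ l} := by rw [hl]; trivial
    induction hq using Subgroup.closure_induction with
    | mem x hx => exact ⟨_, commProd_mem A l x hx a ha, rfl⟩
    | one => simp
    | mul x y _ _ hx hy =>
      have hx := hx trivial
      have hy := hy trivial
      rw [Subgroup.mem_comap] at hx hy ⊢
      rw [comm_mul_left', map_mul, map_mul, map_mul, map_inv, ← hc y a ha, mul_inv_cancel_right]
      exact mul_mem hy hx
    | inv x _ hx =>
      have hx := hx trivial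
      rw [Subgroup.mem_comap] at hx ⊢
      have h1 : x * ⁅x⁻¹, a⁆ * x⁻¹ * ⁅x, a⁆ = 1 := by
        rw [← comm_mul_left']; simp
      have h2 := congrArg π h1
      rw [map_mul, map_mul, map_mul, map_inv, ← hc x⁻¹ a ha, mul_inv_cancel_right, map_one] at h2
      rw [eq_inv_of_mul_eq_one_left h2]
      exact inv_mem hx
  intro z hz
  obtain ⟨w, hw, he⟩ := hle hz
  exact ⟨w, hw, he⟩

theorem nilpotent_commProd {Q : Type*} [Group Q] [hQ : Group.IsNilpotent Q] (l : List Q)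
    (hl : Subgroup.closure {x | x ∈ l} = ⊤) (y : Q) (hy : y ∈ commutator Q) :
    y ∈ CommProd (Set.univ : Set Q) l := by
  have key : ∀ k, ∃ w ∈ CommProd ((⊤ : Subgroup Q) : Set Q) l,
      w⁻¹ * y ∈ (⊤ : Subgroup Q).lowerCentralSeries (k + 1) := by
    intro k
    induction k with
    | zero =>
      refine ⟨1, commProd_one _ _, ?_⟩
      rw [inv_one, one_mul]
      exact hy
    | succ k ih =>
      obtain ⟨w, hw, hwy⟩ := ih
      let P := Q ⧸ (⊤ : Subgroup Q).lowerCentralSeries (k + 2)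
      let π : Q →* P := QuotientGroup.mk' _
      have hc : ∀ q : Q, ∀ a ∈ (⊤ : Subgroup Q).lowerCentralSeries k, ∀ p : P,
          π ⁅q, a⁆ * p = p * π ⁅q, a⁆ := by
        intro q a ha p
        obtain ⟨p, rfl⟩ := QuotientGroup.mk'_surjective _ p
        have h1 : ⁅q, a⁆ ∈ (⊤ : Subgroup Q).lowerCentralSeries (k + 1) := by
          rw [Subgroup.lowerCentralSeries_succ, Subgroup.commutator_comm]
          exact Subgroup.commutator_mem_commutator trivial ha
        have h2 : ⁅⁅q, a⁆, p⁆ ∈ (⊤ : Subgroup Q).lowerCentralSeries (k + 2) :=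
          Subgroup.commutator_mem_commutator h1 trivial
        have h3 : π ⁅⁅q, a⁆, p⁆ = 1 := (QuotientGroup.eq_one_iff _).2 h2
        rw [map_commutatorElement, commutatorElement_eq_one_iff_mul_comm] at h3
        exact h3
      obtain ⟨w', hw', he'⟩ := commProd_surj π _ hc l hl _ hwy
      obtain ⟨w'', hw'', he''⟩ := commProd_mul π _ ⊤ le_top hc l w hw w' hw'
      refine ⟨w'', hw'', ?_⟩
      rw [← QuotientGroup.eq_one_iff]
      show π (w''⁻¹ * y) = 1
      rw [map_mul, map_inv, he'', he', map_mul, map_inv]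
      group
  obtain ⟨n, hn⟩ := Subgroup.nilpotent_iff_lowerCentralSeries.1 hQ
  obtain ⟨w, hw, hwy⟩ := key n
  have h1 : w⁻¹ * y ∈ (⊥ : Subgroup Q) := by
    rw [← hn]
    exact Subgroup.lowerCentralSeries_antitone _ (Nat.le_succ n) hwy
  rw [Subgroup.mem_bot, inv_mul_eq_one] at h1
  rw [← h1]
  exact hw

theorem commProd_lift {U Q : Type*} [Group U] [Group Q] (π : U →* Q)
    (hπ : Function.Surjective π) (l : List U) :
    ∀ w ∈ CommProd (Set.univ : Set Q) (l.map π), ∃ w' ∈ CommProd (Set.univ : Set U) l, π w' = w := by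
  induction l with
  | nil => exact fun w hw => ⟨1, rfl, by rw [map_one]; exact hw.symm⟩
  | cons x l ih =>
    rintro _ ⟨g, -, u, hu, rfl⟩
    obtain ⟨u', hu', rfl⟩ := ih u hu
    obtain ⟨g', rfl⟩ := hπ g
    exact ⟨_, ⟨g', trivial, u', hu', rfl⟩, by rw [map_mul, map_commutatorElement]⟩

theorem commProd_compact {U : Type*} [Group U] [TopologicalSpace U] [IsTopologicalGroup U]
    [CompactSpace U] (l : List U) : IsCompact (CommProd (Set.univ : Set U) l) := by
  induction l with
  | nil => exact isCompact_singleton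
  | cons x l ih =>
    have h1 := (isCompact_univ (X := U)).prod ih
    have h2 := h1.image (f := fun p : U × U => ⁅x, p.1⁆ * p.2) (by
      simp only [commutatorElement_def]; fun_prop)
    convert h2 using 1
    ext w
    constructor
    · rintro ⟨g, hg, u, hu, rfl⟩
      exact ⟨(g, u), ⟨hg, hu⟩, rfl⟩
    · rintro ⟨⟨g, u⟩, ⟨hg, hu⟩, rfl⟩
      exact ⟨g, hg, u, hu, rfl⟩

theorem commProd_le {U : Type*} [Group U] (K : Subgroup U) [hK : K.Normal] (l : List U)
    (hl : ∀ x ∈ l, x ∈ K) : CommProd (Set.univ : Set U) l ⊆ K := by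
  induction l with
  | nil => rintro w hw; rw [show w = 1 from hw]; exact one_mem K
  | cons x l ih =>
    rintro _ ⟨g, -, u, hu, rfl⟩
    refine mul_mem ?_ (ih (fun x hx => hl x (List.mem_cons_of_mem _ hx)) hu)
    have hx := hl x List.mem_cons_self
    rw [commutatorElement_def, mul_assoc, mul_assoc, ← mul_assoc g]
    exact mul_mem hx (hK.conj_mem _ (inv_mem hx) g)

theorem serre_abstract {U : Type*} [Group U] [TopologicalSpace U] [IsTopologicalGroup U]
    [CompactSpace U] [T2Space U] (K : Subgroup U) [K.Normal] {Q : ℕ → Type*} [∀ n, Group (Q n)]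
    (π : ∀ n, U →* Q n) (hπ : ∀ n, Function.Surjective (π n)) (hQ : ∀ n, Group.IsNilpotent (Q n))
    (hcl : ∀ C : Set U, IsClosed C → ∀ x, (∀ n, ∃ c ∈ C, π n c = π n x) → x ∈ C)
    (l : List U) (hlK : ∀ x ∈ l, x ∈ K)
    (hgen : ∀ n, Subgroup.closure {x | x ∈ l.map (π n)} = ⊤) : commutator U ≤ K := by
  intro y hy
  apply commProd_le K l hlK
  apply hcl _ (commProd_compact l).isClosed
  intro n
  have := hQ n
  apply commProd_lift (π n) (hπ n) l
  apply nilpotent_commProd _ (hgen n)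
  have : (commutator U).map (π n) ≤ commutator (Q n) := by
    rw [commutator_def, Subgroup.map_commutator]
    exact Subgroup.commutator_mono le_top le_top
  exact this ⟨y, hy, rfl⟩

end SerreAbstract

section Congruence

theorem mem_closed_of_approx {U : Type*} [Group U] [TopologicalSpace U] [IsTopologicalGroup U]
    [CompactSpace U] (Γ : ℕ → Subgroup U) (hanti : ∀ n, Γ (n + 1) ≤ Γ n)
    (hcl : ∀ n, IsClosed (Γ n : Set U)) (hbot : ∀ x, (∀ n, x ∈ Γ n) → x = 1)
    (C : Set U) (hC : IsClosed C) (x : U) (hx : ∀ n, ∃ c ∈ C, c⁻¹ * x ∈ Γ n) : x ∈ C := by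
  let T : ℕ → Set U := fun n => C ∩ (fun c => c⁻¹ * x) ⁻¹' (Γ n : Set U)
  have hT : ∀ n, IsClosed (T n) := fun n => hC.inter ((hcl n).preimage (by fun_prop))
  have := IsCompact.nonempty_iInter_of_sequence_nonempty_isCompact_isClosed T
    (fun n => Set.inter_subset_inter_right _ (Set.preimage_mono (hanti n)))
    (fun n => (hx n)) (hT 0).isCompact hT
  obtain ⟨c, hc⟩ := this
  rw [Set.mem_iInter] at hc
  have h1 : c⁻¹ * x = 1 := hbot _ fun n => (hc n).2
  rw [inv_mul_eq_one] at h1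
  rw [← h1]
  exact (hc 0).1

/-- The congruence subgroup. -/
noncomputable def Gam (ℓ : ℕ) [Fact ℓ.Prime] (n : ℕ) : Subgroup (GL (Fin 2) ℤ_[ℓ]) :=
  (GeneralLinearGroup.map (PadicInt.toZModPow (p := ℓ) n)).ker

variable {ℓ : ℕ} [Fact ℓ.Prime]

instance (n : ℕ) : (Gam ℓ n).Normal := by unfold Gam; infer_instance

theorem mat_dvd (n : ℕ) (B : Matrix (Fin 2) (Fin 2) ℤ_[ℓ])
    (h : ∀ i j, PadicInt.toZModPow n (B i j) = 0) :
    ∃ A : Matrix (Fin 2) (Fin 2) ℤ_[ℓ], B = (ℓ : ℤ_[ℓ]) ^ n • A := by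
  have : ∀ i j, ∃ a, B i j = (ℓ : ℤ_[ℓ]) ^ n * a := by
    intro i j
    have h1 : B i j ∈ RingHom.ker (PadicInt.toZModPow (p := ℓ) n) := h i j
    rw [PadicInt.ker_toZModPow, Ideal.mem_span_singleton] at h1
    exact h1
  choose a ha using this
  exact ⟨Matrix.of a, by ext i j; simp [ha]⟩

theorem mem_Gam {n : ℕ} {x : GL (Fin 2) ℤ_[ℓ]} :
    x ∈ Gam ℓ n ↔ ∃ A : Matrix (Fin 2) (Fin 2) ℤ_[ℓ], x.1 = 1 + (ℓ : ℤ_[ℓ]) ^ n • A := by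
  have hz : PadicInt.toZModPow (p := ℓ) n ((ℓ : ℤ_[ℓ]) ^ n) = 0 := by
    rw [← RingHom.mem_ker, PadicInt.ker_toZModPow]; exact Ideal.mem_span_singleton_self _
  constructor
  · intro h
    obtain ⟨A, hA⟩ := mat_dvd n (x.1 - 1) (by
      intro i j
      have h1 := congrArg (fun g : GL (Fin 2) (ZMod (ℓ ^ n)) => g.1 i j) (MonoidHom.mem_ker.1 h)
      simp only [GeneralLinearGroup.map_apply] at h1
      rw [Matrix.sub_apply, map_sub, h1, Matrix.one_apply]
      simp only [Units.val_one, Matrix.one_apply]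
      split_ifs <;> simp)
    exact ⟨A, by rw [← hA]; abel⟩
  · rintro ⟨A, hA⟩
    rw [Gam, MonoidHom.mem_ker]
    ext i j
    rw [GeneralLinearGroup.map_apply, hA, Matrix.add_apply, Matrix.smul_apply, smul_eq_mul,
      map_add, map_mul, hz, zero_mul, add_zero, Matrix.one_apply]
    simp only [Units.val_one, Matrix.one_apply]
    split_ifs <;> simp

theorem inv_mul_mem_Gam {n : ℕ} {x y : GL (Fin 2) ℤ_[ℓ]} :
    x⁻¹ * y ∈ Gam ℓ n ↔
      ∃ A : Matrix (Fin 2) (Fin 2) ℤ_[ℓ], y.1 = x.1 + (ℓ : ℤ_[ℓ]) ^ n • A := by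
  rw [mem_Gam]
  constructor
  · rintro ⟨A, hA⟩
    refine ⟨x.1 * A, ?_⟩
    have : y.1 = x.1 * (x⁻¹ * y).1 := by rw [← Units.val_mul, mul_inv_cancel_left]
    rw [this, hA, mul_add, mul_one, mul_smul_comm]
  · rintro ⟨A, hA⟩
    refine ⟨(x⁻¹).1 * A, ?_⟩
    rw [Units.val_mul, hA, mul_add, Units.inv_mul, mul_smul_comm]

theorem Gam_anti {n m : ℕ} (h : n ≤ m) : Gam ℓ m ≤ Gam ℓ n := by
  intro x hx
  rw [mem_Gam] at hx ⊢
  obtain ⟨A, hA⟩ := hx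
  obtain ⟨k, rfl⟩ := Nat.exists_eq_add_of_le h
  exact ⟨(ℓ : ℤ_[ℓ]) ^ k • A, by rw [hA, smul_smul, pow_add]⟩

theorem mem_Gam_norm {n : ℕ} {x : GL (Fin 2) ℤ_[ℓ]} :
    x ∈ Gam ℓ n ↔ ∀ i j, ‖(x.1 - 1) i j‖ ≤ (ℓ : ℝ) ^ (-n : ℤ) := by
  constructor
  · intro h i j
    obtain ⟨A, hA⟩ := mem_Gam.1 h
    rw [PadicInt.norm_le_pow_iff_mem_span_pow, hA, Ideal.mem_span_singleton]
    simp
  · intro h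
    obtain ⟨A, hA⟩ := mat_dvd n (x.1 - 1) (fun i j => by
      rw [← RingHom.mem_ker, PadicInt.ker_toZModPow, ← PadicInt.norm_le_pow_iff_mem_span_pow]
      exact h i j)
    exact mem_Gam.2 ⟨A, by rw [← hA]; abel⟩

theorem Gam_closed (n : ℕ) : IsClosed (Gam ℓ n : Set (GL (Fin 2) ℤ_[ℓ])) := by
  have : (Gam ℓ n : Set (GL (Fin 2) ℤ_[ℓ])) =
      ⋂ i, ⋂ j, {x | ‖(x.1 - 1) i j‖ ≤ (ℓ : ℝ) ^ (-n : ℤ)} := by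
    ext x
    simp only [SetLike.mem_coe, mem_Gam_norm, Set.mem_iInter, Set.mem_ofPred_eq]
  rw [this]
  refine isClosed_iInter fun i => isClosed_iInter fun j => isClosed_le ?_ continuous_const
  have : Continuous fun x : GL (Fin 2) ℤ_[ℓ] => (x.1 - 1) :=
    (Units.continuous_val).sub continuous_const
  exact (this.matrix_elem i j).norm

theorem Gam_inter (x : GL (Fin 2) ℤ_[ℓ]) (h : ∀ n, x ∈ Gam ℓ n) : x = 1 := by
  ext i j
  have h1 : ‖(x.1 - 1) i j‖ = 0 := by
    refine le_antisymm ?_ (norm_nonneg _)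
    have ht : Filter.Tendsto (fun n : ℕ => ((ℓ : ℝ)⁻¹) ^ n) Filter.atTop (nhds 0) :=
      tendsto_pow_atTop_nhds_zero_of_lt_one (by positivity)
        (inv_lt_one_of_one_lt₀ (by exact_mod_cast (Fact.out : ℓ.Prime).one_lt))
    refine ge_of_tendsto' ht fun n => ?_
    have := mem_Gam_norm.1 (h n) i j
    simpa using this
  rw [norm_eq_zero, Matrix.sub_apply, sub_eq_zero] at h1
  exact h1

instance : CompactSpace (GL (Fin 2) ℤ_[ℓ]) := by
  have h1 : CompactSpace (Matrix (Fin 2) (Fin 2) ℤ_[ℓ]) :=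
    inferInstanceAs (CompactSpace (Fin 2 → Fin 2 → ℤ_[ℓ]))
  exact inferInstanceAs (CompactSpace (Matrix (Fin 2) (Fin 2) ℤ_[ℓ])ˣ)

theorem mem_of_approx (C : Set (GL (Fin 2) ℤ_[ℓ])) (hC : IsClosed C) (x : GL (Fin 2) ℤ_[ℓ])
    (hx : ∀ n, ∃ c ∈ C, c⁻¹ * x ∈ Gam ℓ n) : x ∈ C :=
  mem_closed_of_approx (Gam ℓ) (fun n => Gam_anti n.le_succ) Gam_closed Gam_inter C hC x hx

end Congruence

section Leading

open scoped commutatorElement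

theorem prime_binom_poly (p : ℕ) (hp : p.Prime) :
    ∃ B : Polynomial ℤ, (1 + Polynomial.X) ^ p
      = 1 + (p : Polynomial ℤ) * Polynomial.X + (p : Polynomial ℤ) * (Polynomial.X ^ 2 * B)
        + Polynomial.X ^ p := by
  obtain ⟨r, hr⟩ := exists_add_pow_prime_eq hp (1 : Polynomial ℤ) Polynomial.X
  have h1 : r.coeff 0 = 1 := by
    have := congrArg (fun q : Polynomial ℤ => q.coeff 1) hr
    rw [Polynomial.coeff_one_add_X_pow] at this
    have e : (1 ^ p + Polynomial.X ^ p + (p : Polynomial ℤ) * 1 * Polynomial.X * r)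
      = 1 + Polynomial.X ^ p + Polynomial.C (p : ℤ) * (Polynomial.X * r) := by
      simp; ring
    rw [e, Polynomial.coeff_add, Polynomial.coeff_add, Polynomial.coeff_C_mul,
      Polynomial.coeff_X_mul, Polynomial.coeff_X_pow, Polynomial.coeff_one] at this
    simp [hp.one_lt.ne] at this
    have h0 : (p : ℤ) ≠ 0 := by exact_mod_cast hp.ne_zero
    exact (mul_eq_left₀ h0).1 this.symm
  refine ⟨r.divX, ?_⟩
  have h2 := Polynomial.divX_mul_X_add r
  rw [h1] at h2
  rw [hr]
  nth_rewrite 1 [← h2]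
  simp
  ring

theorem prime_binom {A : Type*} [Ring A] (p : ℕ) (hp : p.Prime) (Y : A) :
    ∃ B : A, (1 + Y) ^ p = 1 + (p : A) * Y + (p : A) * (Y ^ 2 * B) + Y ^ p := by
  obtain ⟨B, hB⟩ := prime_binom_poly p hp
  refine ⟨Polynomial.aeval Y B, ?_⟩
  have := congrArg (Polynomial.aeval Y) hB
  simpa using this

variable {ℓ : ℕ} [Fact ℓ.Prime]

/-- Reduction of matrices modulo `ℓ`. -/
noncomputable def red (A : Matrix (Fin 2) (Fin 2) ℤ_[ℓ]) : Matrix (Fin 2) (Fin 2) (ZMod ℓ) :=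
  (PadicInt.toZMod (p := ℓ)).mapMatrix A

theorem red_add (A B : Matrix (Fin 2) (Fin 2) ℤ_[ℓ]) : red (A + B) = red A + red B := map_add _ _ _
theorem red_sub (A B : Matrix (Fin 2) (Fin 2) ℤ_[ℓ]) : red (A - B) = red A - red B := map_sub _ _ _
theorem red_mul (A B : Matrix (Fin 2) (Fin 2) ℤ_[ℓ]) : red (A * B) = red A * red B := map_mul _ _ _
theorem red_neg (A : Matrix (Fin 2) (Fin 2) ℤ_[ℓ]) : red (-A) = -red A := map_neg _ _
theorem red_one : red (1 : Matrix (Fin 2) (Fin 2) ℤ_[ℓ]) = 1 := map_one _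
theorem red_apply (A : Matrix (Fin 2) (Fin 2) ℤ_[ℓ]) (i j : Fin 2) :
    red A i j = PadicInt.toZMod (A i j) := rfl

theorem toZMod_ell : PadicInt.toZMod (p := ℓ) (ℓ : ℤ_[ℓ]) = 0 := by simp

theorem red_smul (A : Matrix (Fin 2) (Fin 2) ℤ_[ℓ]) : red ((ℓ : ℤ_[ℓ]) • A) = 0 := by
  ext i j
  rw [red_apply, Matrix.smul_apply, smul_eq_mul, map_mul, toZMod_ell, zero_mul]; rfl

theorem red_eq_zero {A : Matrix (Fin 2) (Fin 2) ℤ_[ℓ]} (h : red A = 0) :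
    ∃ B, A = (ℓ : ℤ_[ℓ]) • B := by
  have : ∀ i j, ∃ a, A i j = (ℓ : ℤ_[ℓ]) * a := by
    intro i j
    have h1 : A i j ∈ RingHom.ker (PadicInt.toZMod (p := ℓ)) := congrFun (congrFun h i) j
    rw [PadicInt.ker_toZMod, PadicInt.maximalIdeal_eq_span_p, Ideal.mem_span_singleton] at h1
    exact h1
  choose a ha using this
  exact ⟨Matrix.of a, by ext i j; simp [ha]⟩

/-- `x = 1 + ℓ ^ j A` with `A ≡ a` modulo `ℓ`. -/
def Lead (j : ℕ) (x : GL (Fin 2) ℤ_[ℓ]) (a : Matrix (Fin 2) (Fin 2) (ZMod ℓ)) : Prop :=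
  ∃ A : Matrix (Fin 2) (Fin 2) ℤ_[ℓ], x.1 = 1 + (ℓ : ℤ_[ℓ]) ^ j • A ∧ red A = a

theorem exists_lead {j : ℕ} {x : GL (Fin 2) ℤ_[ℓ]} (h : x ∈ Gam ℓ j) : ∃ a, Lead j x a := by
  obtain ⟨A, hA⟩ := mem_Gam.1 h
  exact ⟨_, A, hA, rfl⟩

theorem Lead.mem {j : ℕ} {x : GL (Fin 2) ℤ_[ℓ]} {a} (h : Lead j x a) : x ∈ Gam ℓ j := by
  obtain ⟨A, hA, -⟩ := h
  exact mem_Gam.2 ⟨A, hA⟩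

theorem lead_inv_mul {j : ℕ} {x y : GL (Fin 2) ℤ_[ℓ]} {a} (hx : Lead j x a) (hy : Lead j y a) :
    x⁻¹ * y ∈ Gam ℓ (j + 1) := by
  obtain ⟨A, hA, ha⟩ := hx
  obtain ⟨B, hB, hb⟩ := hy
  obtain ⟨C, hC⟩ := red_eq_zero (A := B - A) (by rw [red_sub, ha, hb, sub_self])
  rw [inv_mul_mem_Gam]
  refine ⟨C, ?_⟩
  rw [hA, hB, pow_succ, mul_smul, ← hC, smul_sub]; abel

theorem lead_of_inv_mul {j : ℕ} {x y : GL (Fin 2) ℤ_[ℓ]} {a} (hx : Lead j x a)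
    (h : x⁻¹ * y ∈ Gam ℓ (j + 1)) : Lead j y a := by
  obtain ⟨A, hA, ha⟩ := hx
  obtain ⟨C, hC⟩ := inv_mul_mem_Gam.1 h
  refine ⟨A + (ℓ : ℤ_[ℓ]) • C, ?_, by rw [red_add, red_smul, ha, add_zero]⟩
  rw [hC, hA, pow_succ, mul_smul, smul_add, add_assoc]

theorem lead_mul {j : ℕ} (hj : 1 ≤ j) {x y : GL (Fin 2) ℤ_[ℓ]} {a b} (hx : Lead j x a)
    (hy : Lead j y b) : Lead j (x * y) (a + b) := by
  obtain ⟨A, hA, ha⟩ := hx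
  obtain ⟨B, hB, hb⟩ := hy
  obtain ⟨i, rfl⟩ := Nat.exists_eq_add_of_le' hj
  refine ⟨A + B + (ℓ : ℤ_[ℓ]) • ((ℓ : ℤ_[ℓ]) ^ i • (A * B)), ?_, ?_⟩
  · rw [Units.val_mul, hA, hB, add_mul, one_mul, mul_add, mul_one, smul_mul_smul_comm, smul_smul,
      ← pow_succ', smul_add, smul_add, smul_smul]
    abel
  · rw [red_add, red_smul, red_add, ha, hb, add_zero]

theorem lead_pow {j : ℕ} (hj : 1 ≤ j) (hj2 : j + 2 ≤ j * ℓ) {x : GL (Fin 2) ℤ_[ℓ]} {a}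
    (hx : Lead j x a) : Lead (j + 1) (x ^ ℓ) a := by
  obtain ⟨A, hA, ha⟩ := hx
  obtain ⟨B, hB⟩ := prime_binom ℓ Fact.out ((ℓ : ℤ_[ℓ]) ^ j • A)
  obtain ⟨i, rfl⟩ := Nat.exists_eq_add_of_le' hj
  obtain ⟨k, hk⟩ := Nat.exists_eq_add_of_le hj2
  have hcast : (ℓ : Matrix (Fin 2) (Fin 2) ℤ_[ℓ]) = (ℓ : ℤ_[ℓ]) • 1 := by
    rw [← nsmul_one, ← Nat.cast_smul_eq_nsmul ℤ_[ℓ]]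
  refine ⟨A + (ℓ : ℤ_[ℓ]) • ((ℓ : ℤ_[ℓ]) ^ i • (A ^ 2 * B) + (ℓ : ℤ_[ℓ]) ^ k • A ^ ℓ), ?_, ?_⟩
  · rw [Units.val_pow_eq_pow_val, hA, hB, hcast, smul_pow, smul_pow, ← pow_mul, ← pow_mul, hk]
    simp only [smul_mul_assoc, one_mul]
    module
  · rw [red_add, red_smul, ha, add_zero]

theorem lead_pow_pow {j : ℕ} (hj : 1 ≤ j) (hj2 : j + 2 ≤ j * ℓ) {x : GL (Fin 2) ℤ_[ℓ]} {a}
    (hx : Lead j x a) (k : ℕ) : Lead (j + k) (x ^ (ℓ ^ k)) a := by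
  induction k with
  | zero => simpa using hx
  | succ k ih =>
    rw [pow_succ, pow_mul, ← add_assoc]
    refine lead_pow (by omega) ?_ ih
    have h2 := (Fact.out : ℓ.Prime).two_le
    nlinarith

theorem pow_mem_Gam {j : ℕ} (hj : 1 ≤ j) {x : GL (Fin 2) ℤ_[ℓ]} (hx : x ∈ Gam ℓ j) :
    x ^ ℓ ∈ Gam ℓ (j + 1) := by
  obtain ⟨A, hA⟩ := mem_Gam.1 hx
  rw [mem_Gam]
  obtain ⟨B, hB⟩ := prime_binom ℓ Fact.out ((ℓ : ℤ_[ℓ]) ^ j • A)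
  have h2 := (Fact.out : ℓ.Prime).two_le
  have hj2 : j + 1 ≤ j * ℓ := by nlinarith
  obtain ⟨k, hk⟩ := Nat.exists_eq_add_of_le hj2
  have hcast : (ℓ : Matrix (Fin 2) (Fin 2) ℤ_[ℓ]) = (ℓ : ℤ_[ℓ]) • 1 := by
    rw [← nsmul_one, ← Nat.cast_smul_eq_nsmul ℤ_[ℓ]]
  refine ⟨A + (ℓ : ℤ_[ℓ]) ^ j • (A ^ 2 * B) + (ℓ : ℤ_[ℓ]) ^ k • A ^ ℓ, ?_⟩
  rw [Units.val_pow_eq_pow_val, hA, hB, hcast, smul_pow, smul_pow, ← pow_mul, ← pow_mul, hk]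
  simp only [smul_mul_assoc, one_mul]
  module

theorem pow_pow_mem_Gam {x : GL (Fin 2) ℤ_[ℓ]} (hx : x ∈ Gam ℓ 1) (k : ℕ) :
    x ^ (ℓ ^ k) ∈ Gam ℓ (k + 1) := by
  induction k with
  | zero => simpa using hx
  | succ k ih =>
    rw [pow_succ, pow_mul]
    exact pow_mem_Gam (by omega) ih

theorem comm_mem_Gam {j : ℕ} (hj : 1 ≤ j) {x y : GL (Fin 2) ℤ_[ℓ]} (hx : x ∈ Gam ℓ j)
    (hy : y ∈ Gam ℓ j) : ⁅x, y⁆ ∈ Gam ℓ (j + 1) := by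
  obtain ⟨a, ha⟩ := exists_lead hx
  obtain ⟨b, hb⟩ := exists_lead hy
  have h1 := lead_mul hj ha hb
  have h2 := lead_mul hj hb ha
  rw [add_comm] at h2
  have h3 := lead_inv_mul h2 h1
  have : ⁅x, y⁆ = (y * x) * ((y * x)⁻¹ * (x * y)) * (y * x)⁻¹ := by
    rw [commutatorElement_def]; group
  rw [this]
  exact Subgroup.Normal.conj_mem inferInstance _ h3 _

end Leading

section SerrePart

variable {ℓ : ℕ} [Fact ℓ.Prime]

theorem lead_stable (N : Subgroup (GL (Fin 2) ℤ_[ℓ])) :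
    ∃ i, 2 ≤ i ∧ ∀ j, i ≤ j → ∀ a, (∃ x ∈ N, Lead j x a) → (∃ x ∈ N, Lead i x a) := by
  let V : ℕ →o Set (Matrix (Fin 2) (Fin 2) (ZMod ℓ)) :=
    ⟨fun n => {a | ∃ x ∈ N, Lead (n + 2) x a}, monotone_nat_of_le_succ (by
      rintro n a ⟨x, hx, ha⟩
      refine ⟨x ^ ℓ, N.pow_mem hx _, ?_⟩
      have h2 := (Fact.out : ℓ.Prime).two_le
      have := lead_pow (by omega) (by nlinarith) ha
      have e : n + 1 + 2 = n + 2 + 1 := by omega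
      rw [e]
      exact this)⟩
  obtain ⟨n, hn⟩ := WellFoundedGT.monotone_chain_condition V
  refine ⟨n + 2, by omega, fun j hj a ha => ?_⟩
  obtain ⟨m, rfl⟩ := Nat.exists_eq_add_of_le' (show 2 ≤ j by omega)
  have h1 := hn m (by omega)
  have h2 : a ∈ V m := ha
  rw [← h1] at h2
  exact h2

theorem simple_perfect {S : Type*} [Group S] (hsimple : IsSimpleGroup S)
    (hnonab : ∃ a b : S, a * b ≠ b * a) : commutator S = ⊤ := by
  rcases hsimple.eq_bot_or_eq_top_of_normal (commutator S) inferInstance with h | h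
  · exfalso
    obtain ⟨a, b, hab⟩ := hnonab
    have := Subgroup.commutator_mem_commutator (Subgroup.mem_top a) (Subgroup.mem_top b)
    rw [← commutator_def, h, Subgroup.mem_bot, commutatorElement_eq_one_iff_mul_comm] at this
    exact hab this
  · exact h

theorem quotient_nilpotent (U : Subgroup (GL (Fin 2) ℤ_[ℓ])) (hU : U ≤ Gam ℓ 1) (n : ℕ) :
    Group.IsNilpotent (U ⧸ (Gam ℓ n).subgroupOf U) := by
  have hfin : Finite (U ⧸ (Gam ℓ n).subgroupOf U) := by
    let g := (GeneralLinearGroup.map (n := Fin 2) (PadicInt.toZModPow (p := ℓ) n)).comp U.subtype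
    have hg : g.ker = (Gam ℓ n).subgroupOf U := by
      ext x; rfl
    rw [← hg]
    have : NeZero (ℓ ^ n) := ⟨pow_ne_zero _ (Fact.out : ℓ.Prime).ne_zero⟩
    have : Finite (GL (Fin 2) (ZMod (ℓ ^ n))) :=
      inferInstanceAs (Finite (Matrix (Fin 2) (Fin 2) (ZMod (ℓ ^ n)))ˣ)
    exact Finite.of_injective _ (QuotientGroup.kerLift_injective g)
  have hp : IsPGroup ℓ (U ⧸ (Gam ℓ n).subgroupOf U) := by
    intro x
    obtain ⟨u, rfl⟩ := QuotientGroup.mk_surjective x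
    refine ⟨n, ?_⟩
    rw [← QuotientGroup.mk_pow, QuotientGroup.eq_one_iff, Subgroup.mem_subgroupOf]
    exact Gam_anti n.le_succ (pow_pow_mem_Gam (hU u.2) n)
  exact hp.isNilpotent

theorem serre_kill {S : Type*} [Group S] (hsimple : IsSimpleGroup S)
    (hnonab : ∃ a b : S, a * b ≠ b * a)
    (N : Subgroup (GL (Fin 2) ℤ_[ℓ])) (hN : IsClosed (N : Set (GL (Fin 2) ℤ_[ℓ])))
    (ψ : N →* S) (hψ : Function.Surjective ψ) :
    ∃ i, 2 ≤ i ∧ ∀ x : N, x.1 ∈ Gam ℓ i → ψ x = 1 := by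
  classical
  obtain ⟨i, hi, hst⟩ := lead_stable N
  refine ⟨i, hi, ?_⟩
  rcases map_normal_bot_or_top hsimple ψ hψ ((Gam ℓ i).subgroupOf N) with hb | ht
  · intro x hx
    have : ψ x ∈ ((Gam ℓ i).subgroupOf N).map ψ := ⟨x, hx, rfl⟩
    rw [hb] at this
    exact this
  exfalso
  let U : Subgroup (GL (Fin 2) ℤ_[ℓ]) := N ⊓ Gam ℓ i
  have hUcl : IsClosed (U : Set (GL (Fin 2) ℤ_[ℓ])) := hN.inter (Gam_closed i)
  have : CompactSpace U := isCompact_iff_compactSpace.1 hUcl.isCompact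
  let f : U →* S := ψ.comp (Subgroup.inclusion inf_le_left)
  have hf : Function.Surjective f := by
    intro s
    have : s ∈ ((Gam ℓ i).subgroupOf N).map ψ := by rw [ht]; trivial
    obtain ⟨x, hx, rfl⟩ := this
    exact ⟨⟨x.1, x.2, hx⟩, rfl⟩
  have hS := simple_perfect hsimple hnonab
  have hmapc : (commutator U).map f = ⊤ := by
    rw [commutator_def, Subgroup.map_commutator, Subgroup.map_top_of_surjective f hf,
      ← commutator_def, hS]
  have hcG : ∀ c ∈ commutator U, (c : GL (Fin 2) ℤ_[ℓ]) ∈ Gam ℓ (i + 1) := by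
    intro c hc
    have hle : commutator U ≤ (Gam ℓ (i + 1)).comap U.subtype := by
      rw [commutator_def, Subgroup.commutator_le]
      intro x _ y _
      exact comm_mem_Gam (by omega) x.2.2 y.2.2
    exact hle hc
  have hxs : ∀ a : Matrix (Fin 2) (Fin 2) (ZMod ℓ), ∃ x : U, f x = 1 ∧
      ((∃ y ∈ N, Lead i y a) → Lead i x.1 a) := by
    intro a
    by_cases h : ∃ y ∈ N, Lead i y a
    · obtain ⟨y, hy, ha⟩ := h
      let y' : U := ⟨y, hy, ha.mem⟩
      have : (f y')⁻¹ ∈ (commutator U).map f := by rw [hmapc]; trivial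
      obtain ⟨c, hc, hfc⟩ := this
      refine ⟨y' * c, by rw [map_mul, hfc, mul_inv_cancel], fun _ => ?_⟩
      refine lead_of_inv_mul ha ?_
      have e : y⁻¹ * (y' * c : U).1 = c.1 := by
        rw [Subgroup.coe_mul]; exact inv_mul_cancel_left _ _
      rw [e]
      exact hcG c hc
    · exact ⟨1, map_one _, fun h' => absurd h' h⟩
  choose xs hxs1 hxs2 using hxs
  let l : List U := (Finset.univ : Finset (Matrix (Fin 2) (Fin 2) (ZMod ℓ))).toList.map xs
  have hl : ∀ a, xs a ∈ l := fun a => List.mem_map.2 ⟨a, by simp, rfl⟩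
  have key : ∀ n, ∀ u : U, ∃ c ∈ Subgroup.closure {x | x ∈ l},
      ((c⁻¹ * u : U) : GL (Fin 2) ℤ_[ℓ]) ∈ Gam ℓ n := by
    intro n
    induction n with
    | zero =>
      exact fun u => ⟨1, one_mem _, by simpa using Gam_anti (Nat.zero_le i) u.2.2⟩
    | succ n ih =>
      intro u
      by_cases hn : n + 1 ≤ i
      · exact ⟨1, one_mem _, by simpa using Gam_anti hn u.2.2⟩
      obtain ⟨c, hc, hcu⟩ := ih u
      obtain ⟨a, ha⟩ := exists_lead hcu
      have h1 := hxs2 a (hst n (by omega) a ⟨_, (c⁻¹ * u).2.1, ha⟩)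
      have h2 := (Fact.out : ℓ.Prime).two_le
      have h3 := lead_pow_pow (by omega) (by nlinarith) h1 (n - i)
      rw [show i + (n - i) = n by omega] at h3
      have h5 : xs a ∈ Subgroup.closure {x | x ∈ l} :=
        Subgroup.subset_closure (show xs a ∈ {x | x ∈ l} from hl a)
      refine ⟨c * xs a ^ (ℓ ^ (n - i)), mul_mem hc (pow_mem h5 _), ?_⟩
      have h4 := lead_inv_mul h3 ha
      rw [_root_.mul_inv_rev, mul_assoc]
      exact h4
  have hcK : commutator U ≤ f.ker := by
    refine serre_abstract f.ker (Q := fun n => U ⧸ (Gam ℓ n).subgroupOf U)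
      (fun n => QuotientGroup.mk' ((Gam ℓ n).subgroupOf U))
      (fun n => QuotientGroup.mk'_surjective _)
      (fun n => quotient_nilpotent U (fun x hx => Gam_anti (by omega) hx.2) n) ?_ l ?_ ?_
    · intro C hC x hx
      refine mem_closed_of_approx (fun n => (Gam ℓ n).subgroupOf U) ?_ ?_ ?_ C hC x ?_
      · intro n y hy
        exact Gam_anti n.le_succ hy
      · intro n
        exact (Gam_closed n).preimage continuous_subtype_val
      · intro y hy
        exact Subtype.ext (Gam_inter y.1 hy)
      · intro n
        obtain ⟨c, hc, hcx⟩ := hx n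
        exact ⟨c, hc, QuotientGroup.eq.1 hcx⟩
    · intro x hx
      obtain ⟨a, -, rfl⟩ := List.mem_map.1 hx
      exact hxs1 a
    · intro n
      have e : {x | x ∈ l.map (QuotientGroup.mk' ((Gam ℓ n).subgroupOf U))}
          = (QuotientGroup.mk' ((Gam ℓ n).subgroupOf U)) '' {x | x ∈ l} := by
        ext x; simp [List.mem_map]
      rw [e, ← MonoidHom.map_closure, eq_top_iff]
      intro q _
      obtain ⟨u, rfl⟩ := QuotientGroup.mk_surjective q
      obtain ⟨c, hc, hcu⟩ := key n u
      exact ⟨c, hc, QuotientGroup.eq.2 hcu⟩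
  obtain ⟨a, b, hab⟩ := hnonab
  apply hab
  have h1 : ∀ s : S, s = 1 := by
    intro s
    have : s ∈ (commutator U).map f := by rw [hmapc]; trivial
    obtain ⟨c, hc, rfl⟩ := this
    exact hcK hc
  rw [h1 a, h1 b]

theorem serre_part {S : Type*} [Group S] (hsimple : IsSimpleGroup S)
    (hnonab : ∃ a b : S, a * b ≠ b * a)
    (N : Subgroup (GL (Fin 2) ℤ_[ℓ])) (hN : IsClosed (N : Set (GL (Fin 2) ℤ_[ℓ])))
    (ψ : N →* S) (hψ : Function.Surjective ψ) (x : N) (hx : x.1 ∈ Gam ℓ 1) : ψ x = 1 := by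
  obtain ⟨i, hi, hk⟩ := serre_kill hsimple hnonab N hN ψ hψ
  have hfin : Finite S := by
    obtain ⟨h, hh, -⟩ := lift_to_range ψ hψ
      ((GeneralLinearGroup.map (n := Fin 2) (PadicInt.toZModPow (p := ℓ) i)).comp N.subtype)
      (fun x hx => hk x hx)
    have : NeZero (ℓ ^ i) := ⟨pow_ne_zero _ (Fact.out : ℓ.Prime).ne_zero⟩
    have : Finite (GL (Fin 2) (ZMod (ℓ ^ i))) :=
      inferInstanceAs (Finite (Matrix (Fin 2) (Fin 2) (ZMod (ℓ ^ i)))ˣ)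
    exact Finite.of_surjective h hh
  rcases map_normal_bot_or_top hsimple ψ hψ ((Gam ℓ 1).subgroupOf N) with hb | ht
  · have : ψ x ∈ ((Gam ℓ 1).subgroupOf N).map ψ := ⟨x, hx, rfl⟩
    rw [hb] at this
    exact this
  exfalso
  refine pgroup_false hsimple hnonab ℓ ?_
  intro s
  have : s ∈ ((Gam ℓ 1).subgroupOf N).map ψ := by rw [ht]; trivial
  obtain ⟨y, hy, rfl⟩ := this
  refine ⟨i, ?_⟩
  rw [← map_pow]
  exact hk _ (Gam_anti i.le_succ (pow_pow_mem_Gam hy i))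

end SerrePart

section FullImage

open scoped commutatorElement

variable {ℓ : ℕ} [Fact ℓ.Prime]

/-- The determinant one part of a subgroup. -/
noncomputable def detOne (G : Subgroup (GL (Fin 2) ℤ_[ℓ])) : Subgroup (GL (Fin 2) ℤ_[ℓ]) :=
  G ⊓ (GeneralLinearGroup.det : GL (Fin 2) ℤ_[ℓ] →* ℤ_[ℓ]ˣ).ker

theorem detOne_reduction (h5 : 5 ≤ ℓ) (G : Subgroup (GL (Fin 2) ℤ_[ℓ]))
    (hred : ∀ A : SL(2, ZMod ℓ),
      (A : GL (Fin 2) (ZMod ℓ)) ∈ G.map (GeneralLinearGroup.map (PadicInt.toZMod (p := ℓ))))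
    (A : SL(2, ZMod ℓ)) : ∃ g ∈ detOne G, red g.1 = A.1 := by
  let ρ := GeneralLinearGroup.map (n := Fin 2) (PadicInt.toZMod (p := ℓ))
  let H : Subgroup SL(2, ZMod ℓ) := ((detOne G).map ρ).comap SpecialLinearGroup.toGL
  have hle : commutator SL(2, ZMod ℓ) ≤ H := by
    rw [commutator_def, Subgroup.commutator_le]
    intro B _ C _
    obtain ⟨g, hg, hgB⟩ := hred B
    obtain ⟨h, hh, hhC⟩ := hred C
    refine ⟨⁅g, h⁆, ⟨?_, ?_⟩, ?_⟩
    · rw [commutatorElement_def]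
      show _ ∈ G
      exact mul_mem (mul_mem (mul_mem hg hh) (inv_mem hg)) (inv_mem hh)
    · show _ ∈ (GeneralLinearGroup.det : GL (Fin 2) ℤ_[ℓ] →* ℤ_[ℓ]ˣ).ker
      rw [MonoidHom.mem_ker, map_commutatorElement,
        commutatorElement_eq_one_iff_mul_comm, mul_comm]
    · rw [map_commutatorElement, map_commutatorElement]
      exact congrArg₂ _ hgB hhC
  rw [sl2_perfect ℓ h5] at hle
  obtain ⟨g, hg, hgA⟩ := hle (Subgroup.mem_top A)
  exact ⟨g, hg, congrArg Units.val hgA⟩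

theorem lead_of_nilpotent (h5 : 5 ≤ ℓ) (g : GL (Fin 2) ℤ_[ℓ]) (a : Matrix (Fin 2) (Fin 2) (ZMod ℓ))
    (hg : red g.1 = 1 + a) (ha : a * a = 0) : Lead 1 (g ^ ℓ) a := by
  obtain ⟨Y, hY⟩ : ∃ Y, g.1 = 1 + Y := ⟨g.1 - 1, by abel⟩
  have hYa : red Y = a := by
    rw [hY, red_add, red_one] at hg
    exact add_left_cancel hg
  obtain ⟨C, hC⟩ := red_eq_zero (A := Y * Y) (by rw [red_mul, hYa, ha])
  obtain ⟨B, hB⟩ := prime_binom ℓ Fact.out Y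
  obtain ⟨k, hk⟩ := Nat.exists_eq_add_of_le (show 4 ≤ ℓ by omega)
  have hcast : (ℓ : Matrix (Fin 2) (Fin 2) ℤ_[ℓ]) = (ℓ : ℤ_[ℓ]) • 1 := by
    rw [← nsmul_one, ← Nat.cast_smul_eq_nsmul ℤ_[ℓ]]
  have hYl : Y ^ ℓ = (ℓ : ℤ_[ℓ]) • (ℓ : ℤ_[ℓ]) • (C * C * Y ^ k) := by
    have : Y ^ ℓ = (Y * Y) * (Y * Y) * Y ^ k := by
      have e : Y ^ ℓ = Y ^ (4 + k) := congrArg (fun m => Y ^ m) hk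
      rw [e, pow_add]; congr 1; noncomm_ring
    rw [this, hC]
    simp only [smul_mul_assoc, mul_smul_comm]
  refine ⟨Y + (ℓ : ℤ_[ℓ]) • (C * B + C * C * Y ^ k), ?_, by rw [red_add, red_smul, hYa, add_zero]⟩
  rw [Units.val_pow_eq_pow_val, hY, hB, hYl, pow_two, hC, hcast]
  simp only [smul_mul_assoc, one_mul]
  module

theorem trace_zero_lead_one (h5 : 5 ≤ ℓ) (D : Subgroup (GL (Fin 2) ℤ_[ℓ]))
    (hD : ∀ A : SL(2, ZMod ℓ), ∃ g ∈ D, red g.1 = A.1)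
    (a : Matrix (Fin 2) (Fin 2) (ZMod ℓ)) (ha : a.trace = 0) : ∃ x ∈ D, Lead 1 x a := by
  let V : AddSubmonoid (Matrix (Fin 2) (Fin 2) (ZMod ℓ)) :=
    { carrier := {a | ∃ x ∈ D, Lead 1 x a}
      zero_mem' := ⟨1, one_mem _, 0, by simp, by ext i j; simp [red_apply]⟩
      add_mem' := by
        rintro a b ⟨x, hx, hxa⟩ ⟨y, hy, hyb⟩
        exact ⟨x * y, mul_mem hx hy, lead_mul le_rfl hxa hyb⟩ }
  have hnil : ∀ b : Matrix (Fin 2) (Fin 2) (ZMod ℓ), (1 + b).det = 1 → b * b = 0 → b ∈ V := by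
    intro b hb hbb
    obtain ⟨g, hg, hgb⟩ := hD ⟨1 + b, hb⟩
    exact ⟨g ^ ℓ, pow_mem hg _, lead_of_nilpotent h5 g b hgb hbb⟩
  have hsm : ∀ (c : ZMod ℓ) b, b ∈ V → c • b ∈ V := by
    intro c b hb
    have : c • b = c.val • b := by
      rw [← Nat.cast_smul_eq_nsmul (ZMod ℓ), ZMod.natCast_zmod_val]
    rw [this]
    exact nsmul_mem hb _
  have h1 : !![0, 1; 0, 0] ∈ V := hnil _ (by simp [Matrix.det_fin_two]) (by ext i j; fin_cases i <;> fin_cases j <;> simp)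
  have h2 : !![0, 0; 1, 0] ∈ V := hnil _ (by simp [Matrix.det_fin_two]) (by ext i j; fin_cases i <;> fin_cases j <;> simp)
  have h3 : !![1, -1; 1, -1] ∈ V := hnil _ (by simp [Matrix.det_fin_two]) (by ext i j; fin_cases i <;> fin_cases j <;> simp)
  have e : a = a 0 0 • !![1, -1; 1, -1] + (a 0 1 + a 0 0) • !![0, 1; 0, 0]
      + (a 1 0 - a 0 0) • !![0, 0; 1, 0] := by
    rw [Matrix.trace_fin_two] at ha
    ext i j
    fin_cases i <;> fin_cases j <;> simp
    linear_combination ha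
  rw [e]
  exact add_mem (add_mem (hsm _ _ h3) (hsm _ _ h1)) (hsm _ _ h2)

theorem trace_of_det_one {n : ℕ} (hn : 1 ≤ n) {v : GL (Fin 2) ℤ_[ℓ]} (hv : v.1.det = 1)
    {a : Matrix (Fin 2) (Fin 2) (ZMod ℓ)} (h : Lead n v a) : a.trace = 0 := by
  obtain ⟨A, hA, rfl⟩ := h
  obtain ⟨i, rfl⟩ := Nat.exists_eq_add_of_le' hn
  have h0 : (ℓ : ℤ_[ℓ]) ^ (i + 1) ≠ 0 :=
    pow_ne_zero _ (by exact_mod_cast (Fact.out : ℓ.Prime).ne_zero)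
  have h1 : A 0 0 + A 1 1 = ℓ * (- ((ℓ : ℤ_[ℓ]) ^ i * (A 0 0 * A 1 1 - A 0 1 * A 1 0))) := by
    rw [hA, Matrix.det_fin_two] at hv
    simp at hv
    apply mul_left_cancel₀ h0
    linear_combination hv
  rw [Matrix.trace_fin_two, red_apply, red_apply, ← map_add, h1, map_mul, toZMod_ell, zero_mul]

theorem full_image (h5 : 5 ≤ ℓ) (G : Subgroup (GL (Fin 2) ℤ_[ℓ]))
    (hclosed : IsClosed (G : Set (GL (Fin 2) ℤ_[ℓ])))
    (hdet : G.map GeneralLinearGroup.det = ⊤)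
    (hred : ∀ A : SL(2, ZMod ℓ),
      (A : GL (Fin 2) (ZMod ℓ)) ∈ G.map (GeneralLinearGroup.map (PadicInt.toZMod (p := ℓ)))) :
    G = ⊤ := by
  have hD := detOne_reduction h5 G hred
  have hker : ∀ x : GL (Fin 2) ℤ_[ℓ], GeneralLinearGroup.det x = 1 → x.1.det = 1 :=
    fun x hx => congrArg Units.val hx
  have hlead : ∀ n, 1 ≤ n → ∀ a : Matrix (Fin 2) (Fin 2) (ZMod ℓ), a.trace = 0 →
      ∃ x ∈ detOne G, Lead n x a := by
    intro n hn a ha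
    obtain ⟨x, hx, hxa⟩ := trace_zero_lead_one h5 (detOne G) hD a ha
    obtain ⟨i, rfl⟩ := Nat.exists_eq_add_of_le hn
    exact ⟨_, pow_mem hx _, lead_pow_pow le_rfl (by omega) hxa i⟩
  have happ : ∀ x : GL (Fin 2) ℤ_[ℓ], GeneralLinearGroup.det x = 1 → ∀ n,
      ∃ g ∈ detOne G, g⁻¹ * x ∈ Gam ℓ (n + 1) := by
    intro x hx n
    induction n with
    | zero =>
      obtain ⟨g, hg, hgx⟩ := hD ⟨red x.1, by
        have h1 : (red x.1).det = PadicInt.toZMod x.1.det := (RingHom.map_det _ _).symm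
        rw [h1, hker x hx, map_one]⟩
      refine ⟨g, hg, inv_mul_mem_Gam.2 ?_⟩
      obtain ⟨B, hB⟩ := red_eq_zero (A := x.1 - g.1) (by rw [red_sub, hgx, sub_self])
      exact ⟨B, by rw [zero_add, pow_one, ← hB]; abel⟩
    | succ n ih =>
      obtain ⟨g, hg, hgx⟩ := ih
      obtain ⟨a, ha⟩ := exists_lead hgx
      have hdg : GeneralLinearGroup.det g = 1 := hg.2
      have htr := trace_of_det_one (by omega) (hker _ (by
        rw [map_mul, map_inv, hx, hdg, inv_one, mul_one])) ha
      obtain ⟨y, hy, hya⟩ := hlead (n + 1) (by omega) a htr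
      refine ⟨g * y, mul_mem hg hy, ?_⟩
      rw [_root_.mul_inv_rev, mul_assoc]
      exact lead_inv_mul hya ha
  have hSL : ∀ x : GL (Fin 2) ℤ_[ℓ], GeneralLinearGroup.det x = 1 → x ∈ G := by
    intro x hx
    refine mem_of_approx (G : Set _) hclosed x fun n => ?_
    obtain ⟨g, hg, hgx⟩ := happ x hx n
    exact ⟨g, hg.1, Gam_anti n.le_succ hgx⟩
  rw [eq_top_iff]
  intro x _
  have : GeneralLinearGroup.det x ∈ G.map GeneralLinearGroup.det := by rw [hdet]; trivial
  obtain ⟨g, hg, hgx⟩ := this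
  have h1 := hSL (g⁻¹ * x) (by rw [map_mul, map_inv, hgx, inv_mul_cancel])
  have h2 := mul_mem hg h1
  rwa [mul_inv_cancel_left] at h2

end FullImage

section Final

theorem final_aux
    (ℓ : ℕ) [Fact ℓ.Prime]
    (G : Subgroup (GL (Fin 2) ℤ_[ℓ]))
    (hclosed : IsClosed (G : Set (GL (Fin 2) ℤ_[ℓ])))
    (hdet : G.map Matrix.GeneralLinearGroup.det = ⊤)
    (S : Type*) [Group S] (hsimple : IsSimpleGroup S)
    (hnonab : ∃ a b : S, a * b ≠ b * a)
    (N : Subgroup (GL (Fin 2) ℤ_[ℓ])) (hNG : N ≤ G)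
    (hNclosed : IsClosed (N : Set (GL (Fin 2) ℤ_[ℓ])))
    (hNnormal : ∀ g ∈ G, ∀ n ∈ N, g * n * g⁻¹ ∈ N)
    (ψ : N →* S) (hψ : Function.Surjective ψ) :
    5 ≤ ℓ ∧ G = ⊤ ∧
      ∃ φ : SL(2, ZMod ℓ) →* S, Function.Surjective φ ∧
        ∀ x : SL(2, ZMod ℓ), φ x = 1 ↔ x = 1 ∨ x = -1 := by
  let ρ := GeneralLinearGroup.map (n := Fin 2) (PadicInt.toZMod (p := ℓ))
  obtain ⟨f, hf, -⟩ := lift_to_range ψ hψ (ρ.comp N.subtype) (by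
    intro x hx
    refine serre_part hsimple hnonab N hNclosed ψ hψ x ?_
    have h1 : red x.1.1 = 1 := congrArg Units.val (MonoidHom.mem_ker.1 hx)
    obtain ⟨B, hB⟩ := red_eq_zero (A := x.1.1 - 1) (by rw [red_sub, h1, red_one, sub_self])
    exact mem_Gam.2 ⟨B, by rw [pow_one, ← hB]; abel⟩)
  have hdet' : (G.map ρ).map GeneralLinearGroup.det = ⊤ := by
    rw [eq_top_iff]
    intro u _
    have hloc : IsLocalHom (PadicInt.toZMod (p := ℓ)) :=
      IsLocalHom.of_surjective _ (ZMod.ringHom_surjective _)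
    obtain ⟨v, hv⟩ := ZMod.ringHom_surjective (PadicInt.toZMod (p := ℓ)) u.1
    have hvu : IsUnit v := by
      apply isUnit_of_map_unit (PadicInt.toZMod (p := ℓ))
      rw [hv]; exact u.isUnit
    have : hvu.unit ∈ G.map GeneralLinearGroup.det := by rw [hdet]; trivial
    obtain ⟨g, hg, hgv⟩ := this
    refine ⟨ρ g, ⟨g, hg, rfl⟩, ?_⟩
    ext
    have h1 : (red g.1).det = PadicInt.toZMod g.1.det := (RingHom.map_det _ _).symm
    have h2 : g.1.det = v := congrArg Units.val hgv
    rw [h2, hv] at h1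
    exact h1
  obtain ⟨h5, hSL, hφ⟩ := finite_case ℓ (G.map ρ) (ρ.comp N.subtype).range
    (by rintro _ ⟨x, rfl⟩; exact ⟨x.1, hNG x.2, rfl⟩) hdet'
    (by
      rintro _ ⟨g, hg, rfl⟩ _ ⟨x, rfl⟩
      refine ⟨⟨g * x.1 * g⁻¹, hNnormal g hg x.1 x.2⟩, ?_⟩
      simp) hsimple hnonab f hf
  exact ⟨h5, full_image h5 G hclosed hdet hSL, hφ⟩

end Final

/-- Fix a prime `ℓ` and let `G` be a closed subgroup of `GL₂(ℤ_ℓ)` with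
`det(G) = ℤ_ℓ^×`. If `S` is a nonabelian simple group that occurs as a quotient of some closed
normal subgroup of `G`, then `ℓ ≥ 5`, `G = GL₂(ℤ_ℓ)`, and `S` is isomorphic to
`SL₂(𝔽_ℓ)/{±I}` (expressed by a surjective homomorphism `SL₂(𝔽_ℓ) → S` with kernel `{1, -1}`). -/
theorem nonabelian_simple_quotient_forces_full_image
    (ℓ : ℕ) [Fact ℓ.Prime]
    (G : Subgroup (GL (Fin 2) ℤ_[ℓ]))
    (hclosed : IsClosed (G : Set (GL (Fin 2) ℤ_[ℓ])))
    (hdet : G.map Matrix.GeneralLinearGroup.det = ⊤)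
    (S : Type*) [Group S] (hsimple : IsSimpleGroup S)
    (hnonab : ∃ a b : S, a * b ≠ b * a)
    (N : Subgroup (GL (Fin 2) ℤ_[ℓ])) (hNG : N ≤ G)
    (hNclosed : IsClosed (N : Set (GL (Fin 2) ℤ_[ℓ])))
    (hNnormal : ∀ g ∈ G, ∀ n ∈ N, g * n * g⁻¹ ∈ N)
    (ψ : N →* S) (hψ : Function.Surjective ψ) :
    5 ≤ ℓ ∧ G = ⊤ ∧
      ∃ φ : SL(2, ZMod ℓ) →* S, Function.Surjective φ ∧
        ∀ x : SL(2, ZMod ℓ), φ x = 1 ↔ x = 1 ∨ x = -1 :=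
  final_aux ℓ G hclosed hdet S hsimple hnonab N hNG hNclosed hNnormal ψ hψ
end

section
/- Let H be a closed normal subgroup of GL₂(ℤ₃). Let φ₃: GL₂(ℤ₃) → S₃ be the surjective homomorphism obtained by composing reduction modulo 3 with the quotient map GL₂(𝔽₃) → GL₂(𝔽₃)/[SL₂(𝔽₃),SL₂(𝔽₃)] ≅ S₃. Then either φ₃(H) = 1 or H ⊇ SL₂(ℤ₃). -/
open Matrix MatrixGroups

/-- The reduction map `GL₂(ℤ₃) → GL₂(𝔽₃)`. -/
noncomputable def red3 : GL (Fin 2) ℤ_[3] →* GL (Fin 2) (ZMod 3) :=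
  Matrix.GeneralLinearGroup.map (PadicInt.toZMod : ℤ_[3] →+* ZMod 3)

/-- The commutator subgroup `[SL₂(𝔽₃), SL₂(𝔽₃)]`, viewed inside `GL₂(𝔽₃)`. -/
def commSL2F3 : Subgroup (GL (Fin 2) (ZMod 3)) :=
  Subgroup.map (Matrix.SpecialLinearGroup.toGL : SL(2, ZMod 3) →* GL (Fin 2) (ZMod 3))
    (commutator (SL(2, ZMod 3)))

/-- `M` is the matrix of an element of `H`. -/
def InH (H : Subgroup (GL (Fin 2) ℤ_[3])) (M : Matrix (Fin 2) (Fin 2) ℤ_[3]) : Prop :=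
  ∃ h ∈ H, (h : Matrix (Fin 2) (Fin 2) ℤ_[3]) = M

theorem InH.mul {H : Subgroup (GL (Fin 2) ℤ_[3])} {M N : Matrix (Fin 2) (Fin 2) ℤ_[3]}
    (hM : InH H M) (hN : InH H N) : InH H (M * N) := by
  obtain ⟨h, hh, rfl⟩ := hM
  obtain ⟨k, hk, rfl⟩ := hN
  exact ⟨h * k, H.mul_mem hh hk, rfl⟩

theorem InH.inv {H : Subgroup (GL (Fin 2) ℤ_[3])} {M N : Matrix (Fin 2) (Fin 2) ℤ_[3]}
    (hM : InH H M) (hN : M * N = 1) : InH H N := by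
  obtain ⟨h, hh, rfl⟩ := hM
  refine ⟨h⁻¹, H.inv_mem hh, ?_⟩
  have : ((h⁻¹ : GL (Fin 2) ℤ_[3]) : Matrix (Fin 2) (Fin 2) ℤ_[3]) * ((h : Matrix _ _ _) * N)
      = N := by
    rw [← Matrix.mul_assoc, Units.inv_mul, Matrix.one_mul]
  rw [← this, hN, Matrix.mul_one]

theorem InH.conj {H : Subgroup (GL (Fin 2) ℤ_[3])} (hn : H.Normal)
    {M : Matrix (Fin 2) (Fin 2) ℤ_[3]}
    (hM : InH H M) (P Q : Matrix (Fin 2) (Fin 2) ℤ_[3]) (hPQ : P * Q = 1) :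
    InH H (P * M * Q) := by
  obtain ⟨h, hh, rfl⟩ := hM
  let g : GL (Fin 2) ℤ_[3] := ⟨P, Q, hPQ, mul_eq_one_comm.mp hPQ⟩
  refine ⟨g * h * g⁻¹, hn.conj_mem h hh g, ?_⟩
  rw [Units.val_mul, Units.val_mul]
  rfl

theorem isUnit_iff_toZMod (x : ℤ_[3]) : IsUnit x ↔ PadicInt.toZMod x ≠ 0 := by
  rw [Ne, ← RingHom.mem_ker, PadicInt.ker_toZMod, IsLocalRing.mem_maximalIdeal, mem_nonunits_iff,
    not_not]

/-- companion matrix gives all lower elementary matrices with unit entry -/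
theorem lower_unit {H : Subgroup (GL (Fin 2) ℤ_[3])} (hn : H.Normal) (T D D' : ℤ_[3])
    (hD : D * D' = 1) (hT : IsUnit T) (hC : InH H !![0, -D; 1, T]) (u : ℤ_[3]) (hu : IsUnit u) :
    InH H !![1, 0; u, 1] := by
  have h1 := hC.conj hn !![-1, 0; 0, 1] !![-1, 0; 0, 1] (by simp [Matrix.one_fin_two])
  have h2 : InH H !![T * D', 1; -D', 0] := hC.inv (by
    simp [Matrix.one_fin_two, hD])
  have h3 := (h1.mul h2).mul (h1.mul h2)
  have h4 : IsUnit (4 * T * D') := by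
    refine ((?_ : IsUnit (4 : ℤ_[3])).mul hT).mul (IsUnit.of_mul_eq_one_right _ hD)
    rw [isUnit_iff_toZMod, map_ofNat]; decide
  obtain ⟨w, hw⟩ := h4.exists_right_inv
  obtain ⟨v, hv⟩ := hu.exists_right_inv
  have h5 := h3.conj hn !![1, 0; 0, u * w] !![1, 0; 0, v * (4 * T * D')] (by
    simp [Matrix.one_fin_two]
    linear_combination hw * (u * v) + hv)
  convert h5 using 1
  ext i j
  fin_cases i <;> fin_cases j <;> simp
  · linear_combination -(D * D' + 1) * hD
  · linear_combination -u * hw - 2 * u * w * T * D' * hD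
  · linear_combination -(u * v) * hw - hv

theorem lower_all {H : Subgroup (GL (Fin 2) ℤ_[3])}
    (h : ∀ u : ℤ_[3], IsUnit u → InH H !![1, 0; u, 1]) (x : ℤ_[3]) : InH H !![1, 0; x, 1] := by
  by_cases hx : IsUnit x
  · exact h x hx
  · have h1 : IsUnit (x - 1) := by
      rw [isUnit_iff_toZMod] at hx ⊢
      push Not at hx
      rw [map_sub, hx, map_one]; decide
    have := (h _ h1).mul (h 1 isUnit_one)
    simpa using this

theorem all_SL {H : Subgroup (GL (Fin 2) ℤ_[3])} (hn : H.Normal)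
    (hL : ∀ x : ℤ_[3], InH H !![1, 0; x, 1]) (a b c d : ℤ_[3]) (hdet : a * d - b * c = 1) :
    InH H !![a, b; c, d] := by
  have hU : ∀ x : ℤ_[3], InH H !![1, x; 0, 1] := fun x => by
    have := (hL x).conj hn !![0, 1; 1, 0] !![0, 1; 1, 0] (by simp [Matrix.one_fin_two])
    simpa using this
  have key : ∀ a b c d : ℤ_[3], a * d - b * c = 1 → IsUnit c → InH H !![a, b; c, d] := by
    intro a b c d hdet hc
    obtain ⟨w, hw⟩ := hc.exists_right_inv
    have := ((hU ((a - 1) * w)).mul (hL c)).mul (hU ((d - 1) * w))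
    convert this using 1
    ext i j
    fin_cases i <;> fin_cases j <;> simp
    · linear_combination -(a - 1) * hw
    · linear_combination -(a - 1) * (d - 1) * w * hw - w * hdet - b * hw
    · linear_combination -(d - 1) * hw
  by_cases hc : IsUnit c
  · exact key a b c d hdet hc
  · have h1 : IsUnit (a + c) := by
      rw [isUnit_iff_toZMod] at hc ⊢
      push Not at hc
      intro h0
      have := congrArg (PadicInt.toZMod (p := 3)) hdet
      rw [map_add, hc, add_zero] at h0
      simp [hc, h0] at this
    have := (hL (-1)).mul (key a b (a + c) (b + d) (by linear_combination hdet) h1)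
    simpa using this

theorem comp_of_unit {H : Subgroup (GL (Fin 2) ℤ_[3])} (hn : H.Normal) (a b c d : ℤ_[3])
    (h : InH H !![a, b; c, d]) (hc : IsUnit c) : InH H !![0, -(a * d - b * c); 1, a + d] := by
  obtain ⟨w, hw⟩ := hc.exists_right_inv
  have := h.conj hn !![1, -a * w; 0, w] !![1, a; 0, c] (by
    simp [Matrix.one_fin_two]; constructor
    · linear_combination -a * hw
    · linear_combination hw)
  convert this using 1
  ext i j
  fin_cases i <;> fin_cases j <;> simp
  · linear_combination a * hw
  · linear_combination (a ^ 2 + a * d) * hw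
  · linear_combination -hw
  · linear_combination -(a + d) * hw

theorem InH.det {H : Subgroup (GL (Fin 2) ℤ_[3])} {a b c d : ℤ_[3]}
    (h : InH H !![a, b; c, d]) : IsUnit (a * d - b * c) := by
  obtain ⟨g, hg, h⟩ := h
  have : IsUnit (g : Matrix (Fin 2) (Fin 2) ℤ_[3]).det := (Matrix.isUnit_iff_isUnit_det _).mp g.isUnit
  rwa [h, Matrix.det_fin_two_of] at this

theorem SL_of_c {H : Subgroup (GL (Fin 2) ℤ_[3])} (hn : H.Normal) (a b c d : ℤ_[3])
    (h : InH H !![a, b; c, d]) (hc : IsUnit c) (hT : IsUnit (a + d)) (x y z w : ℤ_[3])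
    (hdet : x * w - y * z = 1) : InH H !![x, y; z, w] := by
  obtain ⟨D', hD⟩ := h.det.exists_right_inv
  exact all_SL hn (lower_all (lower_unit hn _ _ D' hD hT (comp_of_unit hn a b c d h hc))) _ _ _ _ hdet

theorem SL_of_good {H : Subgroup (GL (Fin 2) ℤ_[3])} (hn : H.Normal) (a b c d : ℤ_[3])
    (h : InH H !![a, b; c, d]) (hT : IsUnit (a + d))
    (hc : IsUnit c ∨ IsUnit b ∨ IsUnit (a - d)) (x y z w : ℤ_[3])
    (hdet : x * w - y * z = 1) : InH H !![x, y; z, w] := by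
  by_cases h1 : IsUnit c
  · exact SL_of_c hn a b c d h h1 hT _ _ _ _ hdet
  by_cases h2 : IsUnit b
  · have := h.conj hn !![0, 1; 1, 0] !![0, 1; 1, 0] (by simp [Matrix.one_fin_two])
    refine SL_of_c hn d c b a (by simpa using this) h2 (by rwa [add_comm]) _ _ _ _ hdet
  have h3 : IsUnit (a - d) := by tauto
  have := h.conj hn !![1, 0; 1, 1] !![1, 0; -1, 1] (by simp [Matrix.one_fin_two])
  refine SL_of_c hn (a - b) b ((a + c) - (b + d)) (b + d)
    (by simpa [sub_eq_add_neg, add_comm] using this) ?_ (by convert hT using 1; ring) _ _ _ _ hdet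
  rw [isUnit_iff_toZMod] at h1 h2 h3 ⊢
  push Not at h1 h2
  simpa [h1, h2] using h3

theorem fin_check : ∀ a b c d : ZMod 3, a * d - b * c ≠ 0 →
    (a * d - b * c = 1 ∧ (a + d = 0 ∨ (c = 0 ∧ b = 0 ∧ a - d = 0))) ∨
    (a + d ≠ 0 ∧ (c ≠ 0 ∨ b ≠ 0 ∨ a - d ≠ 0)) ∨ (a * d - b * c = -1 ∧ a + d = 0) := by
  decide

theorem fin_check2 : ∀ a b c d : ZMod 3, a * d - b * c = -1 → a + d = 0 →
    (a * (a - b) + b * (a + c - b - d) + (c * b + d * (b + d)) ≠ 0 ∧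
    (c * (a - b) + d * (a + c - b - d) ≠ 0 ∨ a * b + b * (b + d) ≠ 0 ∨
      a * (a - b) + b * (a + c - b - d) - (c * b + d * (b + d)) ≠ 0)) := by
  decide

set_option synthInstance.maxHeartbeats 400000 in
set_option synthInstance.maxSize 5000 in
theorem fin_list : ∀ a b c d : ZMod 3,
    (a * d - b * c = 1 ∧ (a + d = 0 ∨ (c = 0 ∧ b = 0 ∧ a - d = 0))) →
    (a = 1 ∧ b = 0 ∧ c = 0 ∧ d = 1) ∨ (a = 2 ∧ b = 2 ∧ c = 2 ∧ d = 1) ∨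
    (a = 2 ∧ b = 1 ∧ c = 1 ∧ d = 1) ∨ (a = 1 ∧ b = 2 ∧ c = 2 ∧ d = 2) ∨
    (a = 2 ∧ b = 0 ∧ c = 0 ∧ d = 2) ∨ (a = 1 ∧ b = 1 ∧ c = 1 ∧ d = 2) ∨
    (a = 0 ∧ b = 2 ∧ c = 1 ∧ d = 0) ∨ (a = 0 ∧ b = 1 ∧ c = 2 ∧ d = 0) := by
  decide

theorem comm_mem_aux (g : GL (Fin 2) (ZMod 3)) (A B : SL(2, ZMod 3))
    (h : A.1 * B.1 = g.1 * (B.1 * A.1)) :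
    g ∈ commSL2F3 := by
  refine ⟨A * B * A⁻¹ * B⁻¹, Subgroup.commutator_mem_commutator (Subgroup.mem_top A) (Subgroup.mem_top B), ?_⟩
  have h' : (Matrix.SpecialLinearGroup.toGL A : GL (Fin 2) (ZMod 3)) *
      Matrix.SpecialLinearGroup.toGL B =
      g * (Matrix.SpecialLinearGroup.toGL B * Matrix.SpecialLinearGroup.toGL A) := by
    apply Units.ext
    rw [Units.val_mul, Units.val_mul, Units.val_mul]
    exact h
  rw [map_mul, map_mul, map_mul, h', map_inv, map_inv]
  group

theorem comm_mem (g : GL (Fin 2) (ZMod 3))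
    (h : g 0 0 * g 1 1 - g 0 1 * g 1 0 = 1 ∧ (g 0 0 + g 1 1 = 0 ∨
      (g 1 0 = 0 ∧ g 0 1 = 0 ∧ g 0 0 - g 1 1 = 0))) : g ∈ commSL2F3 := by
  have hg := Matrix.eta_fin_two (g : Matrix (Fin 2) (Fin 2) (ZMod 3))
  rcases fin_list _ _ _ _ h with
    ⟨h1, h2, h3, h4⟩ | ⟨h1, h2, h3, h4⟩ | ⟨h1, h2, h3, h4⟩ | ⟨h1, h2, h3, h4⟩ |
    ⟨h1, h2, h3, h4⟩ | ⟨h1, h2, h3, h4⟩ | ⟨h1, h2, h3, h4⟩ | ⟨h1, h2, h3, h4⟩ <;>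
    rw [h1, h2, h3, h4] at hg
  · refine comm_mem_aux g ⟨!![0, 1; 2, 0], by decide⟩ ⟨!![0, 1; 2, 0], by decide⟩ ?_
    rw [hg]; decide
  · refine comm_mem_aux g ⟨!![0, 1; 2, 0], by decide⟩ ⟨!![0, 1; 2, 1], by decide⟩ ?_
    rw [hg]; decide
  · refine comm_mem_aux g ⟨!![0, 1; 2, 0], by decide⟩ ⟨!![0, 1; 2, 2], by decide⟩ ?_
    rw [hg]; decide
  · refine comm_mem_aux g ⟨!![0, 1; 2, 0], by decide⟩ ⟨!![1, 1; 0, 1], by decide⟩ ?_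
    rw [hg]; decide
  · refine comm_mem_aux g ⟨!![0, 1; 2, 0], by decide⟩ ⟨!![1, 1; 1, 2], by decide⟩ ?_
    rw [hg]; decide
  · refine comm_mem_aux g ⟨!![0, 1; 2, 0], by decide⟩ ⟨!![1, 1; 2, 0], by decide⟩ ?_
    rw [hg]; decide
  · refine comm_mem_aux g ⟨!![0, 1; 2, 1], by decide⟩ ⟨!![0, 1; 2, 2], by decide⟩ ?_
    rw [hg]; decide
  · refine comm_mem_aux g ⟨!![0, 1; 2, 2], by decide⟩ ⟨!![0, 1; 2, 1], by decide⟩ ?_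
    rw [hg]; decide

/-- Let `H` be a closed normal subgroup of `GL₂(ℤ₃)`. Let
`φ₃ : GL₂(ℤ₃) → S₃` be the surjective homomorphism obtained by composing reduction modulo 3
with the quotient map `GL₂(𝔽₃) → GL₂(𝔽₃)/[SL₂(𝔽₃),SL₂(𝔽₃)] ≅ S₃` (so `φ₃` is surjective with
kernel the preimage under reduction of `[SL₂(𝔽₃),SL₂(𝔽₃)]`). Then either `φ₃(H) = 1` or
`H ⊇ SL₂(ℤ₃)`. -/
theorem normal_closed_subgroup_GL2_Z3_trichotomy
    (φ : GL (Fin 2) ℤ_[3] →* Equiv.Perm (Fin 3))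
    (hsurj : Function.Surjective φ)
    (hker : φ.ker = commSL2F3.comap red3)
    (H : Subgroup (GL (Fin 2) ℤ_[3]))
    (hclosed : IsClosed (H : Set (GL (Fin 2) ℤ_[3])))
    (hnormal : H.Normal) :
    H.map φ = ⊥ ∨
      (Matrix.GeneralLinearGroup.det : GL (Fin 2) ℤ_[3] →* ℤ_[3]ˣ).ker ≤ H := by
  rw [or_iff_not_imp_left]
  intro hne
  have hex : ∃ h ∈ H, φ h ≠ 1 := by
    by_contra! hcon
    apply hne
    rw [eq_bot_iff]
    rintro _ ⟨h, hh, rfl⟩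
    exact hcon h hh
  obtain ⟨h, hh, hφ⟩ := hex
  have hnot : red3 h ∉ commSL2F3 := fun hmem => hφ (by
    rw [← MonoidHom.mem_ker, hker]; exact hmem)
  have hin : InH H !![h 0 0, h 0 1; h 1 0, h 1 1] := ⟨h, hh, Matrix.eta_fin_two _⟩
  have hnot' := mt (comm_mem (red3 h)) hnot
  have e : ∀ i j, (red3 h) i j = PadicInt.toZMod (h i j) := fun i j => rfl
  simp only [e] at hnot'
  have hd := hin.det
  rw [isUnit_iff_toZMod] at hd
  generalize h 0 0 = a at *
  generalize h 0 1 = b at *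
  generalize h 1 0 = c at *
  generalize h 1 1 = d at *
  have hall : ∀ x y z w : ℤ_[3], x * w - y * z = 1 → InH H !![x, y; z, w] := by
    rcases fin_check _ _ _ _ (by simpa using hd) with h1 | h1 | h1
    · exact absurd h1 hnot'
    · refine SL_of_good hnormal a b c d hin ?_ ?_ <;> simp only [isUnit_iff_toZMod, map_add, map_sub]
      exacts [h1.1, h1.2]
    · have h2 := fin_check2 _ _ _ _ h1.1 h1.2
      have h3 := hin.mul (hin.conj hnormal !![1, 0; 1, 1] !![1, 0; -1, 1]
        (by simp [Matrix.one_fin_two]))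
      refine SL_of_good hnormal (a * (a - b) + b * (a + c - b - d)) (a * b + b * (b + d))
        (c * (a - b) + d * (a + c - b - d)) (c * b + d * (b + d)) ?_ ?_ ?_
      · convert h3 using 1
        ext i j
        fin_cases i <;> fin_cases j <;> simp <;> ring
      all_goals simp only [isUnit_iff_toZMod, map_add, map_sub, map_mul]
      exacts [h2.1, h2.2]
  intro g hg
  have hg1 : (g : Matrix (Fin 2) (Fin 2) ℤ_[3]).det = 1 := congrArg Units.val hg
  rw [Matrix.det_fin_two] at hg1
  obtain ⟨k, hk, hkg⟩ := hall _ _ _ _ hg1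
  rw [← Matrix.eta_fin_two] at hkg
  rwa [← Units.ext hkg]
end

section
/- Let G be a closed subgroup of GL₂(ℤ_N), where N = ∏_p p^{e_p} > 1 with e₂ ≠ 1. For each prime ℓ | N, set N_ℓ = ℓ^{e_ℓ} · ∏_{p | N, p² ≡ 1 mod ℓ} p. Suppose for each prime ℓ | N, the image of G in GL₂(ℤ/N_ℓ ℓ ℤ) contains all matrices congruent to I modulo N_ℓ. Then G is an open subgroup of GL₂(ℤ_N) of level dividing N. -/
open Matrix

instance (N : ℕ) (p : {q : ℕ // q.Prime ∧ q ∣ N}) : Fact (Nat.Prime p.1) := ⟨p.2.1⟩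

/-- The ring `ℤ_N = ∏_{ℓ ∣ N} ℤ_ℓ`. -/
abbrev ZN (N : ℕ) : Type := (p : {q : ℕ // q.Prime ∧ q ∣ N}) → ℤ_[p.1]

/-- `A ≡ B (mod m)` in `GL₂(ℤ_N)`: for each prime `p ∣ N`, the components of `A` and `B` at `p`
agree modulo `p^{v_p(m)}`. -/
def CongrMod (N m : ℕ) (A B : GL (Fin 2) (ZN N)) : Prop :=
  ∀ p : {q : ℕ // q.Prime ∧ q ∣ N},
    Matrix.GeneralLinearGroup.map
      ((PadicInt.toZModPow (m.factorization p.1)).comp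
        (Pi.evalRingHom (fun q : {q : ℕ // q.Prime ∧ q ∣ N} => ℤ_[q.1]) p)) A
    = Matrix.GeneralLinearGroup.map
      ((PadicInt.toZModPow (m.factorization p.1)).comp
        (Pi.evalRingHom (fun q : {q : ℕ // q.Prime ∧ q ∣ N} => ℤ_[q.1]) p)) B

/-- `N_ℓ = ℓ^{e_ℓ} ∏_{p ∣ N, p² ≡ 1 mod ℓ} p`. -/
def Nell (N ℓ : ℕ) : ℕ :=
  ℓ ^ (N.factorization ℓ) *
    ∏ p ∈ N.primeFactors.filter (fun p : ℕ => ((p : ZMod ℓ) ^ 2 = 1)), p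

/-- Local component of `A` at `p`. -/
noncomputable def locComp {N : ℕ} (p : {q : ℕ // q.Prime ∧ q ∣ N}) (A : GL (Fin 2) (ZN N)) :
    Matrix (Fin 2) (Fin 2) ℤ_[p.1] :=
  A.1.map (Pi.evalRingHom (fun q : {q : ℕ // q.Prime ∧ q ∣ N} => ℤ_[q.1]) p)

/-- Reduction of the component at `p` modulo `p ^ n`. -/
noncomputable def Rd {N : ℕ} (p : {q : ℕ // q.Prime ∧ q ∣ N}) (n : ℕ) :
    GL (Fin 2) (ZN N) →* GL (Fin 2) (ZMod (p.1 ^ n)) :=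
  Matrix.GeneralLinearGroup.map
      ((PadicInt.toZModPow n).comp
        (Pi.evalRingHom (fun q : {q : ℕ // q.Prime ∧ q ∣ N} => ℤ_[q.1]) p))

lemma congrMod_iff {N m : ℕ} {A B : GL (Fin 2) (ZN N)} :
    CongrMod N m A B ↔ ∀ p, Rd p (m.factorization p.1) A = Rd p (m.factorization p.1) B :=
  Iff.rfl

lemma locComp_mul {N : ℕ} (p : {q : ℕ // q.Prime ∧ q ∣ N}) (A B : GL (Fin 2) (ZN N)) :
    locComp p (A * B) = locComp p A * locComp p B := by
  simp [locComp, Matrix.map_mul]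

lemma locComp_one {N : ℕ} (p : {q : ℕ // q.Prime ∧ q ∣ N}) :
    locComp p (1 : GL (Fin 2) (ZN N)) = 1 := by
  simp [locComp]

lemma locComp_pow {N : ℕ} (p : {q : ℕ // q.Prime ∧ q ∣ N}) (A : GL (Fin 2) (ZN N)) (m : ℕ) :
    locComp p (A ^ m) = locComp p A ^ m := by
  induction m with
  | zero => simp [locComp_one]
  | succ m ih => rw [pow_succ, pow_succ, locComp_mul, ih]

lemma toZModPow_eq_iff {p : ℕ} [Fact p.Prime] (n : ℕ) (x y : ℤ_[p]) :
    PadicInt.toZModPow n x = PadicInt.toZModPow n y ↔ ∃ e, x = y + (p : ℤ_[p]) ^ n * e := by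
  rw [← sub_eq_zero, ← map_sub, ← RingHom.mem_ker, PadicInt.ker_toZModPow,
    Ideal.mem_span_singleton']
  constructor
  · rintro ⟨a, ha⟩
    exact ⟨a, by rw [mul_comm, ha]; ring⟩
  · rintro ⟨a, ha⟩
    exact ⟨a, by rw [ha]; ring⟩

lemma Rd_eq_iff {N : ℕ} (p : {q : ℕ // q.Prime ∧ q ∣ N}) (n : ℕ) (A B : GL (Fin 2) (ZN N)) :
    Rd p n A = Rd p n B ↔
      ∃ E : Matrix (Fin 2) (Fin 2) ℤ_[p.1], locComp p A = locComp p B + ((p.1 : ℤ_[p.1]) ^ n) • E := by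
  have h : Rd p n A = Rd p n B ↔ ∀ i j, PadicInt.toZModPow n (locComp p A i j) =
      PadicInt.toZModPow n (locComp p B i j) := by
    constructor
    · intro h i j
      have := congrArg (fun g : GL (Fin 2) (ZMod (p.1 ^ n)) => g.1 i j) h
      simpa [Rd, locComp] using this
    · intro h
      ext i j
      simpa [Rd, locComp] using h i j
  rw [h]
  simp only [toZModPow_eq_iff]
  constructor
  · intro h
    choose E hE using h
    refine ⟨Matrix.of E, ?_⟩
    ext i j
    simp [hE i j]
  · rintro ⟨E, hE⟩ i j
    exact ⟨E i j, by rw [hE]; simp⟩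

lemma Rd_eq_one_iff {N : ℕ} (p : {q : ℕ // q.Prime ∧ q ∣ N}) (n : ℕ) (A : GL (Fin 2) (ZN N)) :
    Rd p n A = 1 ↔
      ∃ E : Matrix (Fin 2) (Fin 2) ℤ_[p.1], locComp p A = 1 + ((p.1 : ℤ_[p.1]) ^ n) • E := by
  rw [← map_one (Rd p n), Rd_eq_iff, locComp_one]

lemma Rd_mono {N : ℕ} (p : {q : ℕ // q.Prime ∧ q ∣ N}) {m n : ℕ} (hmn : m ≤ n)
    {A B : GL (Fin 2) (ZN N)} (h : Rd p n A = Rd p n B) : Rd p m A = Rd p m B := by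
  rw [Rd_eq_iff] at h ⊢
  obtain ⟨E, hE⟩ := h
  obtain ⟨d, rfl⟩ := Nat.exists_eq_add_of_le hmn
  exact ⟨((p.1 : ℤ_[p.1]) ^ d) • E, by rw [hE, smul_smul, pow_add]⟩

lemma Rd_mono_one {N : ℕ} (p : {q : ℕ // q.Prime ∧ q ∣ N}) {m n : ℕ} (hmn : m ≤ n)
    {A : GL (Fin 2) (ZN N)} (h : Rd p n A = 1) : Rd p m A = 1 := by
  rw [← map_one (Rd p m)]
  exact Rd_mono p hmn (by rw [h, map_one])

/-- Elements with a prescribed component. -/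
lemma exists_single {N : ℕ} (p : {q : ℕ // q.Prime ∧ q ∣ N}) (X : GL (Fin 2) ℤ_[p.1]) :
    ∃ A : GL (Fin 2) (ZN N), locComp p A = X.1 ∧ ∀ q, q ≠ p → locComp q A = 1 := by
  classical
  let f : Matrix (Fin 2) (Fin 2) ℤ_[p.1] → Matrix (Fin 2) (Fin 2) (ZN N) := fun M =>
    Matrix.of fun i j => Function.update ((1 : Matrix (Fin 2) (Fin 2) (ZN N)) i j) p (M i j)
  have hf : ∀ M M' : Matrix (Fin 2) (Fin 2) ℤ_[p.1], M * M' = 1 → f M * f M' = 1 := by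
    intro M M' h
    ext i j q
    by_cases hq : q = p
    · subst hq
      have := congrFun (congrFun h i) j
      rw [Matrix.mul_apply] at this ⊢
      simp only [f, Matrix.of_apply, Finset.sum_apply, Pi.mul_apply, Function.update_self, this]
      rw [Matrix.one_apply, Matrix.one_apply]
      split_ifs <;> rfl
    · rw [Matrix.mul_apply]
      simp only [f, Matrix.of_apply, Finset.sum_apply, Pi.mul_apply,
        Function.update_of_ne hq]
      rw [← mul_one (1 : Matrix (Fin 2) (Fin 2) (ZN N)), Matrix.mul_apply]
      simp
  refine ⟨⟨f X.1, f X⁻¹.1, hf _ _ (by simp), hf _ _ (by simp)⟩, ?_, ?_⟩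
  · ext i j
    simp [locComp, f]
  · intro q hq
    ext i j
    simp only [locComp, f, Matrix.map_apply, Matrix.of_apply, Pi.evalRingHom_apply,
      Function.update_of_ne hq]
    rw [Matrix.one_apply, Matrix.one_apply]
    split_ifs <;> rfl

lemma exists_GL {p : ℕ} [Fact p.Prime] {n : ℕ} (hn : 1 ≤ n) (B : Matrix (Fin 2) (Fin 2) ℤ_[p]) :
    ∃ X : GL (Fin 2) ℤ_[p], X.1 = 1 + ((p : ℤ_[p]) ^ n) • B := by
  have hu : IsUnit (1 + ((p : ℤ_[p]) ^ n) • B) := by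
    rw [Matrix.isUnit_iff_isUnit_det, Matrix.det_fin_two]
    by_contra hcon
    rw [← mem_nonunits_iff, ← IsLocalRing.mem_maximalIdeal, PadicInt.maximalIdeal_eq_span_p,
      Ideal.mem_span_singleton] at hcon
    have hp : (p : ℤ_[p]) ∣ 1 := by
      obtain ⟨d, rfl⟩ := Nat.exists_eq_add_of_le hn
      obtain ⟨c, hc⟩ := hcon
      refine ⟨c - (p : ℤ_[p]) ^ d * (B 0 0 + B 1 1 + (p : ℤ_[p]) ^ (1 + d) * (B 0 0 * B 1 1) -
        (p : ℤ_[p]) ^ (1 + d) * (B 0 1 * B 1 0)), ?_⟩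
      simp at hc
      linear_combination hc
    exact PadicInt.prime_p.not_isUnit (isUnit_of_dvd_one hp)
  obtain ⟨u, hu⟩ := hu
  exact ⟨u, hu⟩

lemma one_add_pow_expand {R : Type*} [Ring R] (x : R) (m : ℕ) :
    ∃ r : R, (1 + x) ^ m = 1 + m • x + (m.choose 2) • x ^ 2 + x ^ 3 * r := by
  induction m with
  | zero => exact ⟨0, by simp⟩
  | succ m ih =>
    obtain ⟨r, hr⟩ := ih
    refine ⟨r * (1 + x) + (m.choose 2 : R), ?_⟩
    have h : (m + 1).choose 2 = m + m.choose 2 := by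
      rw [Nat.choose_succ_succ' m 1, Nat.choose_one_right]
    rw [pow_succ, hr, h]
    simp only [nsmul_eq_mul, Nat.cast_add, Nat.cast_one]
    have hc := (Nat.cast_commute (m.choose 2) (x ^ 3)).eq
    simp only [mul_add, add_mul, mul_one, one_mul, ← hc]
    simp only [pow_succ, pow_zero, one_mul, mul_assoc]
    abel

/-- General power congruence for scalar multiples. -/
lemma smul_pow_expand {R M : Type*} [CommRing R] [Ring M] [Algebra R M] (c d : R) (Y : M) (m : ℕ)
    (h1 : d ∣ (m.choose 2 : R) * c ^ 2) (h2 : d ∣ c ^ 3) :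
    ∃ E : M, (1 + c • Y) ^ m = 1 + ((m : R) * c) • Y + d • E := by
  obtain ⟨r, hr⟩ := one_add_pow_expand (c • Y) m
  obtain ⟨u, hu⟩ := h1
  obtain ⟨v, hv⟩ := h2
  refine ⟨u • Y ^ 2 + v • (Y ^ 3 * r), ?_⟩
  rw [hr, smul_add, smul_smul, smul_smul, ← hu, ← hv, smul_pow, smul_pow, smul_mul_assoc,
    mul_smul, mul_smul, ← Nat.cast_smul_eq_nsmul R, ← Nat.cast_smul_eq_nsmul R]
  abel

/-- Raising to the `p`-th power. -/
lemma Rd_pow_p {N : ℕ} (p : {q : ℕ // q.Prime ∧ q ∣ N}) {n : ℕ} (hn : 1 ≤ n)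
    {g : GL (Fin 2) (ZN N)} (h : Rd p n g = 1) : Rd p (n + 1) (g ^ p.1) = 1 := by
  rw [Rd_eq_one_iff] at h ⊢
  obtain ⟨Y, hY⟩ := h
  obtain ⟨E, hE⟩ := smul_pow_expand ((p.1 : ℤ_[p.1]) ^ n) ((p.1 : ℤ_[p.1]) ^ (n + 1)) Y p.1
    (Dvd.dvd.mul_left (by rw [← pow_mul]; exact pow_dvd_pow _ (by omega)) _)
    (by rw [← pow_mul]; exact pow_dvd_pow _ (by omega))
  refine ⟨Y + E, ?_⟩
  rw [locComp_pow, hY, hE, smul_add, pow_succ', add_assoc]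

lemma Rd_pow_pow {N : ℕ} (p : {q : ℕ // q.Prime ∧ q ∣ N})
    {g : GL (Fin 2) (ZN N)} (h : Rd p 1 g = 1) (k : ℕ) : Rd p (k + 1) (g ^ (p.1 ^ k)) = 1 := by
  induction k with
  | zero => simpa using h
  | succ k ih =>
    have hk : g ^ (p.1 ^ (k + 1)) = (g ^ (p.1 ^ k)) ^ p.1 := by rw [pow_succ, pow_mul]
    rw [hk]
    exact Rd_pow_p p (by omega) ih

lemma card_aux (p q : ℕ) [Fact p.Prime] (h : q = p) :
    Nat.card (GL (Fin 2) (ZMod q)) = (p ^ 2 - 1) * (p ^ 2 - p) := by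
  subst h
  rw [Matrix.card_GL_field]
  simp [Fin.prod_univ_two, ZMod.card]

lemma coprime_card {p ℓ : ℕ} (hp : p.Prime) (hl : ℓ.Prime) (hne : p ≠ ℓ)
    (h : ¬ ((p : ZMod ℓ) ^ 2 = 1)) : Nat.Coprime ((p ^ 2 - 1) * (p ^ 2 - p)) ℓ := by
  have h1 : 1 ≤ p := hp.one_lt.le
  have h2 : p ≤ p ^ 2 := by nlinarith
  rw [Nat.coprime_comm, Nat.Prime.coprime_iff_not_dvd hl, hl.dvd_mul]
  have : Fact ℓ.Prime := ⟨hl⟩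
  have hp0 : (p : ZMod ℓ) ≠ 0 := by
    rw [Ne, ZMod.natCast_eq_zero_iff, Nat.prime_dvd_prime_iff_eq hl hp]
    exact fun h => hne h.symm
  rintro (hd | hd)
  · rw [← ZMod.natCast_eq_zero_iff, Nat.cast_sub (h1.trans h2)] at hd
    apply h
    push_cast at hd
    exact sub_eq_zero.mp hd
  · rw [← ZMod.natCast_eq_zero_iff, Nat.cast_sub h2] at hd
    push_cast at hd
    have : (p : ZMod ℓ) = 1 := by
      have h3 : (p : ZMod ℓ) * (p - 1) = 0 := by linear_combination hd
      rcases mul_eq_zero.mp h3 with h4 | h4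
      · exact absurd h4 hp0
      · exact sub_eq_zero.mp h4
    exact h (by rw [this]; ring)

/-- For each prime `p ≠ ℓ` some power prime to `ℓ` kills the component modulo `p ^ k`. -/
lemma exists_exp {N : ℕ} (p : {q : ℕ // q.Prime ∧ q ∣ N}) {ℓ : ℕ} (hl : ℓ.Prime) (hne : p.1 ≠ ℓ)
    (g : GL (Fin 2) (ZN N)) (h : ((p.1 : ZMod ℓ) ^ 2 = 1) → Rd p 1 g = 1) (k : ℕ) :
    ∃ m : ℕ, m.Coprime ℓ ∧ Rd p k (g ^ m) = 1 := by
  have hpl : (p.1 ^ k).Coprime ℓ :=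
    Nat.Coprime.pow_left k ((Nat.coprime_primes p.2.1 hl).2 hne)
  by_cases hc : ((p.1 : ZMod ℓ) ^ 2 = 1)
  · exact ⟨p.1 ^ k, hpl, Rd_mono_one p (Nat.le_succ k) (Rd_pow_pow p (h hc) k)⟩
  · refine ⟨(p.1 ^ 2 - 1) * (p.1 ^ 2 - p.1) * p.1 ^ k,
      Nat.Coprime.mul_left (coprime_card p.2.1 hl hne hc) hpl, ?_⟩
    rw [pow_mul]
    refine Rd_mono_one p (Nat.le_succ k) (Rd_pow_pow p ?_ k)
    rw [map_pow, ← card_aux p.1 (p.1 ^ 1) (pow_one _)]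
    exact pow_card_eq_one'

lemma exists_exp_all {N : ℕ} {ℓ : ℕ} (hl : ℓ.Prime)
    (g : GL (Fin 2) (ZN N))
    (h : ∀ p : {q : ℕ // q.Prime ∧ q ∣ N}, p.1 ≠ ℓ → ((p.1 : ZMod ℓ) ^ 2 = 1) → Rd p 1 g = 1)
    (k : ℕ) (S : Finset {q : ℕ // q.Prime ∧ q ∣ N}) :
    ∃ m : ℕ, m.Coprime ℓ ∧ ∀ p ∈ S, p.1 ≠ ℓ → Rd p k (g ^ m) = 1 := by
  classical
  induction S using Finset.induction_on with
  | empty => exact ⟨1, by simp, by simp⟩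
  | insert a S ha ih =>
    obtain ⟨m, hm, hS⟩ := ih
    by_cases hal : a.1 = ℓ
    · refine ⟨m, hm, fun p hp hpl => ?_⟩
      rcases Finset.mem_insert.1 hp with rfl | hp
      · exact absurd hal hpl
      · exact hS p hp hpl
    · obtain ⟨m', hm', ha'⟩ := exists_exp a hl hal g (h a hal) k
      refine ⟨m * m', Nat.Coprime.mul_left hm hm', fun p hp hpl => ?_⟩
      rcases Finset.mem_insert.1 hp with rfl | hp
      · rw [mul_comm, pow_mul, map_pow, ha', one_pow]
      · rw [pow_mul, map_pow, hS p hp hpl, one_pow]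

lemma Nell_fact_self {N ℓ : ℕ} (hl : ℓ.Prime) : (Nell N ℓ).factorization ℓ = N.factorization ℓ := by
  have : Fact ℓ.Prime := ⟨hl⟩
  have h0 : ∏ p ∈ N.primeFactors.filter (fun p : ℕ => ((p : ZMod ℓ) ^ 2 = 1)), p ≠ 0 := by
    rw [Finset.prod_ne_zero_iff]
    intro a ha
    exact (Nat.prime_of_mem_primeFactors (Finset.mem_filter.1 ha).1).ne_zero
  rw [Nell, Nat.factorization_mul (pow_ne_zero _ hl.ne_zero) h0, Finsupp.add_apply,
    hl.factorization_pow, Finsupp.single_eq_same, Nat.add_eq_left]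
  apply Nat.factorization_eq_zero_of_not_dvd
  rw [hl.prime.dvd_finsetProd_iff]
  rintro ⟨a, ha, hd⟩
  rw [Finset.mem_filter] at ha
  rw [Nat.prime_dvd_prime_iff_eq hl (Nat.prime_of_mem_primeFactors ha.1)] at hd
  subst hd
  simp at ha

lemma Nell_ne_zero {N ℓ : ℕ} (hl : ℓ.Prime) : Nell N ℓ ≠ 0 := by
  refine mul_ne_zero (pow_ne_zero _ hl.ne_zero) ?_
  rw [Finset.prod_ne_zero_iff]
  intro a ha
  exact (Nat.prime_of_mem_primeFactors (Finset.mem_filter.1 ha).1).ne_zero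

lemma Nell_dvd {N ℓ p : ℕ} (hN : N ≠ 0) (hp : p.Prime) (hpN : p ∣ N)
    (h : ((p : ZMod ℓ) ^ 2 = 1)) : p ∣ Nell N ℓ :=
  Dvd.dvd.mul_left (Finset.dvd_prod_of_mem (fun p : ℕ => p)
    (Finset.mem_filter.2 ⟨Nat.mem_primeFactors.2 ⟨hp, hpN, hN⟩, h⟩)) _

lemma e_pos (N : ℕ) (hN : 1 < N) (l : {q : ℕ // q.Prime ∧ q ∣ N}) : 1 ≤ N.factorization l.1 :=
  l.2.1.factorization_pos_of_dvd (by omega) l.2.2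

lemma base_step (N : ℕ) (hN : 1 < N)
    (G : Subgroup (GL (Fin 2) (ZN N)))
    (hcond : ∀ ℓ ∈ N.primeFactors, ∀ A : GL (Fin 2) (ZN N),
      CongrMod N (Nell N ℓ) A 1 → ∃ g ∈ G, CongrMod N (Nell N ℓ * ℓ) g A)
    (l : {q : ℕ // q.Prime ∧ q ∣ N}) (k : ℕ) (B : Matrix (Fin 2) (Fin 2) ℤ_[l.1]) :
    ∃ g ∈ G, (∃ E : Matrix (Fin 2) (Fin 2) ℤ_[l.1],
      locComp l g = 1 + ((l.1 : ℤ_[l.1]) ^ N.factorization l.1) • B +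
        ((l.1 : ℤ_[l.1]) ^ (N.factorization l.1 + 1)) • E) ∧
      ∀ p, p ≠ l → Rd p k g = 1 := by
  classical
  have hN0 : N ≠ 0 := by omega
  have he := e_pos N hN l
  have hl := l.2.1
  set e := N.factorization l.1 with hedef
  obtain ⟨X, hX⟩ := exists_GL he B
  obtain ⟨A, hA, hA'⟩ := exists_single l X
  rw [hX] at hA
  obtain ⟨g, hg, hgA⟩ := hcond l.1 (Nat.mem_primeFactors.2 ⟨hl, l.2.2, hN0⟩) A (by
    rw [congrMod_iff]
    intro p
    rw [map_one, Rd_eq_one_iff]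
    by_cases hp : p = l
    · subst hp
      rw [Nell_fact_self hl]
      exact ⟨B, hA⟩
    · exact ⟨0, by rw [hA' p hp]; simp⟩)
  rw [congrMod_iff] at hgA
  have hgl := hgA l
  rw [Nat.factorization_mul (Nell_ne_zero hl) hl.ne_zero, Finsupp.add_apply, Nell_fact_self hl,
    hl.factorization_self, ← hedef, Rd_eq_iff, hA] at hgl
  obtain ⟨E, hE⟩ := hgl
  have : Fintype {q : ℕ // q.Prime ∧ q ∣ N} :=
    Fintype.ofFinset N.primeFactors (fun x => by
      rw [Nat.mem_primeFactors]; exact ⟨fun h => ⟨h.1, h.2.1⟩, fun h => ⟨h.1, h.2, hN0⟩⟩)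
  obtain ⟨m, hm, hmp⟩ := exists_exp_all hl g (by
    intro p hp hp2
    have h1 : 1 ≤ (Nell N l.1 * l.1).factorization p.1 :=
      p.2.1.factorization_pos_of_dvd (mul_ne_zero (Nell_ne_zero hl) hl.ne_zero)
        (Dvd.dvd.mul_right (Nell_dvd hN0 p.2.1 p.2.2 hp2) _)
    rw [Rd_mono p h1 (hgA p), Rd_eq_one_iff]
    exact ⟨0, by rw [hA' p (fun h => hp (by rw [h]))]; simp⟩) k Finset.univ
  obtain ⟨c, hc⟩ := Nat.exists_mul_mod_eq_one_of_coprime hm hl.one_lt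
  obtain ⟨t, ht⟩ : ∃ t, m * c = 1 + l.1 * t := ⟨m * c / l.1, by
    have := Nat.mod_add_div (m * c) l.1
    omega⟩
  refine ⟨g ^ (m * c), G.pow_mem hg _, ?_, ?_⟩
  · obtain ⟨F, hF⟩ := smul_pow_expand ((l.1 : ℤ_[l.1]) ^ e) ((l.1 : ℤ_[l.1]) ^ (e + 1))
      (B + (l.1 : ℤ_[l.1]) • E) (m * c)
      (Dvd.dvd.mul_left (by rw [← pow_mul]; exact pow_dvd_pow _ (by omega)) _)
      (by rw [← pow_mul]; exact pow_dvd_pow _ (by omega))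
    refine ⟨E + (t : ℤ_[l.1]) • (B + (l.1 : ℤ_[l.1]) • E) + F, ?_⟩
    have h1 : locComp l g = 1 + ((l.1 : ℤ_[l.1]) ^ e) • (B + (l.1 : ℤ_[l.1]) • E) := by
      rw [hE, smul_add, smul_smul, pow_succ, add_assoc]
    rw [locComp_pow, h1, hF, ht]
    push_cast
    module
  · intro p hp
    rw [pow_mul, map_pow, hmp p (Finset.mem_univ _) (fun h => hp (Subtype.ext h)), one_pow]

lemma dvd_choose_aux {p n : ℕ} (hp : p.Prime) (hn : 1 ≤ n) (h2 : p = 2 → 2 ≤ n) :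
    p ^ (n + 2) ∣ p.choose 2 * (p ^ n) ^ 2 := by
  rcases hp.eq_two_or_odd' with rfl | hodd
  · have := h2 rfl
    rw [← pow_mul]
    exact Dvd.dvd.mul_left (pow_dvd_pow _ (by omega)) _
  · have h3 : 2 < p := lt_of_le_of_ne hp.two_le (by rintro rfl; revert hodd; decide)
    obtain ⟨c, hc⟩ := hp.dvd_choose_self (k := 2) (by norm_num) h3
    rw [hc, ← pow_mul, mul_right_comm, ← pow_succ']
    exact Dvd.dvd.mul_right (pow_dvd_pow _ (by omega)) _

lemma all_steps (N : ℕ) (hN : 1 < N) (h2 : N.factorization 2 ≠ 1)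
    (G : Subgroup (GL (Fin 2) (ZN N)))
    (hcond : ∀ ℓ ∈ N.primeFactors, ∀ A : GL (Fin 2) (ZN N),
      CongrMod N (Nell N ℓ) A 1 → ∃ g ∈ G, CongrMod N (Nell N ℓ * ℓ) g A)
    (l : {q : ℕ // q.Prime ∧ q ∣ N}) (k n : ℕ) (hn : N.factorization l.1 ≤ n)
    (B : Matrix (Fin 2) (Fin 2) ℤ_[l.1]) :
    ∃ g ∈ G, (∃ E : Matrix (Fin 2) (Fin 2) ℤ_[l.1],
      locComp l g = 1 + ((l.1 : ℤ_[l.1]) ^ n) • B + ((l.1 : ℤ_[l.1]) ^ (n + 1)) • E) ∧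
      ∀ p, p ≠ l → Rd p k g = 1 := by
  induction n, hn using Nat.le_induction with
  | base => exact base_step N hN G hcond l k B
  | succ n hn ih =>
    have he := e_pos N hN l
    obtain ⟨g, hg, ⟨E, hE⟩, hgp⟩ := ih
    refine ⟨g ^ l.1, G.pow_mem hg _, ?_, fun p hp => by rw [map_pow, hgp p hp, one_pow]⟩
    have hd := dvd_choose_aux l.2.1 (he.trans hn) (by
      intro h
      rw [h] at he hn
      omega)
    have hd' : (l.1 : ℤ_[l.1]) ^ (n + 2) ∣ (l.1.choose 2 : ℤ_[l.1]) * ((l.1 : ℤ_[l.1]) ^ n) ^ 2 := by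
      have := Nat.cast_dvd_cast (α := ℤ_[l.1]) hd
      push_cast at this
      exact this
    obtain ⟨F, hF⟩ := smul_pow_expand ((l.1 : ℤ_[l.1]) ^ n) ((l.1 : ℤ_[l.1]) ^ (n + 2))
      (B + (l.1 : ℤ_[l.1]) • E) l.1 hd'
      (by rw [← pow_mul]; exact pow_dvd_pow _ (by omega))
    refine ⟨E + F, ?_⟩
    have h1 : locComp l g = 1 + ((l.1 : ℤ_[l.1]) ^ n) • (B + (l.1 : ℤ_[l.1]) • E) := by
      rw [hE, smul_add, smul_smul, pow_succ, add_assoc]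
    rw [locComp_pow, h1, hF]
    module

lemma approx_one (N : ℕ) (hN : 1 < N) (h2 : N.factorization 2 ≠ 1)
    (G : Subgroup (GL (Fin 2) (ZN N)))
    (hcond : ∀ ℓ ∈ N.primeFactors, ∀ A : GL (Fin 2) (ZN N),
      CongrMod N (Nell N ℓ) A 1 → ∃ g ∈ G, CongrMod N (Nell N ℓ * ℓ) g A)
    (l : {q : ℕ // q.Prime ∧ q ∣ N}) (k n : ℕ) (hn : N.factorization l.1 ≤ n)
    (A : GL (Fin 2) (ZN N)) (hA : Rd l (N.factorization l.1) A = 1) :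
    ∃ g ∈ G, Rd l n g = Rd l n A ∧ ∀ p, p ≠ l → Rd p k g = 1 := by
  induction n, hn using Nat.le_induction with
  | base => exact ⟨1, G.one_mem, by rw [map_one, hA], fun p _ => map_one _⟩
  | succ n hn ih =>
    obtain ⟨g, hg, hgA, hgp⟩ := ih
    have h1 : Rd l n (g⁻¹ * A) = 1 := by rw [map_mul, map_inv, hgA, inv_mul_cancel]
    obtain ⟨B, hB⟩ := (Rd_eq_one_iff l n _).1 h1
    obtain ⟨h, hh, ⟨E, hE⟩, hhp⟩ := all_steps N hN h2 G hcond l k n hn B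
    refine ⟨g * h, G.mul_mem hg hh, ?_, fun p hp => by rw [map_mul, hgp p hp, hhp p hp, one_mul]⟩
    have h3 : Rd l (n + 1) h = Rd l (n + 1) (g⁻¹ * A) := by
      rw [Rd_eq_iff]
      exact ⟨E, by rw [hE, hB]⟩
    rw [map_mul, h3, map_mul, map_inv, mul_inv_cancel_left]

lemma approx_all (N : ℕ) (hN : 1 < N) (h2 : N.factorization 2 ≠ 1)
    (G : Subgroup (GL (Fin 2) (ZN N)))
    (hcond : ∀ ℓ ∈ N.primeFactors, ∀ A : GL (Fin 2) (ZN N),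
      CongrMod N (Nell N ℓ) A 1 → ∃ g ∈ G, CongrMod N (Nell N ℓ * ℓ) g A)
    (k : ℕ) (A : GL (Fin 2) (ZN N)) (hA : CongrMod N N A 1) :
    ∃ g ∈ G, ∀ p, Rd p k g = Rd p k A := by
  classical
  have hN0 : N ≠ 0 := by omega
  have : Fintype {q : ℕ // q.Prime ∧ q ∣ N} :=
    Fintype.ofFinset N.primeFactors (fun x => by
      rw [Nat.mem_primeFactors]; exact ⟨fun h => ⟨h.1, h.2.1⟩, fun h => ⟨h.1, h.2, hN0⟩⟩)
  rw [congrMod_iff] at hA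
  have key : ∀ S : Finset {q : ℕ // q.Prime ∧ q ∣ N}, ∃ g ∈ G,
      (∀ p ∈ S, Rd p k g = Rd p k A) ∧ ∀ p ∉ S, Rd p k g = 1 := by
    intro S
    induction S using Finset.induction_on with
    | empty => exact ⟨1, G.one_mem, by simp, fun p _ => map_one _⟩
    | insert a S ha ih =>
      obtain ⟨g, hg, hgS, hgn⟩ := ih
      obtain ⟨h, hh, hha, hhn⟩ := approx_one N hN h2 G hcond a k (N.factorization a.1 + k)
        (by omega) A (by rw [hA a, map_one])
      have hha' := Rd_mono a (Nat.le_add_left k _) hha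
      refine ⟨g * h, G.mul_mem hg hh, fun p hp => ?_, fun p hp => ?_⟩
      · by_cases hpa : p = a
        · subst hpa
          rw [map_mul, hgn p ha, one_mul, hha']
        · rw [map_mul, hhn p hpa, mul_one,
            hgS p ((Finset.mem_insert.1 hp).resolve_left hpa)]
      · rw [Finset.mem_insert, not_or] at hp
        rw [map_mul, hhn p hp.1, hgn p hp.2, one_mul]
  obtain ⟨g, hg, hgS, -⟩ := key Finset.univ
  exact ⟨g, hg, fun p => hgS p (Finset.mem_univ _)⟩

lemma tendsto_of_Rd {N : ℕ} (g : ℕ → GL (Fin 2) (ZN N)) (A : GL (Fin 2) (ZN N))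
    (h : ∀ k p, Rd p k (g k) = Rd p k A) (i j : Fin 2) :
    Filter.Tendsto (fun k => (g k).1 i j) Filter.atTop (nhds (A.1 i j)) := by
  rw [tendsto_pi_nhds]
  intro p
  have hp1 : (1 : ℝ) < p.1 := by exact_mod_cast p.2.1.one_lt
  have h0 : Filter.Tendsto (fun k : ℕ => ((p.1 : ℝ)⁻¹) ^ k) Filter.atTop (nhds 0) :=
    tendsto_pow_atTop_nhds_zero_of_lt_one (by positivity) (inv_lt_one_of_one_lt₀ hp1)
  rw [tendsto_iff_norm_sub_tendsto_zero]
  refine squeeze_zero (fun _ => norm_nonneg _) (fun k => ?_) h0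
  obtain ⟨E, hE⟩ := (Rd_eq_iff p k _ _).1 (h k p)
  have h1 : (g k).1 i j p - A.1 i j p = (p.1 : ℤ_[p.1]) ^ k * E i j := by
    have := congrFun (congrFun hE i) j
    simp [locComp] at this
    rw [this]; ring
  rw [h1, norm_mul, norm_pow, PadicInt.norm_p]
  exact mul_le_of_le_one_right (by positivity) (PadicInt.norm_le_one _)

lemma mem_of_approx_s14 {N : ℕ} (G : Subgroup (GL (Fin 2) (ZN N)))
    (hclosed : IsClosed (G : Set (GL (Fin 2) (ZN N)))) (A : GL (Fin 2) (ZN N))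
    (h : ∀ k, ∃ g ∈ G, ∀ p, Rd p k g = Rd p k A) : A ∈ G := by
  choose g hg hgA using h
  refine hclosed.mem_of_tendsto (b := Filter.atTop) (f := g) ?_ (Filter.Eventually.of_forall hg)
  rw [Units.isInducing_embedProduct.tendsto_nhds_iff, Prod.tendsto_iff]
  constructor
  · refine tendsto_pi_nhds.2 fun i => tendsto_pi_nhds.2 fun j => ?_
    exact tendsto_of_Rd g A (fun k p => hgA k p) i j
  · refine (MulOpposite.continuous_op.tendsto _).comp ?_
    refine tendsto_pi_nhds.2 fun i => tendsto_pi_nhds.2 fun j => ?_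
    exact tendsto_of_Rd (fun k => (g k)⁻¹) A⁻¹ (fun k p => by
      rw [map_inv, map_inv, hgA k p]) i j

lemma isOpen_congr (N : ℕ) (hN0 : N ≠ 0) :
    {A : GL (Fin 2) (ZN N) | CongrMod N N A 1} ∈ nhds (1 : GL (Fin 2) (ZN N)) := by
  have : Finite {q : ℕ // q.Prime ∧ q ∣ N} :=
    (N.primeFactors.finite_toSet.subset (t := {q : ℕ | q.Prime ∧ q ∣ N}) (fun x hx => by
      rw [Finset.mem_coe, Nat.mem_primeFactors]; exact ⟨hx.1, hx.2, hN0⟩)).to_subtype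
  have hc : ∀ (p : {q : ℕ // q.Prime ∧ q ∣ N}) (i j : Fin 2),
      Continuous fun A : GL (Fin 2) (ZN N) => A.1 i j p := fun p i j =>
    (continuous_apply p).comp ((continuous_apply j).comp ((continuous_apply i).comp
      (Units.continuous_val (M := Matrix (Fin 2) (Fin 2) (ZN N)))))
  have hev : ∀ᶠ A : GL (Fin 2) (ZN N) in nhds 1, ∀ p i j,
      ‖A.1 i j p - (1 : GL (Fin 2) (ZN N)).1 i j p‖ < (p.1 : ℝ) ^ (-(N.factorization p.1 : ℤ)) := by
    rw [Filter.eventually_all]; intro p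
    rw [Filter.eventually_all]; intro i
    rw [Filter.eventually_all]; intro j
    have h1 : Continuous fun A : GL (Fin 2) (ZN N) =>
        ‖A.1 i j p - (1 : GL (Fin 2) (ZN N)).1 i j p‖ := ((hc p i j).sub continuous_const).norm
    have hpos : (0 : ℝ) < p.1 := by exact_mod_cast p.2.1.pos
    refine (h1.tendsto 1).eventually_lt_const ?_
    rw [sub_self, norm_zero]
    positivity
  filter_upwards [hev] with A hA
  show CongrMod N N A 1
  rw [congrMod_iff]
  intro p
  rw [Rd_eq_iff]
  have : ∀ i j, ∃ c, locComp p A i j = locComp p (1 : GL (Fin 2) (ZN N)) i j +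
      (p.1 : ℤ_[p.1]) ^ (N.factorization p.1) * c := by
    intro i j
    have h1 := (PadicInt.norm_le_pow_iff_mem_span_pow _ _).1 (hA p i j).le
    obtain ⟨c, hc⟩ := Ideal.mem_span_singleton'.1 h1
    refine ⟨c, ?_⟩
    rw [mul_comm, hc]
    simp only [locComp, Matrix.map_apply, Pi.evalRingHom_apply]
    ring
  choose E hE using this
  refine ⟨Matrix.of E, ?_⟩
  ext i j
  rw [hE i j]
  simp

/-- Let `G` be a closed subgroup of `GL₂(ℤ_N)`, where `N = ∏_p p^{e_p} > 1`
with `e₂ ≠ 1`. For each prime `ℓ ∣ N`, set `N_ℓ = ℓ^{e_ℓ} ∏_{p ∣ N, p² ≡ 1 mod ℓ} p`.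
Suppose for each prime `ℓ ∣ N` the image of `G` in `GL₂(ℤ/N_ℓℓℤ)` contains all matrices
congruent to `I` modulo `N_ℓ` (equivalently: every `A ∈ GL₂(ℤ_N)` with `A ≡ I (mod N_ℓ)` is
congruent modulo `N_ℓℓ` to an element of `G`). Then `G` is an open subgroup of `GL₂(ℤ_N)` of
level dividing `N` (in particular `G` contains every matrix congruent to `I` modulo `N`). -/
theorem openness_criterion_GL2
    (N : ℕ) (hN : 1 < N) (h2 : N.factorization 2 ≠ 1)
    (G : Subgroup (GL (Fin 2) (ZN N)))
    (hclosed : IsClosed (G : Set (GL (Fin 2) (ZN N))))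
    (hcond : ∀ ℓ ∈ N.primeFactors, ∀ A : GL (Fin 2) (ZN N),
      CongrMod N (Nell N ℓ) A 1 → ∃ g ∈ G, CongrMod N (Nell N ℓ * ℓ) g A) :
    IsOpen (G : Set (GL (Fin 2) (ZN N))) ∧
      ∀ A : GL (Fin 2) (ZN N), CongrMod N N A 1 → A ∈ G := by
  have hmem : ∀ A : GL (Fin 2) (ZN N), CongrMod N N A 1 → A ∈ G := fun A hA =>
    mem_of_approx_s14 G hclosed A fun k => approx_all N hN h2 G hcond k A hA
  refine ⟨?_, hmem⟩
  have hnh : (G : Set (GL (Fin 2) (ZN N))) ∈ nhds (1 : GL (Fin 2) (ZN N)) :=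
    Filter.mem_of_superset (isOpen_congr N (by omega)) fun A hA => hmem A hA
  exact G.isOpen_of_mem_nhds hnh
end
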